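/- For n ≥ 3, the map sending σ_i ↦ s_i, λ_i ↦ l_i, ρ_i ↦ r_i extends to a monoid isomorphism from the presented monoid S onto the partial dual inverse symmetric monoid PIP_n. -/

import Mathlib

/-!
A partition into lines and points acts on subsets of `X`: it relates `U` to `V` when `U ∪ V'` is a
union of its lines. The points play no role, so this is the same as a union of blocks of the image
under `phiRel` that avoids the block of the extra pair. A partition is determined by these pairs
(`PIP.ext_rel`), and a product acts as the composite of the relations (`PIP.rel_mul`). This gives
the monoid structure on `PIP`, and turns the defining relations into identities between partial
functions on subsets (`PIP.pipSystem`).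

Conversely, let a system of elements of a monoid satisfy the relations. The elements `σ` define a
homomorphism `π` from the symmetric group (`Coxeter.exists_hom`), and conjugates of the other
elements give point idempotents `E x` and merging elements `R x y`, `L x y` for arbitrary letters,
subject to relations that are invariant under renaming the letters
(`PipSystem.toPartitionSystem`). A product `RP ρ` of commuting factors `R x y` and `E y`
describes a choice of disjoint classes of letters with representatives, and with its mirror image
`LP ρ'` one obtains the normal forms `RP ρ * π g * LP ρ'`: the retractions `ρ` and `ρ'` are the
upper and lower traces of a partition, and `g` matches their classes. Normal forms are closed
under right multiplication by the generators (`PartitionSystem.eval_mul_π`,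
`PartitionSystem.eval_mul_L`, `PartitionSystem.eval_mul_R`), so every product of generators has one,
and its value depends only on the partition that it describes (`PartitionSystem.eval_eq_of_sem`).

In `PIP` itself a normal form acts by the partition that it describes (`PIP.rel_eval`), and every
partition is described by one; in particular the generators generate `PIP` (`PIP.closure_gens`).
Hence, for a system in another monoid `T`, the submonoid of `PIP × T` generated by the pairs of
corresponding generators projects bijectively onto `PIP` (`PIP.fst_bijective`), that is, it is the
graph of the required homomorphism, which is unique since the generators generate.
-/

/-- A subset of `X ⊕ X` (modelling `X ∪ X'`) is a *line* if it meets both halves. -/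
def IsLine {X : Type*} (A : Set (X ⊕ X)) : Prop :=
  (∃ x, Sum.inl x ∈ A) ∧ (∃ x, Sum.inr x ∈ A)

/-- `IP X`: equivalence relations on `X ∪ X'` all of whose classes are lines,
i.e. the dual inverse symmetric monoid on `X` (elements viewed as partitions). -/
def IP (X : Type*) : Type _ :=
  {r : Setoid (X ⊕ X) // ∀ x : X ⊕ X, IsLine {y | r.r x y}}

/-- Alternating chain condition through relations `r` (playing the role of `≡_a`)
and `s` (playing the role of `≡_b`): the list `c₁, c₂, …` of elements of `X`
satisfies `c₁ ≡_b c₂`, `c₂' ≡_a c₃'`, `c₃ ≡_b c₄`, … (when the flag is `true`;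
flag `false` starts with an `a`-link on the primed side). -/
def AltChain {X : Type*} (r s : (X ⊕ X) → (X ⊕ X) → Prop) :
    Bool → List X → Prop
  | _, [] => True
  | _, [_] => True
  | true, x :: y :: l => s (Sum.inl x) (Sum.inl y) ∧ AltChain r s false (y :: l)
  | false, x :: y :: l => r (Sum.inr x) (Sum.inr y) ∧ AltChain r s true (y :: l)

/-- The product relation `≡` of `a` and `b` on `X ∪ X'`, defined by the
alternating-chain conditions of the paper. -/
def prodRel {X : Type*} (r s : (X ⊕ X) → (X ⊕ X) → Prop) :
    (X ⊕ X) → (X ⊕ X) → Prop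
  | Sum.inl x, Sum.inl y =>
      r (Sum.inl x) (Sum.inl y) ∨
      ∃ (c : X) (l : List X), (c :: l).length % 2 = 0 ∧
        r (Sum.inl x) (Sum.inr c) ∧ AltChain r s true (c :: l) ∧
        r (Sum.inr ((c :: l).getLast (List.cons_ne_nil c l))) (Sum.inl y)
  | Sum.inr x, Sum.inr y =>
      s (Sum.inr x) (Sum.inr y) ∨
      ∃ (c : X) (l : List X), (c :: l).length % 2 = 0 ∧
        s (Sum.inr x) (Sum.inl c) ∧ AltChain r s false (c :: l) ∧
        s (Sum.inl ((c :: l).getLast (List.cons_ne_nil c l))) (Sum.inr y)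
  | Sum.inl x, Sum.inr y =>
      ∃ (c : X) (l : List X), (c :: l).length % 2 = 1 ∧
        r (Sum.inl x) (Sum.inr c) ∧ AltChain r s true (c :: l) ∧
        s (Sum.inl ((c :: l).getLast (List.cons_ne_nil c l))) (Sum.inr y)
  | Sum.inr x, Sum.inl y =>
      ∃ (c : X) (l : List X), (c :: l).length % 2 = 1 ∧
        r (Sum.inl y) (Sum.inr c) ∧ AltChain r s true (c :: l) ∧
        s (Sum.inl ((c :: l).getLast (List.cons_ne_nil c l))) (Sum.inr x)


/-- A subset of `X ⊕ X` is a *point* if it is a singleton. -/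
def IsPoint {X : Type*} (A : Set (X ⊕ X)) : Prop :=
  ∃ z, A = {z}

/-- `PIP X`: equivalence relations on `X ∪ X'` all of whose classes are lines
or points: the partial dual inverse symmetric monoid. -/
def PIP (X : Type*) : Type _ :=
  {r : Setoid (X ⊕ X) // ∀ x : X ⊕ X, IsLine {y | r.r x y} ∨ IsPoint {y | r.r x y}}

/-- `z` is a point of the relation `r`. -/
def IsPointOf {X : Type*} (r : (X ⊕ X) → (X ⊕ X) → Prop) (z : X ⊕ X) : Prop :=
  ∀ w, r z w → w = z

/-- Membership in the extra block of `φ a` (all points of `a` together with the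
added pair). -/
def InExtraBlock {X : Type*} (r : (X ⊕ X) → (X ⊕ X) → Prop) :
    (Option X ⊕ Option X) → Prop
  | Sum.inl none => True
  | Sum.inr none => True
  | Sum.inl (some z) => IsPointOf r (Sum.inl z)
  | Sum.inr (some z) => IsPointOf r (Sum.inr z)

/-- The relation of `φ a`, the embedding of `PIP_X` into `IP_{X∪{x}}`. -/
def phiRel {X : Type*} (r : (X ⊕ X) → (X ⊕ X) → Prop) :
    (Option X ⊕ Option X) → (Option X ⊕ Option X) → Prop :=
  fun u v =>
    (∃ z w : X ⊕ X, u = Sum.map some some z ∧ v = Sum.map some some w ∧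
        r z w ∧ ¬ IsPointOf r z) ∨
    (InExtraBlock r u ∧ InExtraBlock r v)

/-- The relation of the block bijection of a permutation `τ`; for
`τ = (i, i+1)` this is the generator `s_i` of `PIP_n`. -/
def sRel {n : ℕ} (τ : Equiv.Perm (Fin n)) :
    (Fin n ⊕ Fin n) → (Fin n ⊕ Fin n) → Prop
  | Sum.inl x, Sum.inl y => x = y
  | Sum.inr x, Sum.inr y => x = y
  | Sum.inl x, Sum.inr y => τ x = y
  | Sum.inr x, Sum.inl y => τ y = x

/-- The relation of `r_{k,l} ∈ PIP_n`: blocks `{k, l, k'}`, `{l'}` and `{t, t'}`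
for the remaining `t`. -/
def rRel {n : ℕ} (k l : Fin n) : (Fin n ⊕ Fin n) → (Fin n ⊕ Fin n) → Prop
  | Sum.inl x, Sum.inl y => x = y ∨ (x = k ∧ y = l) ∨ (x = l ∧ y = k)
  | Sum.inl x, Sum.inr y => ((x = k ∨ x = l) ∧ y = k) ∨ (x = y ∧ x ≠ k ∧ x ≠ l)
  | Sum.inr x, Sum.inl y => ((y = k ∨ y = l) ∧ x = k) ∨ (x = y ∧ y ≠ k ∧ y ≠ l)
  | Sum.inr x, Sum.inr y => x = y

/-- The relation of `l_{k,l} ∈ PIP_n`: blocks `{k, k', l'}`, `{l}` and `{t, t'}`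
for the remaining `t`. -/
def lRel {n : ℕ} (k l : Fin n) : (Fin n ⊕ Fin n) → (Fin n ⊕ Fin n) → Prop
  | Sum.inl x, Sum.inl y => x = y
  | Sum.inl x, Sum.inr y => (x = k ∧ (y = k ∨ y = l)) ∨ (x = y ∧ x ≠ k ∧ x ≠ l)
  | Sum.inr x, Sum.inl y => (y = k ∧ (x = k ∨ x = l)) ∨ (x = y ∧ y ≠ k ∧ y ≠ l)
  | Sum.inr x, Sum.inr y => x = y ∨ (x = k ∧ y = l) ∨ (x = l ∧ y = k)

/-- A system of elements of a monoid `S` satisfying the defining relations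
(1)–(17) of the presentation of the partial dual inverse symmetric monoid.
Indices are 0-based: `sg i`, `lm i`, `rh i` (for `i + 2 ≤ n`) correspond to the
paper's `σ_{i+1}`, `λ_{i+1}`, `ρ_{i+1}`, and `ee i` (for `i + 1 ≤ n`) to the
paper's `e_{i+1}`. -/
structure PipSystem (n : ℕ) (S : Type*) [Monoid S] where
  sg : ℕ → S
  lm : ℕ → S
  rh : ℕ → S
  ee : ℕ → S
  rel1 : ∀ i, i + 2 ≤ n → sg i * sg i = 1
  rel2 : ∀ i j, i + 2 ≤ n → j + 2 ≤ n → i + 1 < j → sg i * sg j = sg j * sg i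
  rel3 : ∀ i, i + 3 ≤ n → sg i * sg (i+1) * sg i = sg (i+1) * sg i * sg (i+1)
  rel4a : ∀ i j, i + 2 ≤ n → j + 2 ≤ n → i + 1 < j → lm i * lm j = lm j * lm i
  rel4b : ∀ i j, i + 2 ≤ n → j + 2 ≤ n → i + 1 < j → rh i * rh j = rh j * rh i
  rel4c : ∀ i j, i + 2 ≤ n → j + 2 ≤ n → (i + 1 < j ∨ j + 1 < i) →
    rh i * lm j = lm j * rh i
  rel5a : ∀ i, i + 3 ≤ n → lm i * rh (i+1) = sg (i+1) * rh i * lm i * ee (i+2)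
  rel5b : ∀ i, i + 3 ≤ n → lm i * rh (i+1) = sg i * rh (i+1) * sg i * lm i
  rel5c : ∀ i, i + 3 ≤ n → lm (i+1) * rh i = ee (i+2) * rh i * lm i * sg (i+1)
  rel5d : ∀ i, i + 3 ≤ n → lm (i+1) * rh i = rh i * sg i * lm (i+1) * sg i
  rel6a : ∀ i, i + 3 ≤ n → rh i * lm (i+1) = rh i * ee (i+2)
  rel6b : ∀ i, i + 3 ≤ n → rh (i+1) * lm i = ee (i+2) * lm i
  rel7a : ∀ i, i + 2 ≤ n → lm i * rh i * lm i = lm i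
  rel7b : ∀ i, i + 2 ≤ n → rh i * lm i * rh i = rh i
  rel8a : ∀ i, i + 3 ≤ n → sg i * lm (i+1) * sg i = sg (i+1) * lm i * sg (i+1)
  rel8b : ∀ i, i + 3 ≤ n → sg i * rh (i+1) * sg i = sg (i+1) * rh i * sg (i+1)
  rel9a : ∀ i, i + 2 ≤ n → lm i * sg i = lm i
  rel9b : ∀ i, i + 2 ≤ n → sg i * rh i = rh i
  rel10a : ∀ i j, i + 2 ≤ n → j + 2 ≤ n → (i + 1 < j ∨ j + 1 < i) →
    sg i * lm j = lm j * sg i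
  rel10b : ∀ i j, i + 2 ≤ n → j + 2 ≤ n → (i + 1 < j ∨ j + 1 < i) →
    sg i * rh j = rh j * sg i
  rel11a : ∀ i, i + 3 ≤ n → lm i * lm (i+1) = lm i * lm (i+1) * sg i
  rel11b : ∀ i, i + 3 ≤ n → lm i * lm (i+1) = sg (i+1) * (lm i * lm (i+1))
  rel11c : ∀ i, i + 3 ≤ n → rh (i+1) * rh i = sg i * (rh (i+1) * rh i)
  rel11d : ∀ i, i + 3 ≤ n → rh (i+1) * rh i = rh (i+1) * rh i * sg (i+1)
  rel12a : ∀ i, i + 3 ≤ n → sg (i+1) * (lm (i+1) * lm i) = lm (i+1) * lm i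
  rel12b : ∀ i, i + 3 ≤ n → lm (i+1) * lm i = lm i * ee (i+2)
  rel12c : ∀ i, i + 3 ≤ n → rh i * rh (i+1) * sg (i+1) = rh i * rh (i+1)
  rel12d : ∀ i, i + 3 ≤ n → rh i * rh (i+1) = ee (i+2) * rh i
  rel13a : ∀ i, i + 2 ≤ n → ee (i+1) = lm i * rh i
  rel13b : ee 0 = sg 0 * ee 1 * sg 0
  rel14a : ∀ i, i + 1 ≤ n → ee i * ee i = ee i
  rel14b : ∀ i, i + 2 ≤ n → ee i * ee (i+1) = ee (i+1) * ee i
  rel14c : ∀ i, i + 2 ≤ n → ee i * ee (i+1) = lm i * lm i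
  rel14d : ∀ i, i + 2 ≤ n → ee i * ee (i+1) = rh i * rh i
  rel14e : ∀ i, i + 2 ≤ n → ee i * ee (i+1) = rh i * sg i * lm i
  rel15a : ∀ i j, i + 1 ≤ n → j + 2 ≤ n → i ≠ j → i ≠ j + 1 →
    ee i * sg j = sg j * ee i
  rel15b : ∀ i, i + 2 ≤ n → ee i * sg i = sg i * ee (i+1)
  rel15c : ∀ i, i + 2 ≤ n → sg i * ee i = ee (i+1) * sg i
  rel16a : ∀ i j, i + 1 ≤ n → j + 2 ≤ n → i ≠ j → i ≠ j + 1 →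
    ee i * lm j = lm j * ee i
  rel16b : ∀ i, i + 2 ≤ n → ee (i+1) * lm i = lm i
  rel16c : ∀ i, i + 2 ≤ n → ee i * lm i = lm i * ee (i+1)
  rel16d : ∀ i, i + 2 ≤ n → ee i * lm i = lm i * ee i
  rel16e : ∀ i, i + 2 ≤ n → ee i * lm i = ee i * ee (i+1)
  rel17a : ∀ i j, i + 1 ≤ n → j + 2 ≤ n → i ≠ j → i ≠ j + 1 →
    ee i * rh j = rh j * ee i
  rel17b : ∀ i, i + 2 ≤ n → rh i * ee (i+1) = rh i
  rel17c : ∀ i, i + 2 ≤ n → rh i * ee i = ee (i+1) * rh i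
  rel17d : ∀ i, i + 2 ≤ n → rh i * ee i = ee i * rh i
  rel17e : ∀ i, i + 2 ≤ n → rh i * ee i = ee i * ee (i+1)

section

open Equiv MulOpposite

/-! ### Equivariant systems and the elements attached to retractions -/

/-- The relations satisfied by the permutations, the point idempotents `E x`
(blocks `{x}`, `{x'}`) and the merging elements `R x y` (blocks `{x, y, x'}`, `{y'}`),
in a form that is invariant under renaming the letters. -/
structure MergeSystem (X : Type*) [DecidableEq X] (S : Type*) [Monoid S] where
  π : Perm X →* S
  E : X → S
  R : X → X → S
  πE : ∀ g x, π g * E x = E (g x) * π g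
  πR : ∀ g x y, x ≠ y → π g * R x y = R (g x) (g y) * π g
  EE : ∀ x, E x * E x = E x
  EEc : ∀ x y, E x * E y = E y * E x
  EEs : ∀ x y, x ≠ y → E x * E y * π (swap x y) = E x * E y
  RE : ∀ x y, x ≠ y → R x y * E y = R x y
  RE' : ∀ x y, x ≠ y → R x y * E x = E x * E y
  ER : ∀ x y, x ≠ y → E x * R x y = E x * E y
  ER' : ∀ x y, x ≠ y → E y * R x y = E x * E y
  ERc : ∀ x y z, x ≠ y → z ≠ x → z ≠ y → E z * R x y = R x y * E z
  RR1 : ∀ x y z, x ≠ y → x ≠ z → y ≠ z → R x y * R x z = R x z * R x y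
  RR2 : ∀ x y z, x ≠ y → x ≠ z → y ≠ z → R y z * R x y = R x z * R x y
  RRd : ∀ x y z w, x ≠ y → z ≠ w → x ≠ z → x ≠ w → y ≠ z → y ≠ w →
    R x y * R z w = R z w * R x y
  Rs : ∀ x y, x ≠ y → π (swap x y) * R x y = R x y

/-- A partial retraction of `X`: a partial map, `none` meaning undefined, that fixes
every point of its image. It encodes a partial equivalence relation on `X` together with a
representative of each class. -/
structure Retraction (X : Type*) where
  toFun : X → Option X
  idem : ∀ {x y}, toFun x = some y → toFun y = some y

section NoncommProd

variable {X S : Type*} [DecidableEq X] [Monoid S]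

/-- To the left of an element `c`, each factor may be replaced by one that has the same product
with `c`, provided that `c` commutes with the new factors. -/
theorem noncommProd_mul_congr (s : Finset X) (f f' : X → S) (cf cf') (c : S)
    (h : ∀ z ∈ s, f z * c = f' z * c) (hc : ∀ z ∈ s, Commute c (f' z)) :
    s.noncommProd f cf * c = s.noncommProd f' cf' * c := by
  induction s using Finset.induction_on with
  | empty => simp
  | insert a s ha ih =>
    have hcs : (s : Set X).Pairwise (Function.onFun Commute f') :=
      cf'.mono fun z hz => by simp [Finset.mem_coe.1 hz]
    rw [Finset.noncommProd_insert_of_notMem _ _ _ _ ha,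
      Finset.noncommProd_insert_of_notMem _ _ _ _ ha, mul_assoc,
      ih (cf.mono fun z hz => by simp [Finset.mem_coe.1 hz]) hcs
        (fun z hz => h z (by simp [hz])) (fun z hz => hc z (by simp [hz]))]
    have hcc : Commute c (s.noncommProd f' hcs) :=
      Finset.noncommProd_commute _ _ _ _ fun z hz => hc z (by simp [hz])
    rw [← hcc.eq, ← mul_assoc, h a (by simp), mul_assoc, mul_assoc, hcc.eq]

/-- An element passes through a product by passing through its factors. -/
theorem noncommProd_mul_pass (s : Finset X) (f f' : X → S) (cf cf') (c : S)
    (h : ∀ z ∈ s, f z * c = c * f' z) :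
    s.noncommProd f cf * c = c * s.noncommProd f' cf' := by
  induction s using Finset.induction_on with
  | empty => simp
  | insert a s ha ih =>
    rw [Finset.noncommProd_insert_of_notMem _ _ _ _ ha,
      Finset.noncommProd_insert_of_notMem _ _ _ _ ha, mul_assoc,
      ih _ _ (fun z hz => h z (by simp [hz])), ← mul_assoc, h a (by simp), mul_assoc]

theorem noncommProd_univ_perm [Fintype X] (f f' : X → S) (cf cf') (h : Perm X)
    (hf : ∀ x, f' (h x) = f x) :
    (Finset.univ : Finset X).noncommProd f' cf' = Finset.univ.noncommProd f cf := by
  unfold Finset.noncommProd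
  have : (Finset.univ : Finset X).1.map f' = (Finset.univ : Finset X).1.map f := by
    have h1 : (Finset.univ : Finset X).1 = (Finset.univ : Finset X).1.map h := by
      have := Finset.map_univ_equiv h
      conv_lhs => rw [← this]
      rfl
    conv_lhs => rw [h1]
    rw [Multiset.map_map]
    exact Multiset.map_congr rfl fun x _ => hf x
  congr 1

end NoncommProd

namespace Retraction

variable {X : Type*} [DecidableEq X]

instance : CoeFun (Retraction X) (fun _ => X → Option X) := ⟨toFun⟩

@[ext] theorem ext {ρ ρ' : Retraction X} (h : ∀ x, ρ x = ρ' x) : ρ = ρ' := by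
  cases ρ; cases ρ'; congr; exact funext h

/-- Redefine a retraction at a point that is not the image of any other point. -/
def upd (ρ : Retraction X) (y : X) (o : Option X) (hy : ∀ z, z ≠ y → ρ z ≠ some y)
    (ho : ∀ x, o = some x → x = y ∨ ρ x = some x) : Retraction X where
  toFun := Function.update ρ y o
  idem := by
    intro a b hab
    by_cases ha : a = y
    · subst ha
      rw [Function.update_self] at hab
      by_cases hb : b = a
      · subst hb; simpa using hab
      · rw [Function.update_of_ne hb]
        exact (ho b hab).resolve_left hb
    · rw [Function.update_of_ne ha] at hab
      have hb : b ≠ y := by rintro rfl; exact hy a ha hab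
      rw [Function.update_of_ne hb]
      exact ρ.idem hab

/-- Send the whole class of the representative `Y` to `o`: either to another
representative (merging two classes), or to `none` (removing the class). -/
def merge (ρ : Retraction X) (o : Option X) (Y : X) (hY : o ≠ some Y)
    (ho : ∀ x, o = some x → ρ x = some x) : Retraction X where
  toFun z := if ρ z = some Y then o else ρ z
  idem := by
    intro a b hab
    split_ifs at hab with h
    · have := ho b hab
      rw [if_neg, this]
      rw [this]; intro h'; exact hY (hab.trans h')
    · have := ρ.idem hab
      rw [if_neg, this]
      rw [this, ← hab]; exact h

/-- Transport of a retraction along a permutation of the letters. -/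
def conj (ρ : Retraction X) (h : Perm X) : Retraction X where
  toFun z := (ρ (h⁻¹ z)).map h
  idem := by
    intro a b hab
    simp only [Option.map_eq_some_iff] at hab ⊢
    obtain ⟨c, hc, rfl⟩ := hab
    exact ⟨c, by simpa using ρ.idem hc, rfl⟩

@[simp] theorem upd_apply (ρ : Retraction X) (y : X) (o) (hy ho) (z : X) :
    ρ.upd y o hy ho z = if z = y then o else ρ z := by
  simp [upd, Function.update_apply]

@[simp] theorem merge_apply (ρ : Retraction X) (o) (Y : X) (hY ho) (z : X) :
    ρ.merge o Y hY ho z = if ρ z = some Y then o else ρ z := rfl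

theorem conj_apply (ρ : Retraction X) (h : Perm X) (z : X) :
    ρ.conj h z = (ρ (h⁻¹ z)).map h := rfl

theorem ne_of_not_rep (ρ : Retraction X) {y : X} (hy : ρ y ≠ some y) (z : X) :
    ρ z ≠ some y := fun h => hy (ρ.idem h)

end Retraction

namespace MergeSystem

variable {X S : Type*} [DecidableEq X] [Monoid S] (A : MergeSystem X S)

/-- The factor attaching the letter `y` to the class `o` and deleting `y'`: the merging
element `R x y` if `o = some x` with `x ≠ y`, the idempotent `E y` if `o = none`, and `1` if
`y` is its own representative. -/
def F (o : Option X) (y : X) : S :=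
  match o with
  | none => A.E y
  | some x => if x = y then 1 else A.R x y

@[simp] theorem F_none (y : X) : A.F none y = A.E y := rfl
@[simp] theorem F_self (y : X) : A.F (some y) y = 1 := by simp [F]
theorem F_some {x y : X} (h : x ≠ y) : A.F (some x) y = A.R x y := by simp [F, h]

theorem F_comm (ρ : Retraction X) {y z : X} (hyz : y ≠ z) :
    Commute (A.F (ρ y) y) (A.F (ρ z) z) := by
  have key : ∀ {y z : X} {x : X}, y ≠ z → ρ y = none → ρ z = some x →
      Commute (A.E y) (A.F (some x) z) := by
    intro y z x hyz hy hz
    by_cases hxz : x = z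
    · subst hxz; simp
    · rw [A.F_some hxz]
      have : y ≠ x := by rintro rfl; have := ρ.idem hz; simp [hy] at this
      exact A.ERc _ _ _ hxz this hyz
  rcases hy : ρ y with _ | a <;> rcases hz : ρ z with _ | b
  · exact A.EEc _ _
  · exact key hyz hy hz
  · exact (key hyz.symm hz hy).symm
  · by_cases hay : a = y
    · subst hay; simp
    by_cases hbz : b = z
    · subst hbz; simp
    rw [A.F_some hay, A.F_some hbz]
    have ha := ρ.idem hy
    have hb := ρ.idem hz
    have haz : a ≠ z := by rintro rfl; rw [ha] at hz; exact hbz (Option.some.inj hz).symm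
    have hby : b ≠ y := by rintro rfl; rw [hb] at hy; exact hay (Option.some.inj hy).symm
    by_cases hab : a = b
    · subst hab; exact A.RR1 _ _ _ hay haz hyz
    · exact A.RRd _ _ _ _ hay hbz hab haz hby.symm hyz

theorem F_pairwise (ρ : Retraction X) (s : Finset X) :
    (s : Set X).Pairwise (Function.onFun Commute fun z => A.F (ρ z) z) :=
  fun _ _ _ _ h => A.F_comm ρ h

variable [Fintype X]

/-- The product of all factors of a retraction; in `PIP` its blocks are the classes of `ρ`
joined with the copies of their representatives. -/
def RP (ρ : Retraction X) : S :=
  Finset.univ.noncommProd (fun z => A.F (ρ z) z) (A.F_pairwise ρ _)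

/-- The product of the factors of a retraction at all letters other than `y`. -/
def RPe (ρ : Retraction X) (y : X) : S :=
  (Finset.univ.erase y).noncommProd (fun z => A.F (ρ z) z) (A.F_pairwise ρ _)

theorem RPe_mul (ρ : Retraction X) (y : X) : RP A ρ = RPe A ρ y * A.F (ρ y) y :=
  (Finset.noncommProd_erase_mul Finset.univ (Finset.mem_univ y) (fun z => A.F (ρ z) z)
    (A.F_pairwise ρ _)).symm

theorem mul_RPe (ρ : Retraction X) (y : X) : RP A ρ = A.F (ρ y) y * RPe A ρ y :=
  (Finset.mul_noncommProd_erase Finset.univ (Finset.mem_univ y) (fun z => A.F (ρ z) z)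
    (A.F_pairwise ρ _)).symm

/-- If `y` is not the image of another letter, the factor at `y` can be split off, and replacing
it by the factor of another value `o` yields the element of the redefined retraction. -/
theorem RP_upd (ρ : Retraction X) (y : X) (hy : ∀ z, z ≠ y → ρ z ≠ some y) :
    ∃ P : S, (RP A ρ = P * A.F (ρ y) y ∧ RP A ρ = A.F (ρ y) y * P) ∧ ∀ o ho,
      RP A (ρ.upd y o hy ho) = P * A.F o y ∧ RP A (ρ.upd y o hy ho) = A.F o y * P := by
  refine ⟨RPe A ρ y, ⟨RPe_mul A ρ y, mul_RPe A ρ y⟩, fun o ho => ?_⟩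
  have hc : RPe A ρ y = RPe A (ρ.upd y o hy ho) y := by
    apply Finset.noncommProd_congr rfl
    intro z hz
    simp [Finset.ne_of_mem_erase hz]
  have hF : A.F o y = A.F (ρ.upd y o hy ho y) y := by simp
  rw [hc, hF]
  exact ⟨RPe_mul A _ y, mul_RPe A _ y⟩

/-- Multiplying by the factor of a representative merges its class into another class, or turns
it into points. -/
theorem RP_merge (ρ : Retraction X) (o : Option X) (Y : X) (hY : o ≠ some Y)
    (ho : ∀ x, o = some x → ρ x = some x) (hr : ρ Y = some Y) :
    RP A ρ * A.F o Y = RP A (ρ.merge o Y hY ho) := by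
  set ρ' := ρ.merge o Y hY ho with hρ'
  have h' : ρ' Y = o := by simp [hρ', hr]
  rw [RPe_mul A ρ Y, RPe_mul A ρ' Y, hr, F_self, mul_one, h']
  apply noncommProd_mul_congr
  · intro z hz
    have hz : z ≠ Y := Finset.ne_of_mem_erase hz
    simp only [hρ', Retraction.merge_apply]
    split_ifs with h
    · rw [h, A.F_some hz.symm]
      rcases o with _ | x
      · simp only [F_none]
        rw [A.RE' _ _ hz.symm, A.EEc]
      · have hxY : x ≠ Y := fun e => hY (by rw [e])
        have hxz : x ≠ z := by
          rintro rfl; rw [ho x rfl] at h; exact hxY (Option.some.inj h)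
        rw [A.F_some hxY, A.F_some hxz, A.RR2 _ _ _ hxY hxz hz.symm]
    · rfl
  · intro z hz
    have hz : z ≠ Y := Finset.ne_of_mem_erase hz
    have := A.F_comm ρ' hz.symm
    rwa [h'] at this

/-- An element `RP ρ` already contains the point idempotents of all letters that are not
representatives. -/
theorem RP_E (ρ : Retraction X) {y : X} (hy : ρ y ≠ some y) : RP A ρ * A.E y = RP A ρ := by
  obtain ⟨P, ⟨h1, -⟩, -⟩ := A.RP_upd ρ y (fun z _ => ρ.ne_of_not_rep hy z)
  rw [h1, mul_assoc]
  congr 1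
  rcases h : ρ y with _ | x
  · simp [A.EE]
  · have : x ≠ y := by rintro rfl; exact hy h
    rw [A.F_some this, A.RE _ _ this]

/-- Change of representative: `y` replaces `x` as the representative of its class. -/
theorem RP_swap (ρ : Retraction X) {x y : X} (hxy : x ≠ y) (h : ρ y = some x) :
    ∃ ρ' : Retraction X, (∀ z, ρ' z = if ρ z = some x then some y else ρ z) ∧
      ∀ {S : Type _} [Monoid S] (A : MergeSystem X S), RP A ρ * A.π (swap x y) = RP A ρ' := by
  have hx := ρ.idem h
  have hy : ρ y ≠ some y := by rw [h]; simpa using hxy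
  set ρ₁ := ρ.upd y (some y) (fun z _ => ρ.ne_of_not_rep hy z) (by simp) with hρ₁
  refine ⟨ρ₁.merge (some y) x (by simpa using hxy.symm) ?_, ?_, ?_⟩
  · rintro z ⟨⟩; simp [hρ₁]
  · intro z
    by_cases hz : z = y <;> simp [hρ₁, hz, h, hxy.symm]
  · intro S _ A
    have h1 : RP A ρ = RP A ρ₁ * A.R x y := by
      obtain ⟨P, ⟨h1, -⟩, h2⟩ := A.RP_upd ρ y (fun z _ => ρ.ne_of_not_rep hy z)
      rw [h1, (h2 _ _).1, h, A.F_some hxy, F_self, mul_one]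
    have h2 : A.R x y * A.π (swap x y) = A.R y x := by
      have := A.πR (swap x y) y x hxy.symm
      rw [swap_apply_left, swap_apply_right] at this
      rw [← this, swap_comm, A.Rs _ _ hxy.symm]
    rw [h1, mul_assoc, h2, ← RP_merge, A.F_some hxy.symm]
    simp [hρ₁, hxy, hx]

/-- Conjugation by a permutation renames the letters of a retraction. -/
theorem RP_conj (ρ : Retraction X) (h : Perm X) : A.π h * RP A ρ = RP A (ρ.conj h) * A.π h := by
  symm
  have := noncommProd_univ_perm (S := S) (fun z => A.F (ρ.conj h (h z)) (h z))
    (fun z => A.F (ρ.conj h z) z)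
    (by intro a _ b _ hab; exact A.F_comm (ρ.conj h) (h.injective.ne hab))
    (A.F_pairwise (ρ.conj h) _) h (fun _ => rfl)
  unfold RP
  rw [this]
  apply noncommProd_mul_pass
  intro z _
  simp only [Retraction.conj_apply, Perm.inv_def, symm_apply_apply]
  rcases hz : ρ z with _ | x
  · simp [A.πE]
  · by_cases hx : x = z
    · subst hx; simp
    · have : h x ≠ h z := h.injective.ne hx
      simp only [Option.map_some]
      rw [A.F_some hx, A.F_some this, A.πR _ _ _ hx]

/-- Permutations moving only letters that are not representatives are absorbed. -/
theorem RP_perm (ρ : Retraction X) (k : Perm X) (hk : ∀ x, ρ x = some x → k x = x) :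
    RP A ρ * A.π k = RP A ρ := by
  have hk' : ∀ x, k x ≠ x → ρ x ≠ some x := fun x h h' => h (hk x h')
  have hmem : ∀ x, (ρ (k x) ≠ some (k x)) ↔ (ρ x ≠ some x) := by
    intro x
    by_cases h : k x = x
    · rw [h]
    · exact iff_of_true (hk' _ fun h' => h (k.injective h')) (hk' _ h)
  obtain ⟨f, rfl⟩ : ∃ f : Perm {x // ρ x ≠ some x}, k = Perm.ofSubtype f :=
    ⟨_, (Perm.ofSubtype_subtypePerm (f := k) (p := fun x => ρ x ≠ some x) hmem hk').symm⟩
  clear hk hk' hmem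
  induction f using Perm.swap_induction_on with
  | one => simp
  | swap_mul f a b hab ih =>
    have hab' : (a : X) ≠ b := fun h => hab (Subtype.ext h)
    have : RP A ρ = RP A ρ * (A.E a * A.E b) := by
      rw [← mul_assoc, A.RP_E ρ a.2, A.RP_E ρ b.2]
    rw [map_mul, map_mul, ← mul_assoc, Perm.ofSubtype_swap_eq, this, mul_assoc (RP A ρ),
      A.EEs _ _ hab', ← this, ih]

/-- The action of `RP ρ` in any representation by relations on `X → Bool` in which `R` and
`E` act in the expected way. -/
theorem RP_act (Ψ : S → (X → Bool) → (X → Bool) → Prop)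
    (h1 : ∀ U V, Ψ 1 U V ↔ U = V)
    (hmul : ∀ a b U W, Ψ (a * b) U W ↔ ∃ V, Ψ a U V ∧ Ψ b V W)
    (hE : ∀ x U V, Ψ (A.E x) U V ↔ U x = false ∧ V = U)
    (hR : ∀ x y, x ≠ y → ∀ U V, Ψ (A.R x y) U V ↔
      U x = U y ∧ V = Function.update U y false)
    (ρ : Retraction X) (U V : X → Bool) :
    Ψ (RP A ρ) U V ↔ (∀ z, U z = (ρ z).elim false U) ∧
      V = fun z => if ρ z = some z then U z else false := by
  have hF : ∀ o y, o ≠ some y → ∀ U V, Ψ (A.F o y) U V ↔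
      U y = o.elim false U ∧ V = Function.update U y false := by
    intro o y hoy U V
    rcases o with _ | x
    · simp only [F_none, hE, Option.elim_none]
      refine and_congr_right fun h => ?_
      rw [← h, Function.update_eq_self]
    · have : x ≠ y := fun e => hoy (by rw [e])
      rw [A.F_some this, hR _ _ this]
      simp [eq_comm]
  have gen : ∀ (s : Finset X) (c), ∀ U V, Ψ (s.noncommProd (fun z => A.F (ρ z) z) c) U V ↔
      (∀ z ∈ s, U z = (ρ z).elim false U) ∧
      V = fun z => if z ∈ s ∧ ρ z ≠ some z then false else U z := by
    intro s
    induction s using Finset.induction_on with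
    | empty => intro c U V; simp [h1, eq_comm]
    | insert a s ha ih =>
      intro c U V
      rw [Finset.noncommProd_insert_of_notMem _ _ _ _ ha, hmul]
      simp only [ih]
      by_cases hr : ρ a = some a
      · rw [hr, F_self]
        simp only [h1, exists_eq_left', Finset.forall_mem_insert, hr, Option.elim_some, true_and]
        refine and_congr_right fun _ => ?_
        refine Eq.congr_right ?_
        funext z
        by_cases hz : z = a
        · subst hz; simp [hr]
        · simp [hz]
      · simp only [hF _ _ hr, Finset.forall_mem_insert]
        constructor
        · rintro ⟨V', ⟨ha', rfl⟩, hs, rfl⟩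
          refine ⟨⟨ha', fun z hz => ?_⟩, ?_⟩
          · have hza : z ≠ a := by rintro rfl; exact ha hz
            have := hs z hz
            rw [Function.update_of_ne hza] at this
            rw [this]
            rcases hρ : ρ z with _ | w
            · rfl
            · have : w ≠ a := by rintro rfl; exact hr (ρ.idem hρ)
              simp [this]
          · funext z
            by_cases hz : z = a
            · subst hz; simp [hr]
            · simp [hz]
        · rintro ⟨⟨ha', hs⟩, rfl⟩
          refine ⟨_, ⟨ha', rfl⟩, fun z hz => ?_, ?_⟩
          · have hza : z ≠ a := by rintro rfl; exact ha hz
            rw [Function.update_of_ne hza, hs z hz]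
            rcases hρ : ρ z with _ | w
            · rfl
            · have : w ≠ a := by rintro rfl; exact hr (ρ.idem hρ)
              simp [this]
          · funext z
            by_cases hz : z = a
            · subst hz; simp [hr]
            · simp [hz]
  rw [RP, gen]
  simp only [Finset.mem_univ, true_and, forall_const]
  refine and_congr_right fun _ => Eq.congr_right ?_
  funext z
  by_cases h : ρ z = some z <;> simp [h]

end MergeSystem

/-! ### Products of systems and changes of representatives -/

namespace MergeSystem

variable {X S T : Type*} [DecidableEq X] [Monoid S] [Monoid T]

/-- The image of a system under a homomorphism. -/
def map (f : S →* T) (A : MergeSystem X S) : MergeSystem X T where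
  π := f.comp A.π
  E x := f (A.E x)
  R x y := f (A.R x y)
  πE g x := by simpa using congrArg f (A.πE g x)
  πR g x y h := by simpa using congrArg f (A.πR g x y h)
  EE x := by simpa using congrArg f (A.EE x)
  EEc x y := by simpa using congrArg f (A.EEc x y)
  EEs x y h := by simpa using congrArg f (A.EEs x y h)
  RE x y h := by simpa using congrArg f (A.RE x y h)
  RE' x y h := by simpa using congrArg f (A.RE' x y h)
  ER x y h := by simpa using congrArg f (A.ER x y h)
  ER' x y h := by simpa using congrArg f (A.ER' x y h)
  ERc x y z h h' h'' := by simpa using congrArg f (A.ERc x y z h h' h'')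
  RR1 x y z h h' h'' := by simpa using congrArg f (A.RR1 x y z h h' h'')
  RR2 x y z h h' h'' := by simpa using congrArg f (A.RR2 x y z h h' h'')
  RRd x y z w h1 h2 h3 h4 h5 h6 := by simpa using congrArg f (A.RRd x y z w h1 h2 h3 h4 h5 h6)
  Rs x y h := by simpa using congrArg f (A.Rs x y h)

/-- The componentwise product of two systems. -/
def prod (A : MergeSystem X S) (B : MergeSystem X T) : MergeSystem X (S × T) where
  π := A.π.prod B.π
  E x := (A.E x, B.E x)
  R x y := (A.R x y, B.R x y)
  πE g x := Prod.ext (A.πE g x) (B.πE g x)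
  πR g x y h := Prod.ext (A.πR g x y h) (B.πR g x y h)
  EE x := Prod.ext (A.EE x) (B.EE x)
  EEc x y := Prod.ext (A.EEc x y) (B.EEc x y)
  EEs x y h := Prod.ext (A.EEs x y h) (B.EEs x y h)
  RE x y h := Prod.ext (A.RE x y h) (B.RE x y h)
  RE' x y h := Prod.ext (A.RE' x y h) (B.RE' x y h)
  ER x y h := Prod.ext (A.ER x y h) (B.ER x y h)
  ER' x y h := Prod.ext (A.ER' x y h) (B.ER' x y h)
  ERc x y z h h' h'' := Prod.ext (A.ERc x y z h h' h'') (B.ERc x y z h h' h'')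
  RR1 x y z h h' h'' := Prod.ext (A.RR1 x y z h h' h'') (B.RR1 x y z h h' h'')
  RR2 x y z h h' h'' := Prod.ext (A.RR2 x y z h h' h'') (B.RR2 x y z h h' h'')
  RRd x y z w h1 h2 h3 h4 h5 h6 :=
    Prod.ext (A.RRd x y z w h1 h2 h3 h4 h5 h6) (B.RRd x y z w h1 h2 h3 h4 h5 h6)
  Rs x y h := Prod.ext (A.Rs x y h) (B.Rs x y h)

/-- Homomorphisms that respect the systems respect the elements of retractions. -/
theorem map_RP [Fintype X] (f : S →* T) (A : MergeSystem X S) (B : MergeSystem X T)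
    (hE : ∀ x, f (A.E x) = B.E x) (hR : ∀ x y, f (A.R x y) = B.R x y) (ρ : Retraction X) :
    f (A.RP ρ) = B.RP ρ := by
  unfold RP
  rw [Finset.map_noncommProd]
  apply Finset.noncommProd_congr rfl
  intro z _
  rcases ρ z with _ | x
  · exact hE z
  · by_cases h : x = z
    · subst h; simp
    · simp [F, h, hR]

/-- Two retractions with the same classes: the permutation `k` carries the representatives
chosen by `ρ₁` to those chosen by `ρ`. -/
theorem RP_rerep [Fintype X] (ρ ρ₁ : Retraction X) (h0 : ∀ z, ρ z = none ↔ ρ₁ z = none)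
    (hk : ∀ z w, ρ z = ρ w ↔ ρ₁ z = ρ₁ w) :
    ∃ k : Perm X, (∀ y, ρ₁ y = some y ↔ ρ (k y) = some (k y)) ∧
      (∀ y, ρ₁ y = some y → ρ y = some (k y)) ∧
      ∀ {S : Type _} [Monoid S] (A : MergeSystem X S), A.RP ρ * A.π k = A.RP ρ₁ := by
  -- The representatives are changed one at a time, by transpositions.
  have gen : ∀ s : Finset X, (∀ y ∈ s, ρ₁ y = some y) → ∃ (k : Perm X) (ρ₂ : Retraction X),
      (∀ z, ρ z = none ↔ ρ₂ z = none) ∧ (∀ z w, ρ z = ρ w ↔ ρ₂ z = ρ₂ w) ∧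
      (∀ y ∈ s, ρ₂ y = some y) ∧ (∀ y, ρ₂ y = some y ↔ ρ (k y) = some (k y)) ∧
      (∀ y, ρ₂ y = some y → ρ y = some (k y)) ∧
      ∀ {S : Type _} [Monoid S] (A : MergeSystem X S), A.RP ρ * A.π k = A.RP ρ₂ := by
    intro s
    induction s using Finset.induction_on with
    | empty =>
      intro _
      exact ⟨1, ρ, by simp, by simp, by simp, by simp, by simp, by simp⟩
    | insert y s hy ih =>
      intro hs
      obtain ⟨k, ρ₂, h1, h2, h3, h4, h5, h6⟩ := ih fun z hz => hs z (by simp [hz])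
      by_cases hyy : ρ₂ y = some y
      · exact ⟨k, ρ₂, h1, h2, by simpa [hyy] using h3, h4, h5, h6⟩
      have hy1 : ρ₁ y = some y := hs y (by simp)
      obtain ⟨x, hx⟩ : ∃ x, ρ₂ y = some x := by
        rw [← Option.ne_none_iff_exists', Ne, ← h1, h0, hy1]; simp
      have hxy : x ≠ y := by rintro rfl; exact hyy hx
      obtain ⟨ρ₃, h7, h8⟩ := RP_swap ρ₂ hxy hx
      have hx2 := ρ₂.idem hx
      have hny : ∀ z, ρ₂ z ≠ some y := ρ₂.ne_of_not_rep hyy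
      refine ⟨k * swap x y, ρ₃, ?_, ?_, ?_, ?_, ?_, ?_⟩
      · intro z
        rw [h1, h7]
        split_ifs with h <;> simp [h]
      · intro z w
        rw [h2, h7, h7]
        split_ifs with h h' h'
        · simp [h, h']
        · simp only [h]
          exact iff_of_false (fun e => h' e.symm) (fun e => hny w e.symm)
        · simp only [h']
          exact iff_of_false h (hny z)
        · rfl
      · intro z hz
        rcases Finset.mem_insert.1 hz with rfl | hz
        · rw [h7, if_pos hx]
        · have h3' := h3 z hz
          rw [h7, if_neg]
          · exact h3'
          · intro hzx
            have : ρ₁ z = ρ₁ y := by rw [← hk, h2, hzx, hx]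
            rw [hs z (by simp [hz]), hy1] at this
            obtain rfl := Option.some.inj this
            exact hyy h3'
      · intro z
        rw [Perm.mul_apply, ← h4, h7]
        by_cases hzy : z = y
        · subst hzy; simp [hx, hx2]
        by_cases hzx : z = x
        · subst hzx; simp [hx2, hx, hxy.symm, hxy]
        rw [swap_apply_of_ne_of_ne hzx hzy]
        split_ifs with h
        · rw [h]; simp [Ne.symm hzy, Ne.symm hzx]
        · rfl
      · intro z hz
        rw [h7] at hz
        rw [Perm.mul_apply]
        split_ifs at hz with h
        · obtain rfl := Option.some.inj hz
          rw [swap_apply_right, ← h5 x hx2]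
          rw [h2, h, hx2]
        · have hzx : z ≠ x := by rintro rfl; exact h hx2
          have hzy : z ≠ y := by rintro rfl; exact hyy hz
          rw [swap_apply_of_ne_of_ne hzx hzy, h5 z hz]
      · intro S _ A
        rw [map_mul, ← mul_assoc, h6, h8]
  obtain ⟨k, ρ₂, h1, h2, h3, h4, h5, h6⟩ := gen {y | ρ₁ y = some y} (by simp)
  have : ρ₂ = ρ₁ := by
    ext1 z
    rcases h : ρ₁ z with _ | y
    · rw [← h1, h0, h]
    · have hy := ρ₁.idem h
      rw [← h3 y (by simpa using hy), ← h2, hk, h, hy]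
  subst this
  exact ⟨k, h4, h5, h6⟩

/-- The point idempotent of a representative commutes with the element of the retraction, both
products turning the class of `y` into points. -/
theorem RP_comm_E [Fintype X] (A : MergeSystem X S) (ρ : Retraction X) {y : X}
    (hy : ρ y = some y) : Commute (A.E y) (A.RP ρ) := by
  unfold RP
  apply Finset.noncommProd_commute
  intro z _
  by_cases hzy : z = y
  · subst hzy; simp [hy]
  rcases h : ρ z with _ | x
  · exact A.EEc _ _
  · by_cases hx : x = z
    · subst hx; simp
    rw [A.F_some hx]
    by_cases hxy : x = y
    · subst hxy
      exact (A.ER _ _ hx).trans (A.RE' _ _ hx).symm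
    · exact A.ERc _ _ _ hx (Ne.symm hxy) (Ne.symm hzy)

end MergeSystem

/-! ### Normal forms -/

/-- A system of permutations, point idempotents `E x`, merging elements `R x y` and their
mirror images `L x y` (blocks `{x, x', y'}`, `{y}`). The mirror images form a `MergeSystem` in
the opposite monoid. -/
structure PartitionSystem (X : Type*) [DecidableEq X] (S : Type*) [Monoid S] where
  pos : MergeSystem X S
  neg : MergeSystem X Sᵐᵒᵖ
  hπ : ∀ g, neg.π g = op (pos.π g⁻¹)
  hE : ∀ x, neg.E x = op (pos.E x)
  LR : ∀ x y, x ≠ y → unop (neg.R x y) * pos.R x y = pos.E y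
  LRd : ∀ x y z w, x ≠ y → z ≠ w → x ≠ z → x ≠ w → y ≠ z → y ≠ w →
    unop (neg.R x y) * pos.R z w = pos.R z w * unop (neg.R x y)
  LR1 : ∀ x y z, x ≠ y → x ≠ z → y ≠ z →
    unop (neg.R x z) * pos.R x y = pos.R x y * unop (neg.R x z)
  LR2 : ∀ x y z, x ≠ y → x ≠ z → y ≠ z →
    unop (neg.R y z) * pos.R x y = pos.R x y * unop (neg.R x z)

/-- Normal form data: two retractions describing the upper and the lower rows, and a
permutation that matches the representatives of the lower classes with those of the upper
ones. -/
structure NF (X : Type*) where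
  ρ : Retraction X
  g : Perm X
  ρ' : Retraction X
  cond : ∀ x, ρ' x = some x ↔ ρ (g x) = some (g x)

namespace PartitionSystem

variable {X S T : Type*} [DecidableEq X] [Monoid S] [Monoid T] (A : PartitionSystem X S)

/-- The mirror image of `R x y`. -/
def L (x y : X) : S := unop (A.neg.R x y)

theorem EL {x y : X} (h : x ≠ y) : A.pos.E y * A.L x y = A.L x y := by
  simpa [A.hE, L] using congrArg unop (A.neg.RE x y h)
theorem EL' {x y : X} (h : x ≠ y) : A.pos.E x * A.L x y = A.pos.E y * A.pos.E x := by
  simpa [A.hE, L] using congrArg unop (A.neg.RE' x y h)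

variable [Fintype X]

/-- The mirror image of `RP`. -/
def LP (ρ : Retraction X) : S := unop (A.neg.RP ρ)

theorem LP_π (ρ : Retraction X) (h : Perm X) :
    A.LP ρ * A.pos.π h = A.pos.π h * A.LP (ρ.conj h⁻¹) := by
  simpa [A.hπ, LP] using congrArg unop (A.neg.RP_conj ρ h⁻¹)

theorem LP_upd (ρ : Retraction X) (y : X) (hy : ∀ z, z ≠ y → ρ z ≠ some y) :
    ∃ P : S, A.LP ρ = P * unop (A.neg.F (ρ y) y) ∧ ∀ o ho,
      A.LP (ρ.upd y o hy ho) = P * unop (A.neg.F o y) := by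
  obtain ⟨P, ⟨-, h1⟩, h2⟩ := A.neg.RP_upd ρ y hy
  exact ⟨unop P, congrArg unop h1, fun o ho => congrArg unop (h2 o ho).2⟩

/-- The product represented by a normal form. -/
def eval (D : NF X) : S := A.pos.RP D.ρ * A.pos.π D.g * A.LP (NF.ρ' D)

/-- Normal forms are closed under right multiplication by permutations. -/
theorem eval_mul_π (D : NF X) (h : Perm X) : ∃ D', A.eval D * A.pos.π h = A.eval D' := by
  refine ⟨⟨D.ρ, D.g * h, D.ρ'.conj h⁻¹, fun x => ?_⟩, ?_⟩
  · rw [Perm.mul_apply, ← D.cond, Retraction.conj_apply, inv_inv, Option.map_eq_some_iff]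
    constructor
    · rintro ⟨a, ha, rfl⟩; simpa using ha
    · intro hx; exact ⟨_, hx, by simp⟩
  · simp only [eval]
    rw [mul_assoc, A.LP_π, map_mul]
    simp only [mul_assoc]

/-- The letter `y` can be made the representative of its class in the lower row. -/
theorem eval_rerep (D : NF X) {y : X} (hy : D.ρ' y ≠ none) : ∃ D' : NF X,
    A.eval D = A.eval D' ∧ ∀ z, D'.ρ' z = if D.ρ' z = D.ρ' y then some y else D.ρ' z := by
  obtain ⟨x, hx⟩ := Option.ne_none_iff_exists'.1 hy
  by_cases hxy : x = y
  · subst hxy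
    refine ⟨D, rfl, fun z => ?_⟩
    rw [hx]
    split_ifs with h
    · exact h
    · rfl
  have hx2 := D.ρ'.idem hx
  obtain ⟨ρ'', h1, h2⟩ := MergeSystem.RP_swap D.ρ' hxy hx
  have h3 : A.pos.π (swap x y) * A.LP D.ρ' = A.LP ρ'' := by
    simpa [A.hπ, LP] using congrArg unop (h2 A.neg)
  refine ⟨⟨D.ρ, D.g * swap x y, ρ'', fun z => ?_⟩, ?_, fun z => by rw [h1, hx]⟩
  · rw [Perm.mul_apply, ← D.cond, h1]
    by_cases hzy : z = y
    · subst hzy; simp [hx, hx2]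
    by_cases hzx : z = x
    · subst hzx; simp [hx2, hx, hxy, Ne.symm hxy]
    rw [swap_apply_of_ne_of_ne hzx hzy]
    split_ifs with h
    · rw [h]; simp [Ne.symm hzy, Ne.symm hzx]
    · rfl
  · have h4 : A.pos.π (swap x y) * A.pos.π (swap x y) = 1 := by
      rw [← map_mul, swap_mul_self, map_one]
    simp only [eval]
    rw [← h3, map_mul, mul_assoc _ _ (A.pos.π (swap x y) * _), mul_assoc (A.pos.π D.g),
      ← mul_assoc (A.pos.π (swap x y)) (A.pos.π (swap x y)), h4, one_mul, mul_assoc]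

/-- The point idempotent of a letter that is already a point of the lower row is absorbed. -/
theorem eval_mul_E_of_none (D : NF X) {y : X} (hy : D.ρ' y = none) :
    A.eval D * A.pos.E y = A.eval D := by
  obtain ⟨P, h1, -⟩ := A.LP_upd D.ρ' y (fun z _ h => by simp [D.ρ'.idem h] at hy)
  have : A.LP D.ρ' * A.pos.E y = A.LP D.ρ' := by
    rw [h1, hy, MergeSystem.F_none, A.hE, unop_op, mul_assoc, A.pos.EE]
  rw [eval, mul_assoc, this]

/-- Normal forms are closed under right multiplication by point idempotents: the block of `y` in
the lower row is turned into points. -/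
theorem eval_mul_E (D : NF X) (y : X) :
    ∃ D' : NF X, A.eval D * A.pos.E y = A.eval D' ∧ D'.ρ' y = none := by
  by_cases hy : D.ρ' y = none
  · exact ⟨D, A.eval_mul_E_of_none D hy, hy⟩
  obtain ⟨D, hD, hD'⟩ := A.eval_rerep D hy
  have hy := hD' y
  rw [if_pos rfl] at hy
  rw [hD]
  clear hD hD'
  refine ⟨⟨D.ρ.merge none (D.g y) (by simp) (by simp), D.g,
    D.ρ'.merge none y (by simp) (by simp), fun z => ?_⟩, ?_, ?_⟩
  · simp only [Retraction.merge_apply]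
    have hz := D.cond z
    have hyc := (D.cond y).1 hy
    by_cases hzy : z = y
    · subst hzy; simp [hy, hyc]
    have hgz : D.g z ≠ D.g y := D.g.injective.ne hzy
    split_ifs with h1 h2 h2
    · simp
    · refine iff_of_false (by simp) fun h => ?_
      rw [← hz, h1] at h; exact hzy (Option.some.inj h).symm
    · refine iff_of_false (fun h => ?_) (by simp)
      rw [hz, h2] at h; exact hgz (Option.some.inj h).symm
    · exact hz
  · have h1 := A.pos.RP_merge D.ρ none (D.g y) (by simp) (by simp) ((D.cond y).1 hy)
    have h2 := congrArg unop (A.neg.RP_merge D.ρ' none y (by simp) (by simp) hy)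
    have h3 : A.LP D.ρ' * A.pos.E y = A.pos.E y * A.LP D.ρ' := by
      simpa [A.hE, LP] using congrArg unop (A.neg.RP_comm_E D.ρ' hy).eq
    simp only [MergeSystem.F_none, A.hE, unop_mul, unop_op] at h1 h2
    simp only [eval]
    rw [← h1, show A.LP (D.ρ'.merge none y _ _) = _ from h2.symm, mul_assoc _ _ (A.pos.E y), h3,
      ← A.pos.EE y]
    change _ = _ * (_ * A.LP D.ρ')
    simp only [mul_assoc]
    rw [← mul_assoc (A.pos.π D.g) (A.pos.E y) (A.pos.E y * _), A.pos.πE]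
    simp only [← mul_assoc]
    simp only [mul_assoc _ (A.pos.E (D.g y)) (A.pos.E (D.g y)), A.pos.EE]
  · simp [hy]

/-- Normal forms are closed under right multiplication by `L x y`: the block of `y` in the lower
row is turned into points, and then `y` is attached to the block of `x`. -/
theorem eval_mul_L (D : NF X) {x y : X} (hxy : x ≠ y) :
    ∃ D' : NF X, A.eval D * A.L x y = A.eval D' := by
  rw [← A.EL hxy, ← mul_assoc]
  obtain ⟨D, h, hy⟩ := A.eval_mul_E D y
  rw [h]; clear h
  by_cases hx : D.ρ' x = none
  · refine ⟨D, ?_⟩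
    rw [← A.eval_mul_E_of_none D hx, mul_assoc, A.EL' hxy, ← mul_assoc,
      A.eval_mul_E_of_none D hy]
  obtain ⟨D, hD, hD'⟩ := A.eval_rerep D hx
  have hx' := hD' x
  rw [if_pos rfl] at hx'
  have hy' := hD' y
  rw [hy, if_neg (Ne.symm hx)] at hy'
  rw [hD]; clear hD hD' hx hy
  have hup : ∀ z, z ≠ y → D.ρ' z ≠ some y := fun z _ h => by simp [D.ρ'.idem h] at hy'
  obtain ⟨P, h1, h2⟩ := A.LP_upd D.ρ' y hup
  refine ⟨⟨D.ρ, D.g, D.ρ'.upd y (some x) hup (by simp [hx']), fun z => ?_⟩, ?_⟩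
  · rw [← D.cond, Retraction.upd_apply]
    split_ifs with h
    · subst h; simp [hxy, hy']
    · rfl
  · simp only [eval]
    rw [h1, h2, hy', MergeSystem.F_none, MergeSystem.F_some _ hxy, A.hE]
    simp only [mul_assoc, unop_op]
    rw [A.EL hxy]; rfl

/-- Normal forms are closed under right multiplication by `R x y`: the blocks of `x` and `y` in
the lower row are merged, and then `y` is turned into a point. -/
theorem eval_mul_R (D : NF X) {x y : X} (hxy : x ≠ y) :
    ∃ D' : NF X, A.eval D * A.pos.R x y = A.eval D' := by
  -- If one of the letters is a point of the lower row, both blocks are turned into points.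
  have dead : ∀ w, D.ρ' w = none → (A.pos.E w * A.pos.R x y = A.pos.E x * A.pos.E y) →
      ∃ D' : NF X, A.eval D * A.pos.R x y = A.eval D' := by
    intro w hw hR
    obtain ⟨D1, h1, -⟩ := A.eval_mul_E D x
    obtain ⟨D2, h2, -⟩ := A.eval_mul_E D1 y
    exact ⟨D2, by rw [← A.eval_mul_E_of_none D hw, mul_assoc, hR, ← mul_assoc, h1, h2]⟩
  by_cases hx : D.ρ' x = none
  · exact dead x hx (A.pos.ER _ _ hxy)
  by_cases hy : D.ρ' y = none
  · exact dead y hy (A.pos.ER' _ _ hxy)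
  clear dead
  -- If both letters lie in one lower block, only the letter `y` is turned into a point.
  by_cases hc : D.ρ' y = D.ρ' x
  · obtain ⟨D, hD, hD'⟩ := A.eval_rerep D hx
    have hx' := hD' x
    rw [if_pos rfl] at hx'
    have hy' := hD' y
    rw [if_pos hc] at hy'
    rw [hD]; clear hD hD' hx hy hc
    have hup : ∀ z, z ≠ y → D.ρ' z ≠ some y := fun z _ =>
      D.ρ'.ne_of_not_rep (by rw [hy']; simpa using hxy) z
    obtain ⟨P, h1, h2⟩ := A.LP_upd D.ρ' y hup
    refine ⟨⟨D.ρ, D.g, D.ρ'.upd y none hup (by simp), fun z => ?_⟩, ?_⟩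
    · rw [← D.cond, Retraction.upd_apply]
      split_ifs with h
      · subst h; simp [hxy, hy']
      · rfl
    · simp only [eval]
      rw [h1, h2, hy', MergeSystem.F_none, MergeSystem.F_some _ hxy, A.hE]
      simp only [mul_assoc, unop_op]
      rw [A.LR _ _ hxy]
  · obtain ⟨D₁, hD, hD'⟩ := A.eval_rerep D hx
    have hx' := hD' x
    rw [if_pos rfl] at hx'
    have hy' := hD' y
    rw [if_neg hc] at hy'
    have hc' : D₁.ρ' y ≠ some x := by
      rw [hy']
      intro h
      exact hc (h.trans (D.ρ'.idem h).symm)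
    rw [← hy'] at hy
    rw [hD]; clear hD hD' hx hy' hc
    obtain ⟨D, hD, hD'⟩ := A.eval_rerep D₁ hy
    have hy' := hD' y
    rw [if_pos rfl] at hy'
    have hx := hD' x
    rw [hx', if_neg (Ne.symm hc')] at hx
    rw [hD]; clear hD hD' hx' hc' hy
    have hgx := (D.cond x).1 hx
    have hgy := (D.cond y).1 hy'
    have hgxy : D.g x ≠ D.g y := D.g.injective.ne hxy
    -- The lower class of `y` joins that of `x`, and `y` itself becomes a point.
    obtain ⟨ρ'', hρ⟩ : ∃ ρ'' : Retraction X, ∀ z, ρ'' z =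
        if z = y then none else if D.ρ' z = some y then some x else D.ρ' z := by
      refine ⟨(D.ρ'.merge (some x) y (by simpa using hxy) (by rintro _ ⟨⟩; exact hx)).upd y
        none ?_ (by rintro _ ⟨⟩), fun z => by rw [Retraction.upd_apply, Retraction.merge_apply]⟩
      intro z hz
      rw [Retraction.merge_apply]
      split_ifs with h
      · simpa using hxy
      · exact h
    refine ⟨⟨D.ρ.merge (some (D.g x)) (D.g y) (by simpa using hxy)
      (by rintro _ ⟨⟩; exact hgx), D.g, ρ'', fun z => ?_⟩, ?_⟩
    · rw [hρ, Retraction.merge_apply]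
      have hz := D.cond z
      by_cases hzy : z = y
      · subst hzy; simp [hgy, hxy]
      have hgz : D.g z ≠ D.g y := D.g.injective.ne hzy
      rw [if_neg hzy]
      by_cases h1 : D.ρ' z = some y
      · have hzx : z ≠ x := by
          rintro rfl; rw [hx] at h1; exact hxy (Option.some.inj h1)
        have h2 : ¬ D.ρ (D.g z) = some (D.g z) := by
          rw [← hz, h1]; simpa using Ne.symm hzy
        simp only [h1, if_true]
        refine iff_of_false (by simpa using Ne.symm hzx) ?_
        split_ifs
        · simpa using Ne.symm hzx
        · exact h2
      · rw [if_neg h1]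
        split_ifs with h2
        · have hzx : z ≠ x := by
            rintro rfl; rw [hgx] at h2; exact hgxy (Option.some.inj h2)
          rw [hz, h2]
          refine iff_of_false (by simpa using Ne.symm hzy) (by simpa using Ne.symm hzx)
        · exact hz
    · have h1 := A.pos.RP_merge D.ρ (some (D.g x)) (D.g y) (by simpa using hxy)
        (by rintro _ ⟨⟩; exact hgx) hgy
      rw [MergeSystem.F_some _ hgxy] at h1
      have h2 : op (A.pos.R x y) * A.neg.RP D.ρ' = A.neg.RP ρ'' * op (A.pos.R x y) := by
        symm
        apply noncommProd_mul_pass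
        intro z _
        apply unop_injective
        simp only [unop_mul, unop_op]
        rw [hρ]
        by_cases hzy : z = y
        · subst hzy
          simp [hy', A.hE, A.pos.RE _ _ hxy]
        rw [if_neg hzy]
        by_cases hzx : z = x
        · subst hzx
          simp [hx, hxy]
        split_ifs with h
        · rw [h, MergeSystem.F_some _ (Ne.symm hzx), MergeSystem.F_some _ (Ne.symm hzy),
            A.LR2 _ _ _ hxy (Ne.symm hzx) (Ne.symm hzy)]
        rcases h' : D.ρ' z with _ | w
        · simp [A.hE, A.pos.ERc _ _ _ hxy hzx hzy]
        by_cases hwz : w = z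
        · subst hwz; simp
        rw [MergeSystem.F_some _ hwz]
        by_cases hwx : w = x
        · subst hwx
          rw [A.LR1 _ _ _ hxy (Ne.symm hzx) (Ne.symm hzy)]
        · have hwy : w ≠ y := by rintro rfl; exact h h'
          rw [A.LRd _ _ _ _ hwz hxy hwx hwy hzx hzy]
      have h3 : A.LP D.ρ' * A.pos.R x y = A.pos.R x y * A.LP ρ'' := congrArg unop h2
      simp only [eval]
      rw [← h1, mul_assoc, h3, ← mul_assoc, mul_assoc (A.pos.RP D.ρ), A.pos.πR _ _ _ hxy,
        ← mul_assoc]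

end PartitionSystem

/-! ### Partitions described by normal forms -/

namespace Retraction

variable {X : Type*} [DecidableEq X]

/-- A set of letters (given by its indicator function) is compatible with `ρ` if it is a union
of classes of `ρ`. -/
def Compat (ρ : Retraction X) (U : X → Bool) : Prop := ∀ z, U z = (ρ z).elim false U

theorem compat_class (ρ : Retraction X) {x : X} (hx : ρ x = some x) :
    ρ.Compat fun w => decide (ρ w = some x) := by
  intro z
  rcases h : ρ z with _ | w
  · simp [h]
  · simp [ρ.idem h, h]

theorem compat_eq_none (ρ : Retraction X) (z : X) :
    ρ z = none ↔ ∀ U, ρ.Compat U → U z = false := by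
  constructor
  · intro h U hU; rw [hU, h]; rfl
  · intro h
    by_contra hz
    obtain ⟨x, hx⟩ := Option.ne_none_iff_exists'.1 hz
    have := h _ (ρ.compat_class (ρ.idem hx))
    simp [hx] at this

theorem compat_eq (ρ : Retraction X) (z w : X) :
    ρ z = ρ w ↔ ∀ U, ρ.Compat U → U z = U w := by
  constructor
  · intro h U hU; rw [hU z, hU w, h]
  · intro h
    rcases hz : ρ z with _ | x <;> rcases hw : ρ w with _ | y
    · rfl
    · have := h _ (ρ.compat_class (ρ.idem hw))
      simp [hz, hw] at this
    · have := h _ (ρ.compat_class (ρ.idem hz))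
      simp [hz, hw] at this
    · have := h _ (ρ.compat_class (ρ.idem hz))
      simp only [hz, hw, decide_true] at this
      exact (of_decide_eq_true this.symm).symm

end Retraction

namespace NF

variable {X : Type*} [DecidableEq X] (D : NF X)

/-- The relation between subsets of `X` given by the partition that a normal form describes:
`U` and `W` are related if `U ∪ W'` is a union of blocks that are not points. -/
def sem (D : NF X) (U W : X → Bool) : Prop :=
  D.ρ.Compat U ∧ D.ρ'.Compat W ∧ ∀ x, D.ρ' x = some x → U (D.g x) = W x

theorem compat_left (U : X → Bool) : D.ρ.Compat U ↔ ∃ W, D.sem U W := by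
  refine ⟨fun h => ⟨fun z => (D.ρ' z).elim false fun x => U (D.g x), h, ?_, ?_⟩,
    fun ⟨_, h⟩ => h.1⟩
  · intro z
    rcases hz : D.ρ' z with _ | x
    · simp [hz]
    · simp [hz, D.ρ'.idem hz]
  · intro x hx; simp [hx]

theorem compat_right (W : X → Bool) : D.ρ'.Compat W ↔ ∃ U, D.sem U W := by
  refine ⟨fun h => ⟨fun z => (D.ρ z).elim false fun x => W (D.g⁻¹ x), ?_, h, ?_⟩,
    fun ⟨_, h⟩ => h.2.1⟩
  · intro z
    rcases hz : D.ρ z with _ | x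
    · simp [hz]
    · simp [hz, D.ρ.idem hz]
  · intro x hx; simp [(D.cond x).1 hx]

end NF

namespace PartitionSystem

variable {X S T : Type*} [DecidableEq X] [Monoid S] [Monoid T]

/-- The canonical homomorphism from a product of opposite monoids to the opposite of the
product. -/
def opProd (S T : Type*) [Monoid S] [Monoid T] : Sᵐᵒᵖ × Tᵐᵒᵖ →* (S × T)ᵐᵒᵖ where
  toFun p := op (unop p.1, unop p.2)
  map_one' := rfl
  map_mul' _ _ := rfl

/-- The componentwise product of two systems. -/
def prod (A : PartitionSystem X S) (B : PartitionSystem X T) : PartitionSystem X (S × T) where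
  pos := A.pos.prod B.pos
  neg := (A.neg.prod B.neg).map (opProd S T)
  hπ g := congrArg₂ (fun (p : Sᵐᵒᵖ) (q : Tᵐᵒᵖ) => op (unop p, unop q)) (A.hπ g) (B.hπ g)
  hE g := congrArg₂ (fun (p : Sᵐᵒᵖ) (q : Tᵐᵒᵖ) => op (unop p, unop q)) (A.hE g) (B.hE g)
  LR x y h := Prod.ext (A.LR x y h) (B.LR x y h)
  LRd x y z w h1 h2 h3 h4 h5 h6 :=
    Prod.ext (A.LRd x y z w h1 h2 h3 h4 h5 h6) (B.LRd x y z w h1 h2 h3 h4 h5 h6)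
  LR1 x y z h h' h'' := Prod.ext (A.LR1 x y z h h' h'') (B.LR1 x y z h h' h'')
  LR2 x y z h h' h'' := Prod.ext (A.LR2 x y z h h' h'') (B.LR2 x y z h h' h'')

variable [Fintype X]

theorem eval_prod (A : PartitionSystem X S) (B : PartitionSystem X T) (D : NF X) :
    (A.prod B).eval D = (A.eval D, B.eval D) := by
  have h1 : ∀ ρ, (A.prod B).pos.RP ρ = (A.pos.RP ρ, B.pos.RP ρ) := fun ρ => Prod.ext
    (MergeSystem.map_RP (MonoidHom.fst S T) (A.prod B).pos A.pos (fun _ => rfl)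
      (fun _ _ => rfl) ρ)
    (MergeSystem.map_RP (MonoidHom.snd S T) (A.prod B).pos B.pos (fun _ => rfl)
      (fun _ _ => rfl) ρ)
  have h2 : ∀ ρ, (A.prod B).LP ρ = (A.LP ρ, B.LP ρ) := fun ρ => Prod.ext
    (congrArg unop (MergeSystem.map_RP (MonoidHom.op (MonoidHom.fst S T)) (A.prod B).neg A.neg
      (fun _ => rfl) (fun _ _ => rfl) ρ))
    (congrArg unop (MergeSystem.map_RP (MonoidHom.op (MonoidHom.snd S T)) (A.prod B).neg B.neg
      (fun _ => rfl) (fun _ _ => rfl) ρ))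
  rw [eval, h1, h2]
  rfl

/-- A normal form is determined by the partition it describes, up to the choice of
representatives and of the values of the permutation on the remaining letters; neither choice
affects its value in a system. -/
theorem eval_eq_of_sem (A : PartitionSystem X S) (D D₁ : NF X)
    (h : ∀ U W, D.sem U W ↔ D₁.sem U W) : A.eval D = A.eval D₁ := by
  have hl : ∀ U, D.ρ.Compat U ↔ D₁.ρ.Compat U := fun U => by
    simp only [NF.compat_left, h]
  have hr : ∀ U, D.ρ'.Compat U ↔ D₁.ρ'.Compat U := fun U => by
    simp only [NF.compat_right, h]
  obtain ⟨k, k1, k2, k3⟩ := MergeSystem.RP_rerep D.ρ D₁.ρ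
    (fun z => by simp only [Retraction.compat_eq_none, hl])
    (fun z w => by simp only [Retraction.compat_eq, hl])
  obtain ⟨m, m1, m2, m3⟩ := MergeSystem.RP_rerep D.ρ' D₁.ρ'
    (fun z => by simp only [Retraction.compat_eq_none, hr])
    (fun z w => by simp only [Retraction.compat_eq, hr])
  have e1 := k3 A.pos
  have e2 : A.pos.π m⁻¹ * A.LP D.ρ' = A.LP D₁.ρ' := by
    simpa [A.hπ, LP] using congrArg unop (m3 A.neg)
  set t : Perm X := D.g⁻¹ * (k * D₁.g * m⁻¹) with ht
  have key : ∀ x, D.ρ' x = some x → t x = x := by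
    intro x hx
    obtain ⟨y, rfl⟩ := m.surjective x
    have hy1 : D₁.ρ' y = some y := (m1 y).2 hx
    have hy := m2 y hy1
    have hgy := (D₁.cond y).1 hy1
    have hrep : D.ρ (k (D₁.g y)) = some (k (D₁.g y)) := (k1 _).1 hgy
    have hgrep := (D.cond _).1 hx
    have : ∀ U, D.ρ.Compat U → U (k (D₁.g y)) = U (D.g (m y)) := by
      intro U hU
      obtain ⟨W, hW⟩ := (D.compat_left U).1 hU
      have hW1 := (h U W).1 hW
      have a1 := hW1.2.2 y hy1
      have a2 := hW.2.2 _ hx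
      have a3 := hW.2.1 y
      rw [hy] at a3
      have a4 := hU (D₁.g y)
      rw [k2 _ hgy] at a4
      simp only [Option.elim_some] at a3 a4
      rw [← a4, a1, a3, a2]
    rw [← Retraction.compat_eq, hrep, hgrep] at this
    simp only [ht, Perm.mul_apply, Perm.inv_def, symm_apply_apply]
    rw [Option.some.inj this, symm_apply_apply]
  have e3 : A.pos.π t * A.LP D.ρ' = A.LP D.ρ' := by
    have := congrArg unop (A.neg.RP_perm D.ρ' t⁻¹ fun x hx => by
      rw [Perm.inv_eq_iff_eq, key x hx])
    simpa [A.hπ, LP] using this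
  have hk : D.g * t = k * D₁.g * m⁻¹ := by simp [ht]
  calc A.eval D = A.pos.RP D.ρ * A.pos.π (D.g * t) * A.LP D.ρ' := by
        rw [map_mul, ← mul_assoc, mul_assoc _ (A.pos.π t), e3]; rfl
    _ = A.eval D₁ := by
        rw [hk, map_mul, map_mul, eval, ← e1, ← e2]
        simp only [mul_assoc]

/-- In a representation by relations on the subsets of `X` in which the generators act in the
expected way, a normal form acts by the relation it describes. -/
theorem eval_act (A : PartitionSystem X S) (Φ : S → (X → Bool) → (X → Bool) → Prop)
    (h1 : ∀ U V, Φ 1 U V ↔ U = V)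
    (hmul : ∀ a b U W, Φ (a * b) U W ↔ ∃ V, Φ a U V ∧ Φ b V W)
    (hπ : ∀ g U V, Φ (A.pos.π g) U V ↔ V = U ∘ g)
    (hE : ∀ x U V, Φ (A.pos.E x) U V ↔ U x = false ∧ V = U)
    (hR : ∀ x y, x ≠ y → ∀ U V, Φ (A.pos.R x y) U V ↔
      U x = U y ∧ V = Function.update U y false)
    (hL : ∀ x y, x ≠ y → ∀ U V, Φ (A.L x y) U V ↔
      U y = false ∧ V = Function.update U y (U x))
    (D : NF X) (U W : X → Bool) : Φ (A.eval D) U W ↔ D.sem U W := by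
  have hRP := fun U V => A.pos.RP_act Φ h1 hmul hE hR D.ρ U V
  have hLP : ∀ V W, Φ (A.LP D.ρ') V W ↔ _ :=
    fun V W => A.neg.RP_act (fun a U V => Φ (unop a) V U) (by simp [h1, eq_comm])
    (by intro a b U W; simp [hmul, and_comm])
    (by
      intro x U V
      simp only [A.hE, unop_op, hE]
      constructor <;> rintro ⟨h, rfl⟩ <;> exact ⟨h, rfl⟩)
    (by
      intro x y hxy U V
      refine (hL x y hxy V U).trans ?_
      constructor
      · rintro ⟨h, rfl⟩
        simp [hxy, ← h]
      · rintro ⟨h, rfl⟩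
        simp [hxy, h])
    D.ρ' W V
  simp only [eval, hmul, hRP, hπ, hLP, NF.sem]
  constructor
  · rintro ⟨V2, ⟨V1, ⟨hU, rfl⟩, h2⟩, hW, h3⟩
    refine ⟨hU, hW, fun x hx => ?_⟩
    have := congrFun (h2.symm.trans h3) x
    simpa [hx, (D.cond x).1 hx] using this
  · rintro ⟨hU, hW, h⟩
    refine ⟨_, ⟨_, ⟨hU, rfl⟩, rfl⟩, hW, funext fun x => ?_⟩
    have := D.cond x
    by_cases hx : D.ρ' x = some x
    · simp [hx, this.1 hx, h x hx]
    · simp [hx, this.not.1 hx]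

end PartitionSystem

/-! ### Coxeter presentation of the symmetric group -/

/-- The Coxeter relations of type `A` among the first `n - 1` members of a sequence. -/
structure Coxeter {M : Type*} [Monoid M] (n : ℕ) (s : ℕ → M) : Prop where
  sq : ∀ i, i + 2 ≤ n → s i * s i = 1
  far : ∀ i j, i + 2 ≤ n → j + 2 ≤ n → i + 1 < j → s i * s j = s j * s i
  braid : ∀ i, i + 3 ≤ n → s i * s (i+1) * s i = s (i+1) * s i * s (i+1)

/-- The descending product `s (j + d - 1) * ⋯ * s (j + 1) * s j`. -/
def descProd {M : Type*} [Monoid M] (s : ℕ → M) : ℕ → ℕ → M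
  | _, 0 => 1
  | j, d + 1 => descProd s (j + 1) d * s j

namespace Coxeter

variable {M : Type*} [Monoid M] {n : ℕ} {s : ℕ → M}

/-- A generator far below the range of indices commutes with the descending product. -/
theorem descProd_far (h : Coxeter n s) (i j d : ℕ) (hij : i + 1 < j) (hd : j + d + 1 ≤ n) :
    descProd s j d * s i = s i * descProd s j d := by
  induction d generalizing j with
  | zero => simp [descProd]
  | succ d ih =>
    rw [descProd, mul_assoc, ← h.far i j (by omega) (by omega) hij, ← mul_assoc,
      ih (j + 1) (by omega) (by omega), mul_assoc]

/-- A generator inside the range of indices passes through the descending product with its index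
lowered by one. -/
theorem descProd_near (h : Coxeter n s) (i j d : ℕ) (hij : j ≤ i) (hi : i + 1 < j + d)
    (hd : j + d + 1 ≤ n) :
    descProd s j d * s (i + 1) = s i * descProd s j d := by
  induction d generalizing j with
  | zero => omega
  | succ d ih =>
    rw [descProd]
    rcases hij.eq_or_lt with rfl | hij
    · obtain _ | d := d
      · omega
      rw [descProd, mul_assoc, mul_assoc, ← mul_assoc (s (j + 1)), ← h.braid j (by omega),
        mul_assoc, ← mul_assoc (descProd s _ _), h.descProd_far _ _ _ (by omega) (by omega)]
      simp only [mul_assoc]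
    · rw [mul_assoc, h.far j (i + 1) (by omega) (by omega) (by omega), ← mul_assoc,
        ih (j + 1) hij (by omega) (by omega), mul_assoc]

theorem perm (n : ℕ) : Coxeter n fun i => swap i (i + 1) where
  sq i _ := swap_mul_self _ _
  far i j _ _ hij := by
    refine Perm.Disjoint.commute (f := swap i (i + 1)) (g := swap j (j + 1)) fun x => ?_
    by_cases h : x = i ∨ x = i + 1
    · exact Or.inr (swap_apply_of_ne_of_ne (by omega) (by omega))
    · exact Or.inl (swap_apply_of_ne_of_ne (by omega) (by omega))
  braid i _ := by
    have h1 := swap_mul_swap_mul_swap (x := i + 2) (y := i + 1) (z := i) (by omega) (by omega)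
    have h2 := swap_mul_swap_mul_swap (x := i) (y := i + 1) (z := i + 2) (by omega) (by omega)
    rw [swap_comm (i + 1) i, swap_comm (i + 2) (i + 1)] at h1
    rw [swap_comm (i + 2) i] at h2
    exact h1.trans h2.symm

theorem descProd_perm_fix (j d x : ℕ) (hx : j + d < x) :
    descProd (fun i => swap i (i + 1)) j d x = x := by
  induction d generalizing j with
  | zero => rfl
  | succ d ih =>
    rw [descProd, Perm.mul_apply, swap_apply_of_ne_of_ne (by omega) (by omega),
      ih _ (by omega)]

theorem descProd_perm_self (j d : ℕ) :
    descProd (fun i => swap i (i + 1)) j d j = j + d := by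
  induction d generalizing j with
  | zero => rfl
  | succ d ih =>
    rw [descProd, Perm.mul_apply, swap_apply_left, ih]; omega

/-- A permutation of `{0, …, m}` factors uniquely as a permutation of `{0, …, m - 1}` followed
by a descending product; this normal form defines the map inductively. -/
theorem exists_map (h : Coxeter n s) (m : ℕ) (hm : m ≤ n) : ∃ N : Perm ℕ → M, N 1 = 1 ∧
    ∀ g : Perm ℕ, (∀ x, m ≤ x → g x = x) → ∀ i, i + 2 ≤ m →
      N (g * swap i (i + 1)) = N g * s i := by
  induction m with
  | zero => exact ⟨fun _ => 1, rfl, fun _ _ i hi => by omega⟩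
  | succ m ih =>
    obtain ⟨N, N1, hN⟩ := ih (by omega)
    set c : ℕ → Perm ℕ := fun j => descProd (fun i => swap i (i + 1)) j (m - j) with hc
    set C : ℕ → M := fun j => descProd s j (m - j) with hC
    refine ⟨fun g => N (g * (c (g⁻¹ m))⁻¹) * C (g⁻¹ m), ?_, ?_⟩
    · simp [hc, hC, descProd, N1]
    intro g hg i hi
    obtain ⟨j, hj⟩ : ∃ j, g⁻¹ m = j := ⟨_, rfl⟩
    have hgj : g j = m := by rw [← hj]; simp
    have hjm : j ≤ m := by
      by_contra hlt
      have := hg j (by omega)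
      omega
    have hfix : ∀ x, m ≤ x → (g * (c j)⁻¹) x = x := by
      intro x hx
      rw [Perm.mul_apply]
      rcases hx.eq_or_lt with rfl | hx
      · have : (c j)⁻¹ m = j := by
          rw [Perm.inv_eq_iff_eq, hc]
          simp only [descProd_perm_self]; omega
        rw [this, hgj]
      · have : (c j)⁻¹ x = x := by
          rw [Perm.inv_eq_iff_eq, hc]
          simp only
          rw [descProd_perm_fix _ _ _ (by omega)]
        rw [this, hg x (by omega)]
    have hj' : (g * swap i (i + 1))⁻¹ m = swap i (i + 1) j := by
      rw [mul_inv_rev, Perm.mul_apply, hj, swap_inv]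
    simp only [hj', hj]
    have hs := perm (m + 1)
    have hcs : ∀ k, k < m → c k = c (k + 1) * swap k (k + 1) ∧ C k = C (k + 1) * s k := by
      intro k hk
      obtain ⟨d, hd⟩ : ∃ d, m - k = d + 1 := ⟨m - k - 1, by omega⟩
      have hd' : m - (k + 1) = d := by omega
      simp only [hc, hC, hd, hd', descProd, and_self]
    by_cases h1 : i = j
    · subst h1
      obtain ⟨e1, e2⟩ := hcs i (by omega)
      rw [swap_apply_left, e1, e2, mul_inv_rev, swap_inv, mul_assoc (N _), mul_assoc (C _),
        h.sq i (by omega), mul_one, ← mul_assoc]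
    by_cases h2 : i + 1 = j
    · subst h2
      obtain ⟨e1, e2⟩ := hcs i (by omega)
      rw [swap_apply_right, e1, e2, mul_inv_rev, swap_inv, mul_assoc g,
        ← mul_assoc (swap i (i + 1)), swap_mul_self, one_mul, mul_assoc]
    rw [swap_apply_of_ne_of_ne (Ne.symm h1) (Ne.symm h2)]
    -- Otherwise the generator passes through the descending product.
    have pass : ∃ i', i' + 2 ≤ m ∧ c j * swap i (i + 1) = swap i' (i' + 1) * c j ∧
        C j * s i = s i' * C j := by
      by_cases h3 : i < j
      · exact ⟨i, by omega, hs.descProd_far i j (m - j) (by omega) (by omega),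
          h.descProd_far i j (m - j) (by omega) (by omega)⟩
      · obtain _ | i := i
        · omega
        exact ⟨i, by omega, hs.descProd_near i j (m - j) (by omega) (by omega) (by omega),
          h.descProd_near i j (m - j) (by omega) (by omega) (by omega)⟩
    obtain ⟨i', hi', e1, e2⟩ := pass
    have e3 : g * swap i (i + 1) * (c j)⁻¹ = g * (c j)⁻¹ * swap i' (i' + 1) := by
      rw [mul_inv_eq_iff_eq_mul, mul_assoc _ _ (c j), ← e1]; group
    rw [e3, hN _ hfix i' hi', mul_assoc, mul_assoc, e2]

/-- A sequence satisfying the Coxeter relations of type `A` defines a homomorphism from the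
symmetric group. -/
theorem exists_hom (h : Coxeter n s) : ∃ π : Perm (Fin n) →* M, ∀ i (hi : i + 1 < n),
    π (swap ⟨i, Nat.lt_of_succ_lt hi⟩ ⟨i + 1, hi⟩) = s i := by
  obtain ⟨N, N1, hN⟩ := h.exists_map n le_rfl
  set f : Perm (Fin n) →* Perm ℕ := Perm.extendDomainHom Fin.equivSubtype with hf
  have hfx : ∀ g x, n ≤ x → f g x = x := fun g x hx =>
    Perm.extendDomain_apply_not_subtype _ _ (by simpa using hx)
  have hfs : ∀ i (hi : i + 1 < n),
      f (swap ⟨i, Nat.lt_of_succ_lt hi⟩ ⟨i + 1, hi⟩) = swap i (i + 1) := by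
    intro i hi
    ext x
    by_cases hx : x < n
    · have : f (swap ⟨i, Nat.lt_of_succ_lt hi⟩ ⟨i + 1, hi⟩) x =
          (swap ⟨i, Nat.lt_of_succ_lt hi⟩ ⟨i + 1, hi⟩ (⟨x, hx⟩ : Fin n) : Fin n) :=
        Perm.extendDomain_apply_subtype _ Fin.equivSubtype hx
      rw [this, swap_apply_def, swap_apply_def]
      simp only [Fin.ext_iff]
      split_ifs <;> rfl
    · rw [hfx _ _ (by omega), swap_apply_of_ne_of_ne (by omega) (by omega)]
  have key : ∀ g i (hi : i + 1 < n),
      N (f (g * swap ⟨i, Nat.lt_of_succ_lt hi⟩ ⟨i + 1, hi⟩)) = N (f g) * s i := by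
    intro g i hi
    rw [map_mul, hfs, hN _ (hfx g) i (by omega)]
  have hmul : ∀ b a, N (f (a * b)) = N (f a) * N (f b) := by
    intro b
    obtain _ | n := n
    · intro a
      rw [Subsingleton.elim a 1, Subsingleton.elim b 1]; simp [N1]
    have hb : b ∈ Submonoid.closure
        (Set.range fun i : Fin n => swap i.castSucc i.succ) := by
      rw [Perm.mclosure_swap_castSucc_succ]; trivial
    induction hb using Submonoid.closure_induction_right with
    | one => intro a; simp [N1]
    | mul_right b _ x hx ih =>
      obtain ⟨i, rfl⟩ := hx
      intro a
      have e : ∀ g, N (f (g * swap i.castSucc i.succ)) = N (f g) * s i := fun g =>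
        key g i (by omega)
      rw [← mul_assoc, e, e, ih, mul_assoc]
  refine ⟨⟨⟨fun g => N (f g), by simp [N1]⟩, fun a b => hmul b a⟩, fun i hi => ?_⟩
  have := key 1 i hi
  simpa [N1] using this

end Coxeter

/-! ### From the presentation to equivariant systems -/

/-- The relations of the presentation that involve only the elements `σ`, `ρ` and `e`, together
with the homomorphism from the symmetric group that the `σ` define. -/
structure HalfSystem (n : ℕ) (S : Type*) [Monoid S] where
  π : Perm (Fin n) →* S
  sg : ℕ → S
  rh : ℕ → S
  ee : ℕ → S
  hπ : ∀ i (hi : i + 1 < n), π (swap ⟨i, Nat.lt_of_succ_lt hi⟩ ⟨i + 1, hi⟩) = sg i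
  rel4 : ∀ i j, i + 2 ≤ n → j + 2 ≤ n → i + 1 < j → rh i * rh j = rh j * rh i
  rel8 : ∀ i, i + 3 ≤ n → sg i * rh (i+1) * sg i = sg (i+1) * rh i * sg (i+1)
  rel9 : ∀ i, i + 2 ≤ n → sg i * rh i = rh i
  rel10 : ∀ i j, i + 2 ≤ n → j + 2 ≤ n → (i + 1 < j ∨ j + 1 < i) →
    sg i * rh j = rh j * sg i
  rel11c : ∀ i, i + 3 ≤ n → rh (i+1) * rh i = sg i * (rh (i+1) * rh i)
  rel11d : ∀ i, i + 3 ≤ n → rh (i+1) * rh i = rh (i+1) * rh i * sg (i+1)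
  rel14a : ∀ i, i + 1 ≤ n → ee i * ee i = ee i
  rel14b : ∀ i, i + 2 ≤ n → ee i * ee (i+1) = ee (i+1) * ee i
  rel14d : ∀ i, i + 2 ≤ n → ee i * ee (i+1) = rh i * rh i
  rel15a : ∀ i j, i + 1 ≤ n → j + 2 ≤ n → i ≠ j → i ≠ j + 1 →
    ee i * sg j = sg j * ee i
  rel15b : ∀ i, i + 2 ≤ n → ee i * sg i = sg i * ee (i+1)
  rel15c : ∀ i, i + 2 ≤ n → sg i * ee i = ee (i+1) * sg i
  rel17a : ∀ i j, i + 1 ≤ n → j + 2 ≤ n → i ≠ j → i ≠ j + 1 →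
    ee i * rh j = rh j * ee i
  rel17b : ∀ i, i + 2 ≤ n → rh i * ee (i+1) = rh i
  rel17c : ∀ i, i + 2 ≤ n → rh i * ee i = ee (i+1) * rh i
  rel17d : ∀ i, i + 2 ≤ n → rh i * ee i = ee i * rh i
  rel17e : ∀ i, i + 2 ≤ n → rh i * ee i = ee i * ee (i+1)

/-- Injective assignments on the first letters extend to permutations. -/
theorem exists_perm_extending {n k : ℕ} (hk : k ≤ n) (f : Fin k → Fin n)
    (hf : Function.Injective f) : ∃ g : Perm (Fin n), ∀ i, g (Fin.castLE hk i) = f i := by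
  have := Equiv.Perm.isMultiplyPretransitive (Fin n) k
  obtain ⟨g, hg⟩ := this.exists_smul_eq (Fin.castLEEmb hk) ⟨f, hf⟩
  exact ⟨g, fun i => DFunLike.congr_fun hg i⟩

/-- Every permutation is a product of adjacent transpositions. -/
theorem perm_induction {n : ℕ} {p : Perm (Fin n) → Prop} (one : p 1)
    (mul : ∀ g i (hi : i + 1 < n), p g →
      p (g * swap ⟨i, Nat.lt_of_succ_lt hi⟩ ⟨i + 1, hi⟩)) (g) : p g := by
  obtain _ | n := n
  · rwa [Subsingleton.elim g 1]
  have hg : g ∈ Submonoid.closure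
      (Set.range fun i : Fin n => swap i.castSucc i.succ) := by
    rw [Perm.mclosure_swap_castSucc_succ]; trivial
  induction hg using Submonoid.closure_induction_right with
  | one => exact one
  | mul_right b _ x hx ih =>
    obtain ⟨i, rfl⟩ := hx
    exact mul b i (by omega) ih

namespace HalfSystem

variable {n : ℕ} {S : Type*} [Monoid S] (H : HalfSystem n S)

theorem π_ee (g : Perm (Fin n)) (x : Fin n) : H.π g * H.ee x = H.ee (g x) * H.π g := by
  induction g using perm_induction generalizing x with
  | one => simp
  | mul g i hi ih =>
    rw [map_mul, H.hπ, Perm.mul_apply]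
    have : H.sg i * H.ee x =
        H.ee (swap (⟨i, Nat.lt_of_succ_lt hi⟩ : Fin n) ⟨i + 1, hi⟩ x : Fin n) * H.sg i := by
      obtain ⟨x, hx⟩ := x
      by_cases h1 : x = i
      · subst h1
        rw [swap_apply_left]; exact H.rel15c x (by omega)
      by_cases h2 : x = i + 1
      · subst h2
        rw [swap_apply_right]; exact (H.rel15b i (by omega)).symm
      rw [swap_apply_of_ne_of_ne (by simpa [Fin.ext_iff] using h1)
        (by simpa [Fin.ext_iff] using h2)]
      exact (H.rel15a x i (by omega) (by omega) h1 h2).symm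
    rw [mul_assoc, this, ← mul_assoc, ih, mul_assoc]

/-- Transpositions of letters beyond the first two commute with the first merging element. -/
theorem π_swap_rh (a d : ℕ) (ha : 2 ≤ a) (hd : a + d + 1 < n) :
    Commute (H.π (swap ⟨a, by omega⟩ ⟨a + d + 1, hd⟩)) (H.rh 0) := by
  induction d with
  | zero =>
    rw [show (⟨a + 0 + 1, hd⟩ : Fin n) = ⟨a + 1, hd⟩ from rfl, H.hπ]
    exact H.rel10 a 0 (by omega) (by omega) (by omega)
  | succ d ih =>
    have h1 := ih (by omega)
    have h2 : Commute (H.sg (a + d + 1)) (H.rh 0) :=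
      H.rel10 (a + d + 1) 0 (by omega) (by omega) (by omega)
    rw [← H.hπ _ (by omega)] at h2
    have h3 := swap_mul_swap_mul_swap (x := (⟨a, by omega⟩ : Fin n))
      (y := ⟨a + d + 1, by omega⟩) (z := ⟨a + d + 1 + 1, by omega⟩)
      (by simp [Fin.ext_iff]; omega) (by simp [Fin.ext_iff]; omega)
    rw [swap_comm, show (⟨a + (d + 1) + 1, hd⟩ : Fin n) = ⟨a + d + 1 + 1, hd⟩ from rfl, ← h3,
      map_mul, map_mul]
    exact (h2.mul_left h1).mul_left h2

/-- Permutations fixing the first two letters commute with the first merging element. -/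
theorem π_rh (hn : 3 ≤ n) (g : Perm (Fin n)) (h0 : g ⟨0, by omega⟩ = ⟨0, by omega⟩)
    (h1 : g ⟨1, by omega⟩ = ⟨1, by omega⟩) : Commute (H.π g) (H.rh 0) := by
  have hmem : ∀ x, (2 ≤ (g x).val) ↔ (2 ≤ x.val) := by
    have h0' : ∀ x, (g x).val = 0 ↔ x.val = 0 := fun x => by
      rw [show (0 : ℕ) = ((⟨0, by omega⟩ : Fin n) : ℕ) from rfl, ← Fin.ext_iff, ← Fin.ext_iff]
      conv_lhs => rw [← h0]
      exact g.injective.eq_iff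
    have h1' : ∀ x, (g x).val = 1 ↔ x.val = 1 := fun x => by
      rw [show (1 : ℕ) = ((⟨1, by omega⟩ : Fin n) : ℕ) from rfl, ← Fin.ext_iff, ← Fin.ext_iff]
      conv_lhs => rw [← h1]
      exact g.injective.eq_iff
    intro x
    have := h0' x
    have := h1' x
    omega
  have hsub : ∀ x, g x ≠ x → 2 ≤ x.val := by
    intro x hx
    by_contra hlt
    have : x = ⟨0, by omega⟩ ∨ x = ⟨1, by omega⟩ := by
      simp only [Fin.ext_iff]; omega
    rcases this with h | h
    · rw [h] at hx; exact hx h0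
    · rw [h] at hx; exact hx h1
  obtain ⟨f, rfl⟩ : ∃ f : Perm {x : Fin n // 2 ≤ x.val}, g = Perm.ofSubtype f :=
    ⟨_, (Perm.ofSubtype_subtypePerm (f := g) (p := fun x => 2 ≤ x.val) hmem hsub).symm⟩
  clear h0 h1 hmem hsub
  induction f using Perm.swap_induction_on with
  | one => simp
  | swap_mul f a b hab ih =>
    rw [map_mul, map_mul, Perm.ofSubtype_swap_eq]
    refine Commute.mul_left ?_ ih
    have key : ∀ a b : Fin n, 2 ≤ a.val → a < b → Commute (H.π (swap a b)) (H.rh 0) := by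
      rintro ⟨a, ha⟩ ⟨b, hb⟩ h2 hab
      obtain ⟨d, rfl⟩ : ∃ d, b = a + d + 1 := ⟨b - a - 1, by simp at hab; omega⟩
      exact H.π_swap_rh a d h2 hb
    rcases lt_trichotomy (a : Fin n) b with h | h | h
    · exact key _ _ a.2 h
    · exact absurd (Subtype.ext h) hab
    · rw [swap_comm]; exact key _ _ b.2 h

/-- Conjugation by (the image of) a permutation. -/
def cj (g : Perm (Fin n)) : S →* S where
  toFun s := H.π g * s * H.π g⁻¹
  map_one' := by rw [mul_one, ← map_mul]; simp
  map_mul' a b := by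
    have : H.π g⁻¹ * H.π g = 1 := by rw [← map_mul]; simp
    simp only [mul_assoc]
    rw [← mul_assoc (H.π g⁻¹) (H.π g), this, one_mul]

theorem cj_apply (g : Perm (Fin n)) (s : S) : H.cj g s = H.π g * s * H.π g⁻¹ := rfl

theorem cj_mul (g h : Perm (Fin n)) (s : S) : H.cj (g * h) s = H.cj g (H.cj h s) := by
  simp only [cj_apply, map_mul H.π, mul_inv_rev, mul_assoc]

theorem cj_eq (g : Perm (Fin n)) (s t : S) : H.cj g s = t ↔ H.π g * s = t * H.π g := by
  have h1 : H.π g⁻¹ * H.π g = 1 := by rw [← map_mul]; simp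
  have h2 : H.π g * H.π g⁻¹ = 1 := by rw [← map_mul]; simp
  rw [cj_apply]
  constructor
  · rintro rfl; rw [mul_assoc _ _ (H.π g), h1, mul_one]
  · intro h; rw [h, mul_assoc, h2, mul_one]

theorem cj_ee (g : Perm (Fin n)) (x : Fin n) : H.cj g (H.ee x) = H.ee (g x) :=
  (H.cj_eq _ _ _).2 (H.π_ee g x)

theorem cj_π (g h : Perm (Fin n)) : H.cj g (H.π h) = H.π (g * h * g⁻¹) := by
  simp [cj_apply, map_mul]

open Classical in
/-- The merging element of two distinct letters (and `1` if the letters coincide), obtained from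
the one of the first two letters by conjugation. -/
noncomputable def R (hn : 3 ≤ n) (x y : Fin n) : S :=
  if h : ∃ g : Perm (Fin n), g ⟨0, by omega⟩ = x ∧ g ⟨1, by omega⟩ = y
  then H.cj h.choose (H.rh 0) else 1

variable (hn : 3 ≤ n)

/-- The merging element does not depend on the permutation used to define it. -/
theorem R_eq (g : Perm (Fin n)) :
    H.R hn (g ⟨0, by omega⟩) (g ⟨1, by omega⟩) = H.cj g (H.rh 0) := by
  have h : ∃ g' : Perm (Fin n), g' ⟨0, by omega⟩ = g ⟨0, by omega⟩ ∧
    g' ⟨1, by omega⟩ = g ⟨1, by omega⟩ := ⟨g, rfl, rfl⟩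
  rw [R, dif_pos h]
  have hs := h.choose_spec
  set c := h.choose
  have : c = g * (g⁻¹ * c) := by simp
  rw [this, cj_mul]
  congr 1
  rw [cj_eq]
  refine (H.π_rh hn _ ?_ ?_).eq
  · rw [Perm.mul_apply, hs.1]; simp
  · rw [Perm.mul_apply, hs.2]; simp

theorem cj_R (g : Perm (Fin n)) (x y : Fin n) : H.cj g (H.R hn x y) = H.R hn (g x) (g y) := by
  by_cases hxy : x = y
  · subst hxy
    have : ∀ z, H.R hn z z = 1 := by
      intro z
      rw [R, dif_neg]
      rintro ⟨c, hc, rfl⟩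
      simpa using c.injective hc
    rw [this, this, map_one]
  · obtain ⟨c, hc⟩ := exists_perm_extending (show 2 ≤ n by omega) ![x, y] (by
      intro i j hij
      fin_cases i <;> fin_cases j <;> simp_all [eq_comm])
    have h0 : c ⟨0, by omega⟩ = x := hc 0
    have h1 : c ⟨1, by omega⟩ = y := hc 1
    rw [← h0, ← h1, H.R_eq, ← cj_mul, ← Perm.mul_apply, ← Perm.mul_apply, H.R_eq]

/-- The given elements `ρ` are the merging elements of adjacent letters. -/
theorem rh_eq (i : ℕ) (hi : i + 1 < n) :
    H.rh i = H.R hn ⟨i, by omega⟩ ⟨i + 1, hi⟩ := by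
  induction i with
  | zero =>
    have := H.R_eq hn 1
    simp only [Perm.one_apply] at this
    exact (this.trans (by simp [cj_apply])).symm
  | succ i ih =>
    have hsq : ∀ j (hj : j + 1 < n), H.sg j * H.sg j = 1 := fun j hj => by
      rw [← H.hπ j hj, ← map_mul, swap_mul_self, map_one]
    have h8 := H.rel8 i (by omega)
    have e1 : H.rh (i + 1) = H.sg i * (H.sg (i + 1) * H.rh i * H.sg (i + 1)) * H.sg i := by
      rw [← h8]
      simp only [mul_assoc, hsq i (by omega), mul_one]
      rw [← mul_assoc, hsq i (by omega), one_mul]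
    have e2 : ∀ s j (hj : j + 1 < n), H.sg j * s * H.sg j =
        H.cj (swap ⟨j, by omega⟩ ⟨j + 1, hj⟩) s := fun s j hj => by
      rw [cj_apply, swap_inv, H.hπ]
    rw [e1, e2 _ _ (by omega), e2 _ _ (by omega), ih (by omega), cj_R, cj_R]
    have f1 : swap (⟨i + 1, by omega⟩ : Fin n) ⟨i + 1 + 1, hi⟩ ⟨i, by omega⟩ = ⟨i, by omega⟩ :=
      swap_apply_of_ne_of_ne (by simp [Fin.ext_iff]) (by simp [Fin.ext_iff]; omega)
    have f2 : swap (⟨i, by omega⟩ : Fin n) ⟨i + 1, by omega⟩ ⟨i + 1 + 1, hi⟩ =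
        ⟨i + 1 + 1, hi⟩ :=
      swap_apply_of_ne_of_ne (by simp [Fin.ext_iff]; omega) (by simp [Fin.ext_iff])
    rw [f1, swap_apply_left, swap_apply_left, f2]

theorem cj_swap (g : Perm (Fin n)) (x y : Fin n) :
    H.cj g (H.π (swap x y)) = H.π (swap (g x) (g y)) := by
  rw [cj_π, swap_apply_apply]

theorem sg_mul_sg (j : ℕ) (hj : j + 1 < n) : H.sg j * H.sg j = 1 := by
  rw [← H.hπ j hj, ← map_mul, swap_mul_self, map_one]

/-- Two distinct letters can be moved to the first two letters. -/
theorem move₂ {x y : Fin n} (hxy : x ≠ y) : ∃ g : Perm (Fin n),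
    H.cj g (H.sg 0) = H.π (swap x y) ∧ H.cj g (H.rh 0) = H.R hn x y ∧
    H.cj g (H.ee 0) = H.ee x ∧ H.cj g (H.ee 1) = H.ee y := by
  obtain ⟨g, hg⟩ := exists_perm_extending (show 2 ≤ n by omega) ![x, y] (by
    intro i j hij
    fin_cases i <;> fin_cases j <;> simp_all [eq_comm])
  have h0 : g ⟨0, by omega⟩ = x := hg 0
  have h1 : g ⟨1, by omega⟩ = y := hg 1
  have e0 := H.cj_ee g ⟨0, by omega⟩
  have e1 := H.cj_ee g ⟨1, by omega⟩
  rw [h0] at e0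
  rw [h1] at e1
  refine ⟨g, ?_, ?_, e0, e1⟩
  · rw [← H.hπ 0 (by omega), cj_swap]
    exact congrArg₂ (fun a b => H.π (swap a b)) h0 h1
  · rw [← R_eq, h0, h1]

/-- Three distinct letters can be moved to the first three letters. -/
theorem move₃ {x y z : Fin n} (hxy : x ≠ y) (hxz : x ≠ z) (hyz : y ≠ z) :
    ∃ g : Perm (Fin n),
      H.cj g (H.rh 0) = H.R hn x y ∧ H.cj g (H.rh 1) = H.R hn y z ∧
      H.cj g (H.sg 1 * H.rh 0 * H.sg 1) = H.R hn x z ∧ H.cj g (H.ee 2) = H.ee z := by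
  obtain ⟨g, hg⟩ := exists_perm_extending hn ![x, y, z] (by
    intro i j hij
    fin_cases i <;> fin_cases j <;> simp_all [eq_comm])
  have h0 : g ⟨0, by omega⟩ = x := hg 0
  have h1 : g ⟨1, by omega⟩ = y := hg 1
  have h2 : g ⟨2, by omega⟩ = z := hg 2
  have e2 := H.cj_ee g ⟨2, by omega⟩
  rw [h2] at e2
  refine ⟨g, ?_, ?_, ?_, e2⟩
  · rw [← R_eq, h0, h1]
  · rw [H.rh_eq hn 1 (by omega), cj_R]
    exact congrArg₂ (H.R hn) h1 h2
  · have : H.sg 1 * H.rh 0 * H.sg 1 = H.cj (swap ⟨1, by omega⟩ ⟨2, by omega⟩) (H.rh 0) := by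
      rw [cj_apply, swap_inv, ← H.hπ 1 (by omega)]
    rw [this, ← R_eq, cj_R, swap_apply_left,
      swap_apply_of_ne_of_ne (by simp [Fin.ext_iff]) (by simp [Fin.ext_iff]), h0, h2]

/-- Four distinct letters can be moved to the first four letters. -/
theorem move₄ {x y z w : Fin n} (hxy : x ≠ y) (hzw : z ≠ w) (hxz : x ≠ z) (hxw : x ≠ w)
    (hyz : y ≠ z) (hyw : y ≠ w) : 4 ≤ n ∧ ∃ g : Perm (Fin n),
      H.cj g (H.rh 0) = H.R hn x y ∧ H.cj g (H.rh 2) = H.R hn z w := by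
  have hinj : Function.Injective ![x, y, z, w] := by
    intro i j hij
    fin_cases i <;> fin_cases j <;> simp_all [eq_comm]
  have h4 : 4 ≤ n := by simpa using Fintype.card_le_of_injective _ hinj
  obtain ⟨g, hg⟩ := exists_perm_extending h4 _ hinj
  have h0 : g ⟨0, by omega⟩ = x := hg 0
  have h1 : g ⟨1, by omega⟩ = y := hg 1
  have h2 : g ⟨2, by omega⟩ = z := hg 2
  have h3 : g ⟨3, by omega⟩ = w := hg 3
  refine ⟨h4, g, ?_, ?_⟩
  · rw [← R_eq, h0, h1]
  · rw [H.rh_eq hn 2 (by omega), cj_R]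
    exact congrArg₂ (H.R hn) h2 h3

theorem ee_ee_sg (hn : 3 ≤ n) : H.ee 0 * H.ee 1 * H.sg 0 = H.ee 0 * H.ee 1 := by
  calc H.ee 0 * H.ee 1 * H.sg 0 = H.ee 0 * (H.sg 0 * H.ee 0) := by
        rw [H.rel15c 0 (by omega), mul_assoc]
    _ = H.sg 0 * (H.ee 0 * H.ee 1) := by
        rw [← mul_assoc, H.rel15b 0 (by omega), H.rel14b 0 (by omega), mul_assoc]
    _ = H.ee 0 * H.ee 1 := by
        rw [H.rel14d 0 (by omega), ← mul_assoc, H.rel9 0 (by omega)]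

theorem rh_rh (hn : 3 ≤ n) : H.rh 1 * H.rh 0 = H.sg 1 * H.rh 0 * H.sg 1 * H.rh 0 := by
  have h8 := H.rel8 0 (by omega)
  have h9 := H.rel9 0 (by omega)
  rw [← h8, mul_assoc _ (H.sg 0), h9, mul_assoc]
  exact H.rel11c 0 (by omega)

theorem rh_rh_comm (hn : 3 ≤ n) : H.rh 0 * (H.sg 1 * H.rh 0 * H.sg 1) =
    H.sg 1 * H.rh 0 * H.sg 1 * H.rh 0 := by
  have h : H.rh 1 * H.rh 0 = H.rh 0 * H.sg 1 * H.rh 0 := by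
    calc H.rh 1 * H.rh 0 = H.sg 1 * (H.rh 1 * H.rh 0) := by
          rw [← mul_assoc, H.rel9 1 (by omega)]
      _ = H.sg 1 * H.sg 1 * (H.rh 0 * H.sg 1 * H.rh 0) := by
          rw [H.rh_rh hn]; simp only [mul_assoc]
      _ = _ := by rw [H.sg_mul_sg 1 (by omega), one_mul]
  rw [← H.rh_rh hn]
  refine Eq.trans ?_ (H.rel11d 0 (by omega)).symm
  rw [h]; simp only [mul_assoc, zero_add]

/-- The half of the presentation is an equivariant system of merging elements: each identity
is read off from defining relations among the first letters and carried to arbitrary letters by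
conjugation. -/
noncomputable def toMergeSystem : MergeSystem (Fin n) S where
  π := H.π
  E x := H.ee x
  R := H.R hn
  πE := H.π_ee
  πR g x y _ := (H.cj_eq _ _ _).1 (H.cj_R hn g x y)
  EE x := H.rel14a x (by omega)
  EEc x y := by
    by_cases h : x = y
    · rw [h]
    obtain ⟨g, -, -, e0, e1⟩ := H.move₂ hn h
    simpa [e0, e1] using congrArg (H.cj g) (H.rel14b 0 (by omega))
  EEs x y h := by
    obtain ⟨g, s, -, e0, e1⟩ := H.move₂ hn h
    simpa [s, e0, e1] using congrArg (H.cj g) (H.ee_ee_sg hn)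
  RE x y h := by
    obtain ⟨g, -, r, e0, e1⟩ := H.move₂ hn h
    simpa [r, e0, e1] using congrArg (H.cj g) (H.rel17b 0 (by omega))
  RE' x y h := by
    obtain ⟨g, -, r, e0, e1⟩ := H.move₂ hn h
    simpa [r, e0, e1] using congrArg (H.cj g) (H.rel17e 0 (by omega))
  ER x y h := by
    obtain ⟨g, -, r, e0, e1⟩ := H.move₂ hn h
    simpa [r, e0, e1] using congrArg (H.cj g)
      ((H.rel17d 0 (by omega)).symm.trans (H.rel17e 0 (by omega)))
  ER' x y h := by
    obtain ⟨g, -, r, e0, e1⟩ := H.move₂ hn h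
    simpa [r, e0, e1] using congrArg (H.cj g)
      ((H.rel17c 0 (by omega)).symm.trans (H.rel17e 0 (by omega)))
  ERc x y z hxy hzx hzy := by
    obtain ⟨g, r, -, -, e⟩ := H.move₃ hn hxy hzx.symm hzy.symm
    simpa [r, e] using congrArg (H.cj g)
      (H.rel17a 2 0 (by omega) (by omega) (by omega) (by omega))
  RR1 x y z hxy hxz hyz := by
    obtain ⟨g, r, -, r', -⟩ := H.move₃ hn hxy hxz hyz
    rw [← r, ← r', ← map_mul, ← map_mul, H.rh_rh_comm hn]
  RR2 x y z hxy hxz hyz := by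
    obtain ⟨g, r, r1, r', -⟩ := H.move₃ hn hxy hxz hyz
    rw [← r, ← r1, ← r', ← map_mul, ← map_mul, H.rh_rh hn]
  RRd x y z w hxy hzw hxz hxw hyz hyw := by
    obtain ⟨h4, g, r, r'⟩ := H.move₄ hn hxy hzw hxz hxw hyz hyw
    rw [← r, ← r', ← map_mul, ← map_mul, H.rel4 0 2 (by omega) (by omega) (by omega)]
  Rs x y h := by
    obtain ⟨g, s, r, -, -⟩ := H.move₂ hn h
    rw [← r, ← s, ← map_mul, H.rel9 0 (by omega)]

end HalfSystem

/-! ### The system attached to a presentation -/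

namespace PipSystem

variable {n : ℕ} {S : Type*} [Monoid S] (Q : PipSystem n S)

theorem exists_hom : ∃ π : Perm (Fin n) →* S, ∀ i (hi : i + 1 < n),
    π (swap ⟨i, Nat.lt_of_succ_lt hi⟩ ⟨i + 1, hi⟩) = Q.sg i :=
  Coxeter.exists_hom
    { sq := fun i hi => Q.rel1 i (by omega)
      far := fun i j hi hj => Q.rel2 i j (by omega) (by omega)
      braid := fun i hi => Q.rel3 i (by omega) }

/-- The homomorphism from the symmetric group determined by the elements `σ`. -/
noncomputable def perm : Perm (Fin n) →* S := Q.exists_hom.choose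

theorem perm_swap (i : ℕ) (hi : i + 1 < n) :
    Q.perm (swap ⟨i, Nat.lt_of_succ_lt hi⟩ ⟨i + 1, hi⟩) = Q.sg i := Q.exists_hom.choose_spec i hi

/-- The half of the presentation that involves `ρ`. -/
noncomputable def posHalf : HalfSystem n S where
  π := Q.perm
  sg := Q.sg
  rh := Q.rh
  ee := Q.ee
  hπ := Q.perm_swap
  rel4 := Q.rel4b
  rel8 := Q.rel8b
  rel9 := Q.rel9b
  rel10 := Q.rel10b
  rel11c := Q.rel11c
  rel11d := Q.rel11d
  rel14a := Q.rel14a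
  rel14b := Q.rel14b
  rel14d := Q.rel14d
  rel15a := Q.rel15a
  rel15b := Q.rel15b
  rel15c := Q.rel15c
  rel17a := Q.rel17a
  rel17b := Q.rel17b
  rel17c := Q.rel17c
  rel17d := Q.rel17d
  rel17e := Q.rel17e

/-- The half of the presentation that involves `λ`. Read in the opposite monoid, with each
permutation replaced by its inverse, it has the same shape as the half involving `ρ`. -/
noncomputable def negHalf : HalfSystem n Sᵐᵒᵖ where
  π :=
    { toFun := fun g => op (Q.perm g⁻¹)
      map_one' := by simp
      map_mul' := fun g h => by rw [mul_inv_rev, map_mul, op_mul] }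
  sg i := op (Q.sg i)
  rh i := op (Q.lm i)
  ee i := op (Q.ee i)
  hπ i hi := congrArg op ((congrArg Q.perm (swap_inv _ _)).trans (Q.perm_swap i hi))
  rel4 i j hi hj h := congrArg op (Q.rel4a i j hi hj h).symm
  rel8 i hi := unop_injective (by simpa [mul_assoc] using Q.rel8a i hi)
  rel9 i hi := congrArg op (Q.rel9a i hi)
  rel10 i j hi hj h := congrArg op (Q.rel10a i j hi hj h).symm
  rel11c i hi := congrArg op (Q.rel11a i hi)
  rel11d i hi := congrArg op (Q.rel11b i hi)
  rel14a i hi := congrArg op (Q.rel14a i hi)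
  rel14b i hi := congrArg op (Q.rel14b i hi).symm
  rel14d i hi := unop_injective (by simpa [Q.rel14b i hi] using Q.rel14c i hi)
  rel15a i j hi hj h h' := congrArg op (Q.rel15a i j hi hj h h').symm
  rel15b i hi := congrArg op (Q.rel15c i hi)
  rel15c i hi := congrArg op (Q.rel15b i hi)
  rel17a i j hi hj h h' := congrArg op (Q.rel16a i j hi hj h h').symm
  rel17b i hi := congrArg op (Q.rel16b i hi)
  rel17c i hi := congrArg op (Q.rel16c i hi)
  rel17d i hi := congrArg op (Q.rel16d i hi)
  rel17e i hi := congrArg op ((Q.rel16e i hi).trans (Q.rel14b i hi))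

theorem posHalf_cj_ee (g : Perm (Fin n)) (x : Fin n) :
    Q.posHalf.cj g (Q.ee x) = Q.ee (g x) := Q.posHalf.cj_ee g x

theorem posHalf_cj_L (hn : 3 ≤ n) (g : Perm (Fin n)) (x y : Fin n) :
    Q.posHalf.cj g (unop (Q.negHalf.R hn x y)) = unop (Q.negHalf.R hn (g x) (g y)) := by
  rw [← Q.negHalf.cj_R hn g x y]
  simp [HalfSystem.cj_apply, posHalf, negHalf, mul_assoc]

theorem lm_eq (hn : 3 ≤ n) (i : ℕ) (hi : i + 1 < n) :
    Q.lm i = unop (Q.negHalf.R hn ⟨i, by omega⟩ ⟨i + 1, hi⟩) := by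
  rw [← Q.negHalf.rh_eq hn i hi]; rfl

theorem L02 (hn : 3 ≤ n) : Q.sg 0 * Q.lm 1 * Q.sg 0 =
    unop (Q.negHalf.R hn ⟨0, by omega⟩ ⟨2, by omega⟩) := by
  have h1 := Q.posHalf_cj_L hn (swap ⟨0, by omega⟩ ⟨1, by omega⟩) ⟨1, by omega⟩ ⟨2, by omega⟩
  rw [swap_apply_right,
      swap_apply_of_ne_of_ne (by simp [Fin.ext_iff]) (by simp [Fin.ext_iff])] at h1
  rw [← h1, HalfSystem.cj_apply, swap_inv, Q.posHalf.hπ 0 (by omega), Q.lm_eq hn 1 (by omega)]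
  rfl

/-- The exchange relations between `λ` and `ρ` on the first three letters. -/
theorem L_R_aux (hn : 3 ≤ n) :
    Q.lm 1 * Q.rh 0 = Q.rh 0 * (Q.sg 0 * Q.lm 1 * Q.sg 0) ∧
    Q.sg 0 * Q.lm 1 * Q.sg 0 * Q.rh 0 = Q.rh 0 * (Q.sg 0 * Q.lm 1 * Q.sg 0) := by
  have h5 : Q.lm 1 * Q.rh 0 = Q.rh 0 * (Q.sg 0 * Q.lm 1 * Q.sg 0) := by
    simpa [mul_assoc] using Q.rel5d 0 (by omega)
  have h9 := Q.rel9b 0 (by omega)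
  refine ⟨h5, ?_⟩
  rw [mul_assoc _ (Q.sg 0), h9, mul_assoc, h5, ← mul_assoc, h9]

/-- The equivariant system defined by a system satisfying the relations of the presentation. -/
noncomputable def toPartitionSystem (hn : 3 ≤ n) : PartitionSystem (Fin n) S where
  pos := Q.posHalf.toMergeSystem hn
  neg := Q.negHalf.toMergeSystem hn
  hπ _ := rfl
  hE _ := rfl
  LR x y h := by
    obtain ⟨g, hg⟩ := exists_perm_extending (show 2 ≤ n by omega) ![x, y] (by
      intro i j hij
      fin_cases i <;> fin_cases j <;> simp_all [eq_comm])
    have h0 : g ⟨0, by omega⟩ = x := hg 0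
    have h1 : g ⟨1, by omega⟩ = y := hg 1
    have := congrArg (Q.posHalf.cj g) (Q.rel13a 0 (by omega))
    rw [Q.lm_eq hn 0 (by omega), show Q.rh 0 = _ from Q.posHalf.rh_eq hn 0 (by omega), map_mul,
      posHalf_cj_L, HalfSystem.cj_R] at this
    have he := Q.posHalf_cj_ee g ⟨1, by omega⟩
    simp only [h0, h1, zero_add] at this he
    exact this.symm.trans he
  LRd x y z w hxy hzw hxz hxw hyz hyw := by
    have hinj : Function.Injective ![z, w, x, y] := by
      intro i j hij
      fin_cases i <;> fin_cases j <;> simp_all [eq_comm]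
    have h4 : 4 ≤ n := by simpa using Fintype.card_le_of_injective _ hinj
    obtain ⟨g, hg⟩ := exists_perm_extending h4 _ hinj
    have h0 : g ⟨0, by omega⟩ = z := hg 0
    have h1 : g ⟨1, by omega⟩ = w := hg 1
    have h2 : g ⟨2, by omega⟩ = x := hg 2
    have h3 : g ⟨3, by omega⟩ = y := hg 3
    have := congrArg (Q.posHalf.cj g) (Q.rel4c 0 2 (by omega) (by omega) (by omega))
    rw [Q.lm_eq hn 2 (by omega), show Q.rh 0 = _ from Q.posHalf.rh_eq hn 0 (by omega), map_mul,
      map_mul, posHalf_cj_L, HalfSystem.cj_R] at this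
    simp only [h0, h1, h2, h3, zero_add, Nat.reduceAdd] at this
    exact this.symm
  LR1 x y z hxy hxz hyz := by
    obtain ⟨g, hg⟩ := exists_perm_extending hn ![x, y, z] (by
      intro i j hij
      fin_cases i <;> fin_cases j <;> simp_all [eq_comm])
    have h0 : g ⟨0, by omega⟩ = x := hg 0
    have h1 : g ⟨1, by omega⟩ = y := hg 1
    have h2 : g ⟨2, by omega⟩ = z := hg 2
    have := congrArg (Q.posHalf.cj g) (Q.L_R_aux hn).2
    rw [Q.L02 hn, show Q.rh 0 = _ from Q.posHalf.rh_eq hn 0 (by omega), map_mul,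
      map_mul, posHalf_cj_L, HalfSystem.cj_R] at this
    simp only [h0, h1, h2, zero_add, Nat.reduceAdd] at this
    exact this
  LR2 x y z hxy hxz hyz := by
    obtain ⟨g, hg⟩ := exists_perm_extending hn ![x, y, z] (by
      intro i j hij
      fin_cases i <;> fin_cases j <;> simp_all [eq_comm])
    have h0 : g ⟨0, by omega⟩ = x := hg 0
    have h1 : g ⟨1, by omega⟩ = y := hg 1
    have h2 : g ⟨2, by omega⟩ = z := hg 2
    have := congrArg (Q.posHalf.cj g) (Q.L_R_aux hn).1
    rw [Q.L02 hn, Q.lm_eq hn 1 (by omega), show Q.rh 0 = _ from Q.posHalf.rh_eq hn 0 (by omega),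
      map_mul, map_mul, posHalf_cj_L, posHalf_cj_L, HalfSystem.cj_R] at this
    simp only [h0, h1, h2, zero_add, Nat.reduceAdd] at this
    exact this

theorem sg_eq (hn : 3 ≤ n) (i : ℕ) (hi : i + 1 < n) : Q.sg i =
    (Q.toPartitionSystem hn).pos.π (swap ⟨i, Nat.lt_of_succ_lt hi⟩ ⟨i + 1, hi⟩) :=
  (Q.perm_swap i hi).symm

theorem rh_eq_R (hn : 3 ≤ n) (i : ℕ) (hi : i + 1 < n) : Q.rh i =
    (Q.toPartitionSystem hn).pos.R ⟨i, Nat.lt_of_succ_lt hi⟩ ⟨i + 1, hi⟩ :=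
  Q.posHalf.rh_eq hn i hi

theorem lm_eq_L (hn : 3 ≤ n) (i : ℕ) (hi : i + 1 < n) : Q.lm i =
    (Q.toPartitionSystem hn).L ⟨i, Nat.lt_of_succ_lt hi⟩ ⟨i + 1, hi⟩ :=
  Q.lm_eq hn i hi

end PipSystem

/-! ### Products of block bijections -/

/-- An equivalence relation on `Y ⊕ Y` all of whose classes meet both halves. -/
structure IsIP {Y : Type*} (t : (Y ⊕ Y) → (Y ⊕ Y) → Prop) : Prop where
  refl : ∀ u, t u u
  symm : ∀ {u v}, t u v → t v u
  trans : ∀ {u v w}, t u v → t v w → t u w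
  inl : ∀ u, ∃ x, t u (Sum.inl x)
  inr : ∀ u, ∃ x, t u (Sum.inr x)

section Product

variable {Y : Type*} {r s : (Y ⊕ Y) → (Y ⊕ Y) → Prop}

/-- Connectedness of two elements of the middle row. -/
def Mid (r s : (Y ⊕ Y) → (Y ⊕ Y) → Prop) : Y → Y → Prop :=
  Relation.ReflTransGen fun x y => s (Sum.inl x) (Sum.inl y) ∨ r (Sum.inr x) (Sum.inr y)

/-- An element of one of the outer rows is attached to an element of the middle row. -/
def Att (r s : (Y ⊕ Y) → (Y ⊕ Y) → Prop) : Y ⊕ Y → Y → Prop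
  | Sum.inl x, c => r (Sum.inl x) (Sum.inr c)
  | Sum.inr x, c => s (Sum.inl c) (Sum.inr x)

theorem Mid.of_chain (c : Y) (l : List Y) (f : Bool) (h : AltChain r s f (c :: l)) :
    Mid r s c ((c :: l).getLast (List.cons_ne_nil c l)) := by
  induction l generalizing c f with
  | nil => exact .refl
  | cons d l ih =>
    rw [List.getLast_cons (List.cons_ne_nil d l)]
    cases f
    · exact .head (.inr h.1) (ih d _ h.2)
    · exact .head (.inl h.1) (ih d _ h.2)

/-- As trivial links may be inserted, the first link and the parity of the length of a chain can
be prescribed. -/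
theorem Mid.exists_chain (hr : IsIP r) (hs : IsIP s) {c d : Y} (h : Mid r s c d) (f : Bool)
    (p : ℕ) (hp : p < 2) : ∃ l : List Y, (c :: l).length % 2 = p ∧ AltChain r s f (c :: l) ∧
      (c :: l).getLast (List.cons_ne_nil c l) = d := by
  have link : ∀ (x : Y) (f : Bool) (l : List Y), AltChain r s (!f) (x :: l) →
      AltChain r s f (x :: x :: l) := by
    intro x f l h
    cases f
    · exact ⟨hr.refl _, h⟩
    · exact ⟨hs.refl _, h⟩
  induction h using Relation.ReflTransGen.head_induction_on generalizing f p with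
  | refl =>
    obtain rfl | rfl : p = 0 ∨ p = 1 := by omega
    · exact ⟨[d], by simp, link d f [] (by cases f <;> trivial), rfl⟩
    · exact ⟨[], by simp, by cases f <;> trivial, rfl⟩
  | @head a b hab _ ih =>
    have step : ∃ t : Bool, ∀ l, AltChain r s (!t) (b :: l) → AltChain r s t (a :: b :: l) := by
      rcases hab with h | h
      · exact ⟨true, fun l hl => ⟨h, hl⟩⟩
      · exact ⟨false, fun l hl => ⟨h, hl⟩⟩
    obtain ⟨t, ht⟩ := step
    by_cases hft : f = t
    · subst hft
      obtain ⟨l, h1, h2, h3⟩ := ih (!f) (1 - p) (by omega)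
      refine ⟨b :: l, ?_, ht l h2, by rw [List.getLast_cons (List.cons_ne_nil b l), h3]⟩
      simp only [List.length_cons] at h1 ⊢; omega
    · obtain ⟨l, h1, h2, h3⟩ := ih f p hp
      have hf : t = !f := by cases f <;> cases t <;> simp_all
      refine ⟨a :: b :: l, ?_, link a f _ ?_, ?_⟩
      · simp only [List.length_cons] at h1 ⊢; omega
      · rw [← hf]; exact ht l (by simpa [hf] using h2)
      · rw [List.getLast_cons (List.cons_ne_nil a _), List.getLast_cons (List.cons_ne_nil b l), h3]

theorem Mid.symm (hr : IsIP r) (hs : IsIP s) {c d : Y} (h : Mid r s c d) : Mid r s d c := by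
  induction h with
  | refl => exact .refl
  | tail _ h ih => exact .head (h.imp hs.symm hr.symm) ih

/-- As all blocks are lines, every outer element is attached to the middle row, so the two cases
in the definition of the product relation merge. -/
theorem prodRel_iff (hr : IsIP r) (hs : IsIP s) (u v : Y ⊕ Y) :
    prodRel r s u v ↔ ∃ c d, Att r s u c ∧ Mid r s c d ∧ Att r s v d := by
  rcases u with x | x <;> rcases v with y | y <;> simp only [prodRel, Att]
  · constructor
    · rintro (h | ⟨c, l, -, h1, h2, h3⟩)
      · obtain ⟨c, hc⟩ := hr.inr (Sum.inl x)
        exact ⟨c, c, hc, .refl, hr.trans (hr.symm h) hc⟩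
      · exact ⟨c, _, h1, .of_chain c l _ h2, hr.symm h3⟩
    · rintro ⟨c, d, h1, h2, h3⟩
      obtain ⟨l, h4, h5, h6⟩ := h2.exists_chain hr hs true 0 (by omega)
      exact .inr ⟨c, l, h4, h1, h5, h6 ▸ hr.symm h3⟩
  · constructor
    · rintro ⟨c, l, -, h1, h2, h3⟩
      exact ⟨c, _, h1, .of_chain c l _ h2, h3⟩
    · rintro ⟨c, d, h1, h2, h3⟩
      obtain ⟨l, h4, h5, h6⟩ := h2.exists_chain hr hs true 1 (by omega)
      exact ⟨c, l, h4, h1, h5, h6 ▸ h3⟩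
  · constructor
    · rintro ⟨c, l, -, h1, h2, h3⟩
      exact ⟨_, c, h3, (Mid.of_chain c l _ h2).symm hr hs, h1⟩
    · rintro ⟨c, d, h1, h2, h3⟩
      obtain ⟨l, h4, h5, h6⟩ := (h2.symm hr hs).exists_chain hr hs true 1 (by omega)
      exact ⟨d, l, h4, h3, h5, h6 ▸ h1⟩
  · constructor
    · rintro (h | ⟨c, l, -, h1, h2, h3⟩)
      · obtain ⟨c, hc⟩ := hs.inl (Sum.inr x)
        exact ⟨c, c, hs.symm hc, .refl, hs.trans (hs.symm hc) h⟩
      · exact ⟨c, _, hs.symm h1, .of_chain c l _ h2, h3⟩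
    · rintro ⟨c, d, h1, h2, h3⟩
      obtain ⟨l, h4, h5, h6⟩ := h2.exists_chain hr hs false 0 (by omega)
      exact .inr ⟨c, l, h4, hs.symm h1, h5, h6 ▸ h3⟩

theorem Att.mid (hr : IsIP r) (hs : IsIP s) {u : Y ⊕ Y} {c d : Y} (hc : Att r s u c)
    (hd : Att r s u d) : Mid r s c d := by
  rcases u with x | x
  · exact .single (.inr (hr.trans (hr.symm hc) hd))
  · exact .single (.inl (hs.trans hc (hs.symm hd)))

theorem isIP_prodRel (hr : IsIP r) (hs : IsIP s) : IsIP (prodRel r s) := by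
  have ex : ∀ u, ∃ c, Att r s u c := by
    rintro (x | x)
    · exact hr.inr (Sum.inl x)
    · obtain ⟨c, hc⟩ := hs.inl (Sum.inr x); exact ⟨c, hs.symm hc⟩
  refine ⟨fun u => ?_, fun {u v} => ?_, fun {u v w} => ?_, fun u => ?_, fun u => ?_⟩ <;>
    simp only [prodRel_iff hr hs]
  · obtain ⟨c, hc⟩ := ex u
    exact ⟨c, c, hc, .refl, hc⟩
  · rintro ⟨c, d, h1, h2, h3⟩
    exact ⟨d, c, h3, h2.symm hr hs, h1⟩
  · rintro ⟨c, d, h1, h2, h3⟩ ⟨c', d', h1', h2', h3'⟩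
    exact ⟨c, d', h1, (h2.trans (h3.mid hr hs h1')).trans h2', h3'⟩
  · obtain ⟨c, hc⟩ := ex u
    obtain ⟨x, hx⟩ := hr.inl (Sum.inr c)
    exact ⟨x, c, c, hc, .refl, hr.symm hx⟩
  · obtain ⟨c, hc⟩ := ex u
    obtain ⟨x, hx⟩ := hs.inr (Sum.inl c)
    exact ⟨x, c, c, hc, .refl, hx⟩

/-- A pair of subsets of the two rows whose union is a union of classes. -/
def Sat (t : (Y ⊕ Y) → (Y ⊕ Y) → Prop) (A B : Y → Prop) : Prop :=
  ∀ u v, t u v → Sum.elim A B u → Sum.elim A B v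

/-- Unions of blocks of a product are obtained by gluing unions of blocks of the factors. -/
theorem sat_prodRel (hr : IsIP r) (hs : IsIP s) (A C : Y → Prop) :
    Sat (prodRel r s) A C ↔ ∃ B, Sat r A B ∧ Sat s B C := by
  constructor
  · intro h
    have h' : ∀ {u v c d}, Att r s u c → Mid r s c d → Att r s v d → Sum.elim A C u →
        Sum.elim A C v := fun h1 h2 h3 => h _ _ ((prodRel_iff hr hs _ _).2 ⟨_, _, h1, h2, h3⟩)
    refine ⟨fun c => ∃ x c', r (Sum.inl x) (Sum.inr c') ∧ Mid r s c' c ∧ A x, ?_, ?_⟩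
    · rintro (x | x) (y | y) hxy
      · intro hx
        obtain ⟨c, hc⟩ := hr.inr (Sum.inl x)
        exact h' (u := Sum.inl x) (v := Sum.inl y) hc .refl (hr.trans (hr.symm hxy) hc) hx
      · intro hx
        exact ⟨x, y, hxy, .refl, hx⟩
      · rintro ⟨z, c, h1, h2, hz⟩
        exact h' (u := Sum.inl z) (v := Sum.inl y) h1 h2 (hr.symm hxy) hz
      · rintro ⟨z, c, h1, h2, hz⟩
        exact ⟨z, c, h1, h2.tail (.inr hxy), hz⟩
    · rintro (x | x) (y | y) hxy
      · rintro ⟨z, c, h1, h2, hz⟩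
        exact ⟨z, c, h1, h2.tail (.inl hxy), hz⟩
      · rintro ⟨z, c, h1, h2, hz⟩
        exact h' (u := Sum.inl z) (v := Sum.inr y) h1 h2 hxy hz
      · intro hx
        obtain ⟨z, hz⟩ := hr.inl (Sum.inr y)
        exact ⟨z, y, hr.symm hz, .refl,
          h' (u := Sum.inr x) (v := Sum.inl z) (hs.symm hxy) .refl (hr.symm hz) hx⟩
      · intro hx
        obtain ⟨c, hc⟩ := hs.inl (Sum.inr x)
        exact h' (u := Sum.inr x) (v := Sum.inr y) (hs.symm hc) .refl
          (hs.trans (hs.symm hc) hxy) hx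
  · rintro ⟨B, hB, hB'⟩ u v huv
    obtain ⟨c, d, h1, h2, h3⟩ := (prodRel_iff hr hs _ _).1 huv
    have e1 : ∀ {u c}, Att r s u c → (Sum.elim A C u ↔ B c) := by
      rintro (x | x) c hc
      · exact ⟨hB _ (Sum.inr c) hc, hB (Sum.inr c) _ (hr.symm hc)⟩
      · exact ⟨hB' _ (Sum.inl c) (hs.symm hc), hB' (Sum.inl c) _ hc⟩
    have e2 : B c → B d := by
      clear h1 h3 huv
      induction h2 with
      | refl => exact id
      | tail _ h ih =>
        rcases h with h | h
        · exact fun hb => hB' _ _ h (ih hb)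
        · exact fun hb => hB _ _ h (ih hb)
    exact fun hu => (e1 h3).2 (e2 ((e1 h1).1 hu))

end Product

/-! ### The monoid of partitions into lines and points -/

section Monoid

variable {X : Type*}

theorem PIP.point_or_line (a : PIP X) (z : X ⊕ X) :
    IsPointOf a.1.r z ∨ ((∃ x, a.1.r z (Sum.inl x)) ∧ ∃ x, a.1.r z (Sum.inr x)) := by
  rcases a.2 z with h | ⟨y, hy⟩
  · exact .inr h
  · have e : ∀ w, a.1.r z w ↔ w = y := fun w => Set.ext_iff.1 hy w
    have hz : z = y := (e z).1 (a.1.iseqv.refl z)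
    exact .inl fun w hw => hz ▸ (e w).1 hw

theorem isPointOf_congr (a : PIP X) {z w : X ⊕ X} (h : a.1.r z w) (hz : IsPointOf a.1.r z) :
    IsPointOf a.1.r w := by rwa [hz w h]

theorem inExtraBlock_map (a : PIP X) (z : X ⊕ X) :
    InExtraBlock a.1.r (Sum.map some some z) ↔ IsPointOf a.1.r z := by
  rcases z with z | z <;> rfl

theorem map_some_injective {z w : X ⊕ X} (h : Sum.map some some z = Sum.map some some w) :
    z = w := by
  rcases z with z | z <;> rcases w with w | w <;> simp_all

theorem isIP_phiRel (a : PIP X) : IsIP (phiRel a.1.r) := by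
  have key : ∀ u : Option X ⊕ Option X, InExtraBlock a.1.r u ∨
      ∃ z, u = Sum.map some some z ∧ ¬ IsPointOf a.1.r z := by
    have h : ∀ z : X ⊕ X, InExtraBlock a.1.r (Sum.map some some z) ∨
      ∃ z', Sum.map some some z = Sum.map some some z' ∧ ¬ IsPointOf a.1.r z' := fun z => by
      rw [inExtraBlock_map]
      by_cases h : IsPointOf a.1.r z
      · exact .inl h
      · exact .inr ⟨z, rfl, h⟩
    rintro ((_ | x) | (_ | x))
    · exact .inl trivial
    · exact h (Sum.inl x)
    · exact .inl trivial
    · exact h (Sum.inr x)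
  refine ⟨fun u => ?_, fun {u v} => ?_, fun {u v w} => ?_, fun u => ?_, fun u => ?_⟩
  · rcases key u with h | ⟨z, rfl, hz⟩
    · exact .inr ⟨h, h⟩
    · exact .inl ⟨z, z, rfl, rfl, a.1.iseqv.refl z, hz⟩
  · rintro (⟨z, w, rfl, rfl, h, hz⟩ | ⟨h, h'⟩)
    · exact .inl ⟨w, z, rfl, rfl, a.1.iseqv.symm h,
        fun hw => hz (isPointOf_congr a (a.1.iseqv.symm h) hw)⟩
    · exact .inr ⟨h', h⟩
  · rintro (⟨z, w, rfl, rfl, h, hz⟩ | ⟨h, h'⟩)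
      (⟨z', w', e, rfl, h1, hz1⟩ | ⟨h1, h1'⟩)
    · obtain rfl := map_some_injective e
      exact .inl ⟨z, w', rfl, rfl, a.1.iseqv.trans h h1, hz⟩
    · rw [inExtraBlock_map] at h1
      exact absurd (isPointOf_congr a (a.1.iseqv.symm h) h1) hz
    · subst e
      rw [inExtraBlock_map] at h'
      exact absurd h' hz1
    · exact .inr ⟨h, h1'⟩
  · rcases key u with h | ⟨z, rfl, hz⟩
    · exact ⟨none, .inr ⟨h, trivial⟩⟩
    · obtain ⟨⟨x, hx⟩, -⟩ := (a.point_or_line z).resolve_left hz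
      exact ⟨some x, .inl ⟨z, Sum.inl x, rfl, rfl, hx, hz⟩⟩
  · rcases key u with h | ⟨z, rfl, hz⟩
    · exact ⟨none, .inr ⟨h, trivial⟩⟩
    · obtain ⟨-, ⟨x, hx⟩⟩ := (a.point_or_line z).resolve_left hz
      exact ⟨some x, .inl ⟨z, Sum.inr x, rfl, rfl, hx, hz⟩⟩

/-- The partition of `X ⊕ X` whose image under `phiRel` is a given block bijection: the block
of the extra pair is broken into points. -/
def PIP.ofRel (t : (Option X ⊕ Option X) → (Option X ⊕ Option X) → Prop) (ht : IsIP t)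
    (h0 : t (Sum.inl none) (Sum.inr none)) : PIP X :=
  ⟨{ r := fun z w => z = w ∨ (t (Sum.map some some z) (Sum.map some some w) ∧
        ¬ t (Sum.map some some z) (Sum.inl none))
     iseqv :=
      { refl := fun z => .inl rfl
        symm := by
          rintro z w (h | ⟨h, h'⟩)
          · exact .inl h.symm
          · exact .inr ⟨ht.symm h, fun h1 => h' (ht.trans h h1)⟩
        trans := by
          rintro z w y (rfl | ⟨h, h'⟩) (rfl | ⟨h1, h1'⟩)
          · exact .inl rfl
          · exact .inr ⟨h1, h1'⟩
          · exact .inr ⟨h, h'⟩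
          · exact .inr ⟨ht.trans h h1, h'⟩ } }, by
    intro z
    by_cases hz : t (Sum.map some some z) (Sum.inl none)
    · right
      refine ⟨z, Set.ext fun w => ⟨?_, fun h => .inl h.symm⟩⟩
      rintro (h | h)
      · exact h.symm
      · exact absurd hz h.2
    · left
      constructor
      · obtain ⟨_ | x, hx⟩ := ht.inl (Sum.map some some z)
        · exact absurd hx hz
        · exact ⟨x, .inr ⟨hx, hz⟩⟩
      · obtain ⟨_ | x, hx⟩ := ht.inr (Sum.map some some z)
        · exact absurd (ht.trans hx (ht.symm h0)) hz
        · exact ⟨x, .inr ⟨hx, hz⟩⟩⟩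

theorem phiRel_ofRel (t : (Option X ⊕ Option X) → (Option X ⊕ Option X) → Prop) (ht : IsIP t)
    (h0 : t (Sum.inl none) (Sum.inr none)) : phiRel (PIP.ofRel t ht h0).1.r = t := by
  have hpt : ∀ z, IsPointOf (PIP.ofRel t ht h0).1.r z ↔ t (Sum.map some some z) (Sum.inl none) := by
    intro z
    constructor
    · intro h
      by_contra hz
      have h' : ∀ w, t (Sum.map some some z) (Sum.map some some w) → w = z :=
        fun w hw => h w (.inr ⟨hw, hz⟩)
      obtain ⟨_ | x, hx⟩ := ht.inl (Sum.map some some z)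
      · exact absurd hx hz
      obtain ⟨_ | y, hy⟩ := ht.inr (Sum.map some some z)
      · exact absurd (ht.trans hy (ht.symm h0)) hz
      have e1 := h' (Sum.inl x) hx
      have e2 := h' (Sum.inr y) hy
      rw [← e2] at e1
      cases e1
    · rintro hz w (h | h)
      · exact h.symm
      · exact absurd hz h.2
  have hex : ∀ u, InExtraBlock (PIP.ofRel t ht h0).1.r u ↔ t u (Sum.inl none) := by
    rintro ((_ | x) | (_ | x))
    · exact iff_of_true trivial (ht.refl _)
    · exact hpt (Sum.inl x)
    · exact iff_of_true trivial (ht.symm h0)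
    · exact hpt (Sum.inr x)
  have hmap : ∀ u, ¬ t u (Sum.inl none) → ∃ z : X ⊕ X, u = Sum.map some some z := by
    rintro ((_ | x) | (_ | x)) h
    · exact absurd (ht.refl _) h
    · exact ⟨Sum.inl x, rfl⟩
    · exact absurd (ht.symm h0) h
    · exact ⟨Sum.inr x, rfl⟩
  funext u v
  refine propext ⟨?_, fun h => ?_⟩
  · rintro (⟨z, w, rfl, rfl, h | h, -⟩ | ⟨h, h'⟩)
    · rw [h]; exact ht.refl _
    · exact h.1
    · exact ht.trans ((hex u).1 h) (ht.symm ((hex v).1 h'))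
  · by_cases hu : t u (Sum.inl none)
    · exact .inr ⟨(hex u).2 hu, (hex v).2 (ht.trans (ht.symm h) hu)⟩
    · have hv : ¬ t v (Sum.inl none) := fun hv => hu (ht.trans h hv)
      obtain ⟨z, rfl⟩ := hmap u hu
      obtain ⟨w, rfl⟩ := hmap v hv
      exact .inl ⟨z, w, rfl, rfl, .inr ⟨h, hu⟩, fun h => hu ((hpt z).1 h)⟩

/-- The product of two partitions. -/
def PIP.mul (a b : PIP X) : PIP X :=
  .ofRel (prodRel (phiRel a.1.r) (phiRel b.1.r)) (isIP_prodRel (isIP_phiRel a) (isIP_phiRel b))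
    ((prodRel_iff (isIP_phiRel a) (isIP_phiRel b) _ _).2
      ⟨none, none, .inr ⟨trivial, trivial⟩, .refl, .inr ⟨trivial, trivial⟩⟩)

theorem phiRel_mul (a b : PIP X) :
    phiRel (a.mul b).1.r = prodRel (phiRel a.1.r) (phiRel b.1.r) :=
  phiRel_ofRel _ _ _

/-- The two sets `U` and `V` (given by their indicator functions) form a union of lines of
the partition `a`. -/
def PIP.Rel (a : PIP X) (U V : X → Bool) : Prop :=
  (∀ z w, a.1.r z w → Sum.elim U V z = Sum.elim U V w) ∧
    ∀ z, IsPointOf a.1.r z → Sum.elim U V z = false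

/-- Unions of lines of `a` are the unions of blocks of `phiRel a` that avoid the block of the
extra pair. -/
theorem PIP.rel_iff_sat (a : PIP X) (U V : X → Bool) :
    a.Rel U V ↔ Sat (phiRel a.1.r) (fun o => o.any U = true) (fun o => o.any V = true) := by
  have e : ∀ z : X ⊕ X, Sum.elim (fun o : Option X => o.any U = true)
      (fun o : Option X => o.any V = true) (Sum.map some some z) ↔ Sum.elim U V z = true := by
    rintro (z | z) <;> simp
  constructor
  · rintro ⟨h1, h2⟩ u v (⟨z, w, rfl, rfl, h, -⟩ | ⟨h, h'⟩)
    · rw [e, e, h1 z w h]; exact id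
    · intro hu
      rcases u with (_ | u) | (_ | u)
      · simp at hu
      · have := h2 _ h; simp_all
      · simp at hu
      · have := h2 _ h; simp_all
  · intro h
    constructor
    · intro z w hzw
      by_cases hz : IsPointOf a.1.r z
      · rw [hz w hzw]
      · have i1 := h _ _ (.inl ⟨z, w, rfl, rfl, hzw, hz⟩)
        have i2 := h _ _ (.inl ⟨w, z, rfl, rfl, a.1.iseqv.symm hzw,
          fun hw => hz (isPointOf_congr a (a.1.iseqv.symm hzw) hw)⟩)
        rw [e, e] at i1 i2
        exact Bool.eq_iff_iff.2 ⟨i1, i2⟩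
    · intro z hz
      have := h _ (Sum.inl none) (.inr ⟨(inExtraBlock_map a z).2 hz, trivial⟩)
      rw [e] at this
      simpa using this

/-- Products of partitions act on subsets as composites of relations. -/
theorem PIP.rel_mul (a b : PIP X) (U W : X → Bool) :
    (a.mul b).Rel U W ↔ ∃ V, a.Rel U V ∧ b.Rel V W := by
  classical
  simp only [rel_iff_sat, phiRel_mul]
  rw [sat_prodRel (isIP_phiRel a) (isIP_phiRel b)]
  constructor
  · rintro ⟨B, h1, h2⟩
    have hB : (fun o : Option X => o.any (fun x => decide (B (some x))) = true) = B := by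
      funext o
      rcases o with _ | x
      · have := h1 (Sum.inr none) (Sum.inl none) (.inr ⟨trivial, trivial⟩)
        simpa using this
      · simp
    refine ⟨fun x => decide (B (some x)), ?_⟩
    rw [hB]
    exact ⟨h1, h2⟩
  · rintro ⟨V, h⟩
    exact ⟨_, h⟩

/-- A partition is determined by the unions of its lines. -/
theorem PIP.r_iff (a : PIP X) (z w : X ⊕ X) : a.1.r z w ↔ z = w ∨
    ((∀ U V, a.Rel U V → Sum.elim U V z = Sum.elim U V w) ∧
      ∃ U V, a.Rel U V ∧ Sum.elim U V z = true) := by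
  classical
  have key : ¬ IsPointOf a.1.r z →
      a.Rel (fun x => decide (a.1.r z (Sum.inl x))) (fun x => decide (a.1.r z (Sum.inr x))) := by
    intro hz
    have e : ∀ w, Sum.elim (fun x => decide (a.1.r z (Sum.inl x)))
        (fun x => decide (a.1.r z (Sum.inr x))) w = decide (a.1.r z w) := by
      rintro (w | w) <;> rfl
    constructor
    · intro x y hxy
      rw [e, e, decide_eq_decide]
      exact ⟨fun h => a.1.iseqv.trans h hxy, fun h => a.1.iseqv.trans h (a.1.iseqv.symm hxy)⟩
    · intro x hx
      rw [e, decide_eq_false_iff_not]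
      exact fun h => hz (isPointOf_congr a (a.1.iseqv.symm h) hx)
  have e : ∀ w, Sum.elim (fun x => decide (a.1.r z (Sum.inl x)))
        (fun x => decide (a.1.r z (Sum.inr x))) w = decide (a.1.r z w) := by
      rintro (w | w) <;> rfl
  constructor
  · intro h
    by_cases hzw : z = w
    · exact .inl hzw
    · refine .inr ⟨fun U V hUV => hUV.1 z w h, _, _, key fun hz => hzw (hz w h).symm, ?_⟩
      rw [e, decide_eq_true_iff]
  · rintro (rfl | ⟨h1, U, V, hUV, hz⟩)
    · exact a.1.iseqv.refl z
    · have hz' : ¬ IsPointOf a.1.r z := fun h => by simp [hUV.2 z h] at hz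
      have := h1 _ _ (key hz')
      rw [e, e, decide_eq_decide] at this
      exact this.1 (a.1.iseqv.refl z)

/-- The action on subsets is faithful. -/
theorem PIP.ext_rel {a b : PIP X} (h : ∀ U V, a.Rel U V ↔ b.Rel U V) : a = b := by
  apply Subtype.ext
  apply Setoid.ext
  intro z w
  change a.1.r z w ↔ b.1.r z w
  rw [a.r_iff, b.r_iff]
  simp only [h]

/-- The identity: all blocks are of the form `{x, x'}`. -/
def PIP.one (X : Type*) : PIP X :=
  ⟨{ r := fun z w => (Sum.elim id id z : X) = Sum.elim id id w
     iseqv := ⟨fun _ => rfl, fun h => h.symm, fun h h' => h.trans h'⟩ },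
    fun z => .inl ⟨⟨Sum.elim id id z, rfl⟩, ⟨Sum.elim id id z, rfl⟩⟩⟩

theorem PIP.rel_one (U V : X → Bool) : (PIP.one X).Rel U V ↔ U = V := by
  constructor
  · intro h
    funext x
    exact h.1 (Sum.inl x) (Sum.inr x) rfl
  · rintro rfl
    constructor
    · rintro (z | z) (w | w) h <;> exact congrArg U h
    · rintro (z | z) hz
      · cases hz (Sum.inr z) rfl
      · cases hz (Sum.inl z) rfl

/-- The monoid of partitions into lines and points. -/
@[reducible] def PIP.monoid (X : Type*) : Monoid (PIP X) where
  mul := PIP.mul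
  one := PIP.one X
  mul_assoc a b c := PIP.ext_rel fun U V => by
    change (PIP.mul (PIP.mul a b) c).Rel U V ↔ (PIP.mul a (PIP.mul b c)).Rel U V
    simp only [PIP.rel_mul]
    constructor
    · rintro ⟨W, ⟨W', h1, h2⟩, h3⟩; exact ⟨W', h1, W, h2, h3⟩
    · rintro ⟨W', h1, W, h2, h3⟩; exact ⟨W, ⟨W', h1, h2⟩, h3⟩
  one_mul a := PIP.ext_rel fun U V => by
    change (PIP.mul (PIP.one X) a).Rel U V ↔ _
    simp [PIP.rel_mul, PIP.rel_one]
  mul_one a := PIP.ext_rel fun U V => by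
    change (PIP.mul a (PIP.one X)).Rel U V ↔ _
    simp [PIP.rel_mul, PIP.rel_one]

end Monoid

/-! ### The generators of the monoid of partitions -/

namespace PIP

variable {n : ℕ}

/-- The block bijection of a permutation. -/
def sEl (τ : Perm (Fin n)) : PIP (Fin n) :=
  ⟨{ r := sRel τ
     iseqv := by
      refine ⟨?_, ?_, ?_⟩
      · rintro (x | x) <;> simp [sRel]
      · rintro (x | x) (y | y) <;> simp only [sRel] <;> grind
      · rintro (x | x) (y | y) (z | z) <;> simp only [sRel] <;> grind [τ.injective.eq_iff] },
    by
      rintro (x | x)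
      · exact .inl ⟨⟨x, rfl⟩, ⟨τ x, rfl⟩⟩
      · exact .inl ⟨⟨τ⁻¹ x, by simp [sRel]⟩, ⟨x, rfl⟩⟩⟩

/-- The partition with blocks `{k, l, k'}`, `{l'}` and `{t, t'}` for the other letters `t`. -/
def rEl (k l : Fin n) (hkl : k ≠ l) : PIP (Fin n) :=
  ⟨{ r := rRel k l
     iseqv := by
      refine ⟨?_, ?_, ?_⟩
      · rintro (x | x) <;> simp [rRel]
      · rintro (x | x) (y | y) <;> simp only [rRel] <;> grind
      · rintro (x | x) (y | y) (z | z) <;> simp only [rRel] <;> grind },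
    by
      rintro (x | x)
      · left
        refine ⟨⟨x, by simp [rRel]⟩, ?_⟩
        by_cases h : x = k ∨ x = l
        · exact ⟨k, .inl ⟨h, rfl⟩⟩
        · exact ⟨x, .inr ⟨rfl, not_or.1 h⟩⟩
      · by_cases h : x = l
        · right
          refine ⟨Sum.inr x, Set.ext ?_⟩
          rintro (y | y) <;> simp [rRel] <;> grind
        · left
          refine ⟨⟨x, ?_⟩, ⟨x, rfl⟩⟩
          simp only [Set.mem_ofPred_eq, rRel]; grind⟩

/-- The partition with blocks `{k, k', l'}`, `{l}` and `{t, t'}` for the other letters `t`. -/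
def lEl (k l : Fin n) (hkl : k ≠ l) : PIP (Fin n) :=
  ⟨{ r := lRel k l
     iseqv := by
      refine ⟨?_, ?_, ?_⟩
      · rintro (x | x) <;> simp [lRel]
      · rintro (x | x) (y | y) <;> simp only [lRel] <;> grind
      · rintro (x | x) (y | y) (z | z) <;> simp only [lRel] <;> grind },
    by
      rintro (x | x)
      · by_cases h : x = l
        · right
          refine ⟨Sum.inl x, Set.ext ?_⟩
          rintro (y | y) <;> simp [lRel] <;> grind
        · left
          refine ⟨⟨x, rfl⟩, ⟨x, ?_⟩⟩
          simp only [Set.mem_ofPred_eq, lRel]; grind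
      · left
        refine ⟨?_, ⟨x, by simp [lRel]⟩⟩
        by_cases h : x = k ∨ x = l
        · exact ⟨k, .inl ⟨rfl, h⟩⟩
        · refine ⟨x, .inr ⟨rfl, not_or.1 h⟩⟩⟩

/-- A partition acts on a subset of the upper row as a partial function: it is defined when the
condition `C` holds, and its value is then given by `F`. -/
def Act (a : PIP (Fin n)) (C : (Fin n → Bool) → Prop) (F : (Fin n → Bool) → Fin n → Bool) :
    Prop := ∀ U V, a.Rel U V ↔ C U ∧ ∀ x, V x = F U x

theorem act_sEl (τ : Perm (Fin n)) : Act (sEl τ) (fun _ => True) (fun U x => U (τ⁻¹ x)) := by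
  intro U V
  constructor
  · intro h
    exact ⟨trivial, fun x => (h.1 (Sum.inl (τ⁻¹ x)) (Sum.inr x) (show τ (τ⁻¹ x) = x by simp)).symm⟩
  · rintro ⟨-, h⟩
    have h' : ∀ x, V (τ x) = U x := by simp [h]
    constructor
    · rintro (x | x) (y | y) hxy
      · exact congrArg U hxy
      · exact (h' x).symm.trans (congrArg V hxy)
      · exact ((h' y).symm.trans (congrArg V hxy)).symm
      · exact congrArg V hxy
    · rintro (x | x) hx
      · cases hx (Sum.inr (τ x)) rfl
      · cases hx (Sum.inl (τ⁻¹ x)) (show τ (τ⁻¹ x) = x by simp)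

theorem act_rEl (k l : Fin n) (hkl : k ≠ l) :
    Act (rEl k l hkl) (fun U => U k = U l) (fun U x => if x = l then false else U x) := by
  intro U V
  constructor
  · intro h
    refine ⟨h.1 (Sum.inl k) (Sum.inl l) (.inr (.inl ⟨rfl, rfl⟩)), fun x => ?_⟩
    beta_reduce
    split_ifs with hx
    · refine h.2 (Sum.inr x) ?_
      rintro (y | y) hy
      · change rRel k l _ _ at hy
        simp only [rRel] at hy; grind
      · exact congrArg Sum.inr hy.symm
    · by_cases hk : x = k
      · exact (h.1 (Sum.inl x) (Sum.inr x) (.inl ⟨.inl hk, hk⟩)).symm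
      · exact (h.1 (Sum.inl x) (Sum.inr x) (.inr ⟨rfl, hk, hx⟩)).symm
  · rintro ⟨h1, h2⟩
    constructor
    · rintro (x | x) (y | y) hxy <;> change rRel k l _ _ at hxy <;>
        simp only [rRel] at hxy <;>
        simp only [Sum.elim_inl, Sum.elim_inr, h2] <;> grind
    · rintro (x | x) hx
      · by_cases h : x = k ∨ x = l
        · cases hx (Sum.inr k) (.inl ⟨h, rfl⟩)
        · cases hx (Sum.inr x) (.inr ⟨rfl, not_or.1 h⟩)
      · by_cases h : x = l
        · simp [h2, h]
        · exfalso
          by_cases hk : x = k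
          · cases hx (Sum.inl x) (.inl ⟨.inl hk, hk⟩)
          · cases hx (Sum.inl x) (.inr ⟨rfl, hk, h⟩)

theorem act_lEl (k l : Fin n) (hkl : k ≠ l) :
    Act (lEl k l hkl) (fun U => U l = false) (fun U x => if x = l then U k else U x) := by
  intro U V
  constructor
  · intro h
    constructor
    · refine h.2 (Sum.inl l) ?_
      rintro (y | y) hy
      · exact congrArg Sum.inl hy.symm
      · change lRel k l _ _ at hy
        simp only [lRel] at hy; grind
    · intro x
      beta_reduce
      split_ifs with hx
      · exact (h.1 (Sum.inl k) (Sum.inr x) (.inl ⟨rfl, .inr hx⟩)).symm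
      · by_cases hk : x = k
        · exact (h.1 (Sum.inl x) (Sum.inr x) (.inl ⟨hk, .inl hk⟩)).symm
        · exact (h.1 (Sum.inl x) (Sum.inr x) (.inr ⟨rfl, hk, hx⟩)).symm
  · rintro ⟨h1, h2⟩
    constructor
    · rintro (x | x) (y | y) hxy <;> change lRel k l _ _ at hxy <;>
        simp only [lRel] at hxy <;>
        simp only [Sum.elim_inl, Sum.elim_inr, h2] <;> grind
    · rintro (x | x) hx
      · by_cases h : x = l
        · simp [h1, h]
        · exfalso
          by_cases hk : x = k
          · cases hx (Sum.inr x) (.inl ⟨hk, .inl hk⟩)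
          · cases hx (Sum.inr x) (.inr ⟨rfl, hk, h⟩)
      · by_cases h : x = k ∨ x = l
        · cases hx (Sum.inl k) (.inl ⟨rfl, h⟩)
        · cases hx (Sum.inl x) (.inr ⟨rfl, not_or.1 h⟩)

attribute [local instance] PIP.monoid

theorem act_one : Act (1 : PIP (Fin n)) (fun _ => True) (fun U x => U x) := fun U V => by
  rw [show (1 : PIP (Fin n)).Rel U V ↔ U = V from PIP.rel_one U V, funext_iff]
  simp [eq_comm]

theorem rel_mul' (a b : PIP (Fin n)) (U W : Fin n → Bool) :
    (a * b).Rel U W ↔ ∃ V, a.Rel U V ∧ b.Rel V W := PIP.rel_mul a b U W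

theorem Act.mul {a b : PIP (Fin n)} {C C' : (Fin n → Bool) → Prop}
    {F F' : (Fin n → Bool) → Fin n → Bool} (h : Act a C F) (h' : Act b C' F') :
    Act (a * b) (fun U => C U ∧ C' (F U)) (fun U => F' (F U)) := by
  intro U W
  rw [rel_mul']
  simp only [h _ _, h' _ _]
  constructor
  · rintro ⟨V, ⟨h1, h2⟩, h3, h4⟩
    obtain rfl : V = F U := funext h2
    exact ⟨⟨h1, h3⟩, h4⟩
  · rintro ⟨⟨h1, h3⟩, h4⟩
    exact ⟨F U, ⟨h1, fun _ => rfl⟩, h3, h4⟩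

theorem Act.congr {a : PIP (Fin n)} {C C' : (Fin n → Bool) → Prop}
    {F F' : (Fin n → Bool) → Fin n → Bool} (h : Act a C F) (hC : ∀ U, C U ↔ C' U)
    (hF : ∀ U, C' U → ∀ x, F U x = F' U x) : Act a C' F' := by
  intro U V
  rw [h, hC]
  exact and_congr_right fun hU => forall_congr' fun x => by rw [hF U hU]

/-- As the action is faithful, an identity of products can be checked on subsets. -/
theorem Act.eq {a b : PIP (Fin n)} {C C' : (Fin n → Bool) → Prop}
    {F F' : (Fin n → Bool) → Fin n → Bool} (h : Act a C F) (h' : Act b C' F')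
    (hC : ∀ U, C U ↔ C' U) (hF : ∀ U, C' U → ∀ x, F U x = F' U x) : a = b :=
  ext_rel fun U V => by rw [h.congr hC hF U V, h' U V]

/-- The generator `s_i` (and `1` if the index is out of range). -/
def sg (n i : ℕ) : PIP (Fin n) :=
  if h : i + 1 < n then sEl (swap ⟨i, Nat.lt_of_succ_lt h⟩ ⟨i + 1, h⟩) else 1

/-- The generator `l_i` (and `1` if the index is out of range). -/
def lm (n i : ℕ) : PIP (Fin n) :=
  if h : i + 1 < n then lEl ⟨i, Nat.lt_of_succ_lt h⟩ ⟨i + 1, h⟩ (by simp) else 1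

/-- The generator `r_i` (and `1` if the index is out of range). -/
def rh (n i : ℕ) : PIP (Fin n) :=
  if h : i + 1 < n then rEl ⟨i, Nat.lt_of_succ_lt h⟩ ⟨i + 1, h⟩ (by simp) else 1

/-- The idempotent `e_i`, which turns the letter `i` into points. -/
def ee (n : ℕ) : ℕ → PIP (Fin n)
  | 0 => sg n 0 * (lm n 0 * rh n 0) * sg n 0
  | i + 1 => lm n i * rh n i

theorem act_sg (i : ℕ) (h : i + 1 < n) : Act (sg n i) (fun _ => True) (fun U x =>
    if x = ⟨i, Nat.lt_of_succ_lt h⟩ then U ⟨i + 1, h⟩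
    else if x = ⟨i + 1, h⟩ then U ⟨i, Nat.lt_of_succ_lt h⟩ else U x) := by
  rw [sg, dif_pos h]
  refine (act_sEl _).congr (fun _ => Iff.rfl) fun U _ x => ?_
  rw [swap_inv, swap_apply_def]
  split_ifs <;> rfl

theorem act_lm (i : ℕ) (h : i + 1 < n) : Act (lm n i) (fun U => U ⟨i + 1, h⟩ = false)
    (fun U x => if x = ⟨i + 1, h⟩ then U ⟨i, Nat.lt_of_succ_lt h⟩ else U x) := by
  rw [lm, dif_pos h]
  exact act_lEl _ _ _

theorem act_rh (i : ℕ) (h : i + 1 < n) :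
    Act (rh n i) (fun U => U ⟨i, Nat.lt_of_succ_lt h⟩ = U ⟨i + 1, h⟩)
    (fun U x => if x = ⟨i + 1, h⟩ then false else U x) := by
  rw [rh, dif_pos h]
  exact act_rEl _ _ _

theorem act_ee (hn : 3 ≤ n) (i : ℕ) (h : i < n) :
    Act (ee n i) (fun U => U ⟨i, h⟩ = false) (fun U x => U x) := by
  obtain _ | i := i
  · refine (((act_sg 0 (by omega)).mul ((act_lm 0 (by omega)).mul (act_rh 0 (by omega)))).mul
      (act_sg 0 (by omega))).congr ?_ ?_ <;> grind
  · refine ((act_lm i h).mul (act_rh i h)).congr ?_ ?_ <;> grind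

end PIP

/-! ### The defining relations hold for partitions -/

namespace PIP

variable {n : ℕ}

attribute [local instance] PIP.monoid

/-- The generators of `PIP` satisfy the defining relations: both sides of each relation act in
the same way on subsets. -/
def pipSystem (hn : 3 ≤ n) : PipSystem n (PIP (Fin n)) where
  sg := sg n
  lm := lm n
  rh := rh n
  ee := ee n
  rel1 i h0 := by
    refine Act.eq ((act_sg i (by omega)).mul (act_sg i (by omega)))
      act_one ?_ ?_ <;> grind
  rel2 i j h0 h1 h2 := by
    refine Act.eq ((act_sg i (by omega)).mul (act_sg j (by omega)))
      ((act_sg j (by omega)).mul (act_sg i (by omega))) ?_ ?_ <;> grind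
  rel3 i h0 := by
    refine Act.eq (((act_sg i (by omega)).mul (act_sg (i+1) (by omega))).mul (act_sg i (by omega)))
      (((act_sg (i+1) (by omega)).mul (act_sg i (by omega))).mul (act_sg (i+1) (by omega)))
      ?_ ?_ <;> grind
  rel4a i j h0 h1 h2 := by
    refine Act.eq ((act_lm i (by omega)).mul (act_lm j (by omega)))
      ((act_lm j (by omega)).mul (act_lm i (by omega))) ?_ ?_ <;> grind
  rel4b i j h0 h1 h2 := by
    refine Act.eq ((act_rh i (by omega)).mul (act_rh j (by omega)))
      ((act_rh j (by omega)).mul (act_rh i (by omega))) ?_ ?_ <;> grind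
  rel4c i j h0 h1 h2 := by
    refine Act.eq ((act_rh i (by omega)).mul (act_lm j (by omega)))
      ((act_lm j (by omega)).mul (act_rh i (by omega))) ?_ ?_ <;> grind
  rel5a i h0 := by
    refine Act.eq ((act_lm i (by omega)).mul (act_rh (i+1) (by omega)))
      ((((act_sg (i+1) (by omega)).mul (act_rh i (by omega))).mul (act_lm i (by omega))).mul (act_ee hn (i+2) (by omega)))
      ?_ ?_ <;> grind
  rel5b i h0 := by
    refine Act.eq ((act_lm i (by omega)).mul (act_rh (i+1) (by omega)))
      ((((act_sg i (by omega)).mul (act_rh (i+1) (by omega))).mul (act_sg i (by omega))).mul (act_lm i (by omega)))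
      ?_ ?_ <;> grind
  rel5c i h0 := by
    refine Act.eq ((act_lm (i+1) (by omega)).mul (act_rh i (by omega)))
      ((((act_ee hn (i+2) (by omega)).mul (act_rh i (by omega))).mul (act_lm i (by omega))).mul (act_sg (i+1) (by omega)))
      ?_ ?_ <;> grind
  rel5d i h0 := by
    refine Act.eq ((act_lm (i+1) (by omega)).mul (act_rh i (by omega)))
      ((((act_rh i (by omega)).mul (act_sg i (by omega))).mul (act_lm (i+1) (by omega))).mul (act_sg i (by omega)))
      ?_ ?_ <;> grind
  rel6a i h0 := by
    refine Act.eq ((act_rh i (by omega)).mul (act_lm (i+1) (by omega)))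
      ((act_rh i (by omega)).mul (act_ee hn (i+2) (by omega))) ?_ ?_ <;> grind
  rel6b i h0 := by
    refine Act.eq ((act_rh (i+1) (by omega)).mul (act_lm i (by omega)))
      ((act_ee hn (i+2) (by omega)).mul (act_lm i (by omega))) ?_ ?_ <;> grind
  rel7a i h0 := by
    refine Act.eq (((act_lm i (by omega)).mul (act_rh i (by omega))).mul (act_lm i (by omega)))
      (act_lm i (by omega)) ?_ ?_ <;> grind
  rel7b i h0 := by
    refine Act.eq (((act_rh i (by omega)).mul (act_lm i (by omega))).mul (act_rh i (by omega)))
      (act_rh i (by omega)) ?_ ?_ <;> grind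
  rel8a i h0 := by
    refine Act.eq (((act_sg i (by omega)).mul (act_lm (i+1) (by omega))).mul (act_sg i (by omega)))
      (((act_sg (i+1) (by omega)).mul (act_lm i (by omega))).mul (act_sg (i+1) (by omega)))
      ?_ ?_ <;> grind
  rel8b i h0 := by
    refine Act.eq (((act_sg i (by omega)).mul (act_rh (i+1) (by omega))).mul (act_sg i (by omega)))
      (((act_sg (i+1) (by omega)).mul (act_rh i (by omega))).mul (act_sg (i+1) (by omega)))
      ?_ ?_ <;> grind
  rel9a i h0 := by
    refine Act.eq ((act_lm i (by omega)).mul (act_sg i (by omega)))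
      (act_lm i (by omega)) ?_ ?_ <;> grind
  rel9b i h0 := by
    refine Act.eq ((act_sg i (by omega)).mul (act_rh i (by omega)))
      (act_rh i (by omega)) ?_ ?_ <;> grind
  rel10a i j h0 h1 h2 := by
    refine Act.eq ((act_sg i (by omega)).mul (act_lm j (by omega)))
      ((act_lm j (by omega)).mul (act_sg i (by omega))) ?_ ?_ <;> grind
  rel10b i j h0 h1 h2 := by
    refine Act.eq ((act_sg i (by omega)).mul (act_rh j (by omega)))
      ((act_rh j (by omega)).mul (act_sg i (by omega))) ?_ ?_ <;> grind
  rel11a i h0 := by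
    refine Act.eq ((act_lm i (by omega)).mul (act_lm (i+1) (by omega)))
      (((act_lm i (by omega)).mul (act_lm (i+1) (by omega))).mul (act_sg i (by omega)))
      ?_ ?_ <;> grind
  rel11b i h0 := by
    refine Act.eq ((act_lm i (by omega)).mul (act_lm (i+1) (by omega)))
      ((act_sg (i+1) (by omega)).mul ((act_lm i (by omega)).mul (act_lm (i+1) (by omega))))
      ?_ ?_ <;> grind
  rel11c i h0 := by
    refine Act.eq ((act_rh (i+1) (by omega)).mul (act_rh i (by omega)))
      ((act_sg i (by omega)).mul ((act_rh (i+1) (by omega)).mul (act_rh i (by omega))))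
      ?_ ?_ <;> grind
  rel11d i h0 := by
    refine Act.eq ((act_rh (i+1) (by omega)).mul (act_rh i (by omega)))
      (((act_rh (i+1) (by omega)).mul (act_rh i (by omega))).mul (act_sg (i+1) (by omega)))
      ?_ ?_ <;> grind
  rel12a i h0 := by
    refine Act.eq ((act_sg (i+1) (by omega)).mul ((act_lm (i+1) (by omega)).mul (act_lm i (by omega))))
      ((act_lm (i+1) (by omega)).mul (act_lm i (by omega))) ?_ ?_ <;> grind
  rel12b i h0 := by
    refine Act.eq ((act_lm (i+1) (by omega)).mul (act_lm i (by omega)))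
      ((act_lm i (by omega)).mul (act_ee hn (i+2) (by omega))) ?_ ?_ <;> grind
  rel12c i h0 := by
    refine Act.eq (((act_rh i (by omega)).mul (act_rh (i+1) (by omega))).mul (act_sg (i+1) (by omega)))
      ((act_rh i (by omega)).mul (act_rh (i+1) (by omega))) ?_ ?_ <;> grind
  rel12d i h0 := by
    refine Act.eq ((act_rh i (by omega)).mul (act_rh (i+1) (by omega)))
      ((act_ee hn (i+2) (by omega)).mul (act_rh i (by omega))) ?_ ?_ <;> grind
  rel13a i h0 := by
    refine Act.eq (act_ee hn (i+1) (by omega))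
      ((act_lm i (by omega)).mul (act_rh i (by omega))) ?_ ?_ <;> grind
  rel13b  := by
    refine Act.eq (act_ee hn 0 (by omega))
      (((act_sg 0 (by omega)).mul (act_ee hn 1 (by omega))).mul (act_sg 0 (by omega)))
      ?_ ?_ <;> grind
  rel14a i h0 := by
    refine Act.eq ((act_ee hn i (by omega)).mul (act_ee hn i (by omega)))
      (act_ee hn i (by omega)) ?_ ?_ <;> grind
  rel14b i h0 := by
    refine Act.eq ((act_ee hn i (by omega)).mul (act_ee hn (i+1) (by omega)))
      ((act_ee hn (i+1) (by omega)).mul (act_ee hn i (by omega))) ?_ ?_ <;> grind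
  rel14c i h0 := by
    refine Act.eq ((act_ee hn i (by omega)).mul (act_ee hn (i+1) (by omega)))
      ((act_lm i (by omega)).mul (act_lm i (by omega))) ?_ ?_ <;> grind
  rel14d i h0 := by
    refine Act.eq ((act_ee hn i (by omega)).mul (act_ee hn (i+1) (by omega)))
      ((act_rh i (by omega)).mul (act_rh i (by omega))) ?_ ?_ <;> grind
  rel14e i h0 := by
    refine Act.eq ((act_ee hn i (by omega)).mul (act_ee hn (i+1) (by omega)))
      (((act_rh i (by omega)).mul (act_sg i (by omega))).mul (act_lm i (by omega))) ?_ ?_ <;> grind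
  rel15a i j h0 h1 h2 h3 := by
    refine Act.eq ((act_ee hn i (by omega)).mul (act_sg j (by omega)))
      ((act_sg j (by omega)).mul (act_ee hn i (by omega))) ?_ ?_ <;> grind
  rel15b i h0 := by
    refine Act.eq ((act_ee hn i (by omega)).mul (act_sg i (by omega)))
      ((act_sg i (by omega)).mul (act_ee hn (i+1) (by omega))) ?_ ?_ <;> grind
  rel15c i h0 := by
    refine Act.eq ((act_sg i (by omega)).mul (act_ee hn i (by omega)))
      ((act_ee hn (i+1) (by omega)).mul (act_sg i (by omega))) ?_ ?_ <;> grind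
  rel16a i j h0 h1 h2 h3 := by
    refine Act.eq ((act_ee hn i (by omega)).mul (act_lm j (by omega)))
      ((act_lm j (by omega)).mul (act_ee hn i (by omega))) ?_ ?_ <;> grind
  rel16b i h0 := by
    refine Act.eq ((act_ee hn (i+1) (by omega)).mul (act_lm i (by omega)))
      (act_lm i (by omega)) ?_ ?_ <;> grind
  rel16c i h0 := by
    refine Act.eq ((act_ee hn i (by omega)).mul (act_lm i (by omega)))
      ((act_lm i (by omega)).mul (act_ee hn (i+1) (by omega))) ?_ ?_ <;> grind
  rel16d i h0 := by
    refine Act.eq ((act_ee hn i (by omega)).mul (act_lm i (by omega)))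
      ((act_lm i (by omega)).mul (act_ee hn i (by omega))) ?_ ?_ <;> grind
  rel16e i h0 := by
    refine Act.eq ((act_ee hn i (by omega)).mul (act_lm i (by omega)))
      ((act_ee hn i (by omega)).mul (act_ee hn (i+1) (by omega))) ?_ ?_ <;> grind
  rel17a i j h0 h1 h2 h3 := by
    refine Act.eq ((act_ee hn i (by omega)).mul (act_rh j (by omega)))
      ((act_rh j (by omega)).mul (act_ee hn i (by omega))) ?_ ?_ <;> grind
  rel17b i h0 := by
    refine Act.eq ((act_rh i (by omega)).mul (act_ee hn (i+1) (by omega)))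
      (act_rh i (by omega)) ?_ ?_ <;> grind
  rel17c i h0 := by
    refine Act.eq ((act_rh i (by omega)).mul (act_ee hn i (by omega)))
      ((act_ee hn (i+1) (by omega)).mul (act_rh i (by omega))) ?_ ?_ <;> grind
  rel17d i h0 := by
    refine Act.eq ((act_rh i (by omega)).mul (act_ee hn i (by omega)))
      ((act_ee hn i (by omega)).mul (act_rh i (by omega))) ?_ ?_ <;> grind
  rel17e i h0 := by
    refine Act.eq ((act_rh i (by omega)).mul (act_ee hn i (by omega)))
      ((act_ee hn i (by omega)).mul (act_ee hn (i+1) (by omega))) ?_ ?_ <;> grind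

end PIP

/-! ### Generation by the letters -/

namespace PipSystem

variable {n : ℕ} {S T : Type*} [Monoid S] [Monoid T]

/-- The generators of a system. -/
def gens (Q : PipSystem n S) : Set S :=
  {s | ∃ i, i + 2 ≤ n ∧ (s = Q.sg i ∨ s = Q.lm i ∨ s = Q.rh i)}

theorem exists_perm_pair (hn : 3 ≤ n) {x y : Fin n} (hxy : x ≠ y) :
    ∃ g : Perm (Fin n), g ⟨0, by omega⟩ = x ∧ g ⟨1, by omega⟩ = y := by
  obtain ⟨g, hg⟩ := exists_perm_extending (show 2 ≤ n by omega) ![x, y] (by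
    intro i j hij
    fin_cases i <;> fin_cases j <;> simp_all [eq_comm])
  exact ⟨g, hg 0, hg 1⟩

/-- The elements `R x y` and `L x y` are conjugates of the first generators. -/
theorem exists_conj (Q : PipSystem n S) (hn : 3 ≤ n) {x y : Fin n} (hxy : x ≠ y) :
    ∃ g : Perm (Fin n), g ⟨0, by omega⟩ = x ∧ g ⟨1, by omega⟩ = y ∧
      (Q.toPartitionSystem hn).pos.R x y = Q.perm g * Q.rh 0 * Q.perm g⁻¹ ∧
      (Q.toPartitionSystem hn).L x y = Q.perm g * Q.lm 0 * Q.perm g⁻¹ := by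
  obtain ⟨g, rfl, rfl⟩ := exists_perm_pair hn hxy
  refine ⟨g, rfl, rfl, Q.posHalf.R_eq hn g, ?_⟩
  have := Q.posHalf_cj_L hn g ⟨0, by omega⟩ ⟨1, by omega⟩
  rw [← Q.lm_eq hn 0 (by omega)] at this
  exact this.symm

/-- Every normal form is a product of generators. -/
theorem eval_mem_closure (Q : PipSystem n S) (hn : 3 ≤ n) (D : NF (Fin n)) :
    (Q.toPartitionSystem hn).eval D ∈ Submonoid.closure Q.gens := by
  set C := Submonoid.closure Q.gens with hC
  have hπ : ∀ g, Q.perm g ∈ C := by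
    intro g
    induction g using perm_induction with
    | one => rw [map_one]; exact C.one_mem
    | mul g i hi ih =>
      rw [map_mul, Q.perm_swap i hi]
      exact C.mul_mem ih (Submonoid.subset_closure ⟨i, hi, .inl rfl⟩)
  have hR : ∀ x y, x ≠ y → (Q.toPartitionSystem hn).pos.R x y ∈ C := by
    intro x y hxy
    obtain ⟨g, -, -, h, -⟩ := Q.exists_conj hn hxy
    rw [h]
    exact C.mul_mem (C.mul_mem (hπ _) (Submonoid.subset_closure ⟨0, by omega, .inr (.inr rfl)⟩))
      (hπ _)
  have hL : ∀ x y, x ≠ y → (Q.toPartitionSystem hn).L x y ∈ C := by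
    intro x y hxy
    obtain ⟨g, -, -, -, h⟩ := Q.exists_conj hn hxy
    rw [h]
    exact C.mul_mem (C.mul_mem (hπ _) (Submonoid.subset_closure ⟨0, by omega, .inr (.inl rfl)⟩))
      (hπ _)
  have hE : ∀ y, (Q.toPartitionSystem hn).pos.E y ∈ C := by
    intro y
    have : Nontrivial (Fin n) := Fin.nontrivial_iff_two_le.2 (by omega)
    obtain ⟨x, hxy⟩ := exists_ne y
    rw [← (Q.toPartitionSystem hn).LR x y hxy]
    exact C.mul_mem (hL x y hxy) (hR x y hxy)
  refine C.mul_mem (C.mul_mem ?_ (hπ _)) ?_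
  · refine Submonoid.noncommProd_mem C _ _ _ fun z _ => ?_
    rcases D.ρ z with _ | x
    · exact hE z
    · by_cases h : x = z
      · rw [h, MergeSystem.F_self]; exact C.one_mem
      · rw [MergeSystem.F_some _ h]; exact hR x z h
  · change (Q.toPartitionSystem hn).neg.RP D.ρ' ∈ C.op
    refine Submonoid.noncommProd_mem C.op _ _ _ fun z _ => ?_
    rcases D.ρ' z with _ | x
    · exact hE z
    · by_cases h : x = z
      · rw [h, MergeSystem.F_self]; exact C.op.one_mem
      · rw [MergeSystem.F_some _ h]; exact hL x z h

/-- The submonoid of the product of two monoids that is generated by the pairs of corresponding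
generators. -/
def diag (P : PipSystem n S) (Q : PipSystem n T) : Submonoid (S × T) :=
  Submonoid.closure {s | ∃ i, i + 2 ≤ n ∧
    (s = (P.sg i, Q.sg i) ∨ s = (P.lm i, Q.lm i) ∨ s = (P.rh i, Q.rh i))}

theorem map_fst_diag (P : PipSystem n S) (Q : PipSystem n T) :
    (P.diag Q).map (MonoidHom.fst S T) = Submonoid.closure P.gens := by
  rw [diag, MonoidHom.map_mclosure]
  congr 1
  ext s
  constructor
  · rintro ⟨_, ⟨i, hi, rfl | rfl | rfl⟩, rfl⟩
    · exact ⟨i, hi, .inl rfl⟩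
    · exact ⟨i, hi, .inr (.inl rfl)⟩
    · exact ⟨i, hi, .inr (.inr rfl)⟩
  · rintro ⟨i, hi, rfl | rfl | rfl⟩
    · exact ⟨_, ⟨i, hi, .inl rfl⟩, rfl⟩
    · exact ⟨_, ⟨i, hi, .inr (.inl rfl)⟩, rfl⟩
    · exact ⟨_, ⟨i, hi, .inr (.inr rfl)⟩, rfl⟩

/-- Every product of generators has a normal form, simultaneously in any two systems. -/
theorem exists_eval_of_mem_diag (P : PipSystem n S) (Q : PipSystem n T) (hn : 3 ≤ n) {p : S × T}
    (hp : p ∈ P.diag Q) : ∃ D : NF (Fin n),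
      (P.toPartitionSystem hn).eval D = p.1 ∧ (Q.toPartitionSystem hn).eval D = p.2 := by
  set A := (P.toPartitionSystem hn).prod (Q.toPartitionSystem hn) with hA
  suffices h : ∃ D, A.eval D = p by
    obtain ⟨D, rfl⟩ := h
    rw [hA, PartitionSystem.eval_prod]
    exact ⟨D, rfl, rfl⟩
  induction hp using Submonoid.closure_induction_right with
  | one =>
    refine ⟨⟨⟨some, fun _ => rfl⟩, 1, ⟨some, fun _ => rfl⟩, fun x => Iff.rfl⟩, ?_⟩
    have h1 : ∀ {M : Type _} [Monoid M] (B : MergeSystem (Fin n) M),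
        B.RP ⟨some, fun _ => rfl⟩ = 1 := by
      intro M _ B
      refine (Finset.noncommProd_congr rfl (fun z _ => B.F_self z) _).trans ?_
      exact Finset.noncommProd_eq_pow_card _ _ _ 1 (fun _ _ => rfl) |>.trans (one_pow _)
    rw [PartitionSystem.eval, PartitionSystem.LP, h1, h1, map_one]
    simp
  | mul_right p hp s hs ih =>
    obtain ⟨D, rfl⟩ := ih
    obtain ⟨i, hi, h⟩ := hs
    have hne : (⟨i, by omega⟩ : Fin n) ≠ ⟨i + 1, by omega⟩ := by simp
    rcases h with rfl | rfl | rfl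
    · obtain ⟨D', h⟩ := A.eval_mul_π D (swap ⟨i, by omega⟩ ⟨i + 1, by omega⟩)
      rw [P.sg_eq hn i (by omega), Q.sg_eq hn i (by omega)]
      exact ⟨D', h.symm⟩
    · obtain ⟨D', h⟩ := A.eval_mul_L D hne
      rw [P.lm_eq_L hn i (by omega), Q.lm_eq_L hn i (by omega)]
      exact ⟨D', h.symm⟩
    · obtain ⟨D', h⟩ := A.eval_mul_R D hne
      rw [P.rh_eq_R hn i (by omega), Q.rh_eq_R hn i (by omega)]
      exact ⟨D', h.symm⟩

end PipSystem

/-! ### Normal forms of partitions -/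

/-- A choice of representatives of the classes of an equivalence relation, where the classes
satisfying `p` are discarded. -/
noncomputable def Retraction.ofSetoid {X : Type*} (s : Setoid X) (p : X → Prop) [DecidablePred p]
    (hp : ∀ x y, s x y → p x → p y) : Retraction X where
  toFun x := if p x then none else some (Quotient.mk s x).out
  idem := by
    intro x y hxy
    split_ifs at hxy with h
    obtain rfl := Option.some.inj hxy
    have h' : s (Quotient.mk s x).out x := Quotient.mk_out x
    rw [if_neg fun hp' => h (hp _ _ h' hp'), Quotient.out_eq]

namespace PIP

variable {n : ℕ}

/-- Every partition into lines and points is described by a normal form. -/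
theorem exists_sem (a : PIP (Fin n)) :
    ∃ D : NF (Fin n), ∀ U W, a.Rel U W ↔ D.sem U W := by
  classical
  have symm : ∀ {z w}, a.1.r z w → a.1.r w z := fun h => a.1.iseqv.symm h
  have trans : ∀ {z w v}, a.1.r z w → a.1.r w v → a.1.r z v := fun h h' => a.1.iseqv.trans h h'
  have main : ∀ i : Fin n → Fin n ⊕ Fin n, Function.Injective i → ∃ ρ : Retraction (Fin n),
      (∀ z, ρ z = none ↔ IsPointOf a.1.r (i z)) ∧ (∀ z x, ρ z = some x → a.1.r (i z) (i x)) ∧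
      ∀ z w, a.1.r (i z) (i w) → ρ z = ρ w := by
    intro i hi
    refine ⟨.ofSetoid (a.1.comap i) (fun z => IsPointOf a.1.r (i z))
      (fun x y hxy hx => isPointOf_congr a hxy hx), ?_, ?_, ?_⟩
    · intro z
      change (if _ then _ else _) = _ ↔ _
      simp
    · intro z x h
      change (if _ then _ else _) = _ at h
      split_ifs at h
      obtain rfl := Option.some.inj h
      exact symm (Quotient.mk_out (s := a.1.comap i) z)
    · intro z w h
      by_cases hz : IsPointOf a.1.r (i z)
      · rw [hi (hz _ h)]
      · change (if _ then _ else _) = if _ then _ else _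
        rw [if_neg hz, if_neg fun hw => hz (isPointOf_congr a (symm h) hw)]
        congr 2
        exact Quotient.sound (s := a.1.comap i) h
  obtain ⟨ρ, t1, t2, t3⟩ := main Sum.inl Sum.inl_injective
  obtain ⟨ρ', b1, b2, b3⟩ := main Sum.inr Sum.inr_injective
  have rep : ∀ {ρ : Retraction (Fin n)} {z}, ρ z ≠ none → ∃ x, ρ z = some x ∧ ρ x = some x := by
    intro ρ z h
    obtain ⟨x, hx⟩ := Option.ne_none_iff_exists'.1 h
    exact ⟨x, hx, ρ.idem hx⟩
  -- Each lower representative shares its block with exactly one upper representative.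
  have hf : ∀ x : {x // ρ' x = some x}, ∃ y : {y // ρ y = some y},
      a.1.r (Sum.inl y) (Sum.inr x) := by
    rintro ⟨x, hx⟩
    have hx' : ¬ IsPointOf a.1.r (Sum.inr x) := by rw [← b1, hx]; simp
    obtain ⟨y, hy⟩ := ((a.point_or_line _).resolve_left hx').1
    have hy' : ρ y ≠ none := by
      rw [Ne, t1]; exact fun h => hx' (isPointOf_congr a (symm hy) h)
    obtain ⟨w, h1, h2⟩ := rep hy'
    exact ⟨⟨w, h2⟩, symm (trans hy (t2 _ _ h1))⟩
  choose f hf using hf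
  have fbij : Function.Bijective f := by
    constructor
    · intro x x' h
      have h1 := hf x
      rw [h] at h1
      have := b3 _ _ (trans (symm h1) (hf x'))
      rw [x.2, x'.2] at this
      exact Subtype.ext (Option.some.inj this)
    · rintro ⟨y, hy⟩
      have hy' : ¬ IsPointOf a.1.r (Sum.inl y) := by rw [← t1, hy]; simp
      obtain ⟨x, hx⟩ := ((a.point_or_line _).resolve_left hy').2
      have hx' : ρ' x ≠ none := by
        rw [Ne, b1]; exact fun h => hy' (isPointOf_congr a (symm hx) h)
      obtain ⟨w, h1, h2⟩ := rep hx'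
      refine ⟨⟨w, h2⟩, Subtype.ext ?_⟩
      have := t3 _ _ (trans (hf ⟨w, h2⟩) (symm (trans hx (b2 _ _ h1))))
      rw [(f ⟨w, h2⟩).2, hy] at this
      exact Option.some.inj this
  set e := Equiv.ofBijective f fbij
  have hg : ∀ x, ρ' x = some x → a.1.r (Sum.inl (e.extendSubtype x)) (Sum.inr x) := by
    intro x hx
    rw [e.extendSubtype_apply_of_mem x hx]
    exact hf ⟨x, hx⟩
  refine ⟨⟨ρ, e.extendSubtype, ρ', fun x => ⟨e.extendSubtype_mem x, fun h => ?_⟩⟩,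
    fun U W => ⟨fun h => ⟨?_, ?_, fun x hx => h.1 _ _ (hg x hx)⟩, ?_⟩⟩
  · by_contra hx
    exact e.extendSubtype_not_mem x hx h
  · intro z
    rcases hz : ρ z with _ | x
    · exact h.2 (Sum.inl z) ((t1 z).1 hz)
    · exact h.1 (Sum.inl z) (Sum.inl x) (t2 _ _ hz)
  · intro z
    rcases hz : ρ' z with _ | x
    · exact h.2 (Sum.inr z) ((b1 z).1 hz)
    · exact h.1 (Sum.inr z) (Sum.inr x) (b2 _ _ hz)
  · rintro ⟨hU, hW, h⟩
    have cross : ∀ z w, a.1.r (Sum.inl z) (Sum.inr w) → U z = W w := by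
      intro z w hzw
      have hw : ρ' w ≠ none := fun h => by cases (b1 w).1 h _ (symm hzw)
      obtain ⟨x, h1, h2⟩ := rep hw
      rw [hW w, h1, Option.elim_some, ← h x h2, hU z, hU (e.extendSubtype x),
        t3 _ _ (trans (trans hzw (b2 _ _ h1)) (symm (hg x h2)))]
    constructor
    · rintro (z | z) (w | w) hzw
      · change U z = U w
        rw [hU z, hU w, t3 _ _ hzw]
      · exact cross z w hzw
      · exact (cross w z (symm hzw)).symm
      · change W z = W w
        rw [hW z, hW w, b3 _ _ hzw]
    · rintro (z | z) hz
      · change U z = false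
        rw [hU z, (t1 z).2 hz, Option.elim_none]
      · change W z = false
        rw [hW z, (b1 z).2 hz, Option.elim_none]

attribute [local instance] PIP.monoid

theorem rel_perm (hn : 3 ≤ n) (g : Perm (Fin n)) (U V : Fin n → Bool) :
    ((pipSystem hn).perm g).Rel U V ↔ V = U ∘ g := by
  induction g using perm_induction generalizing V with
  | one =>
    rw [map_one]
    exact (PIP.rel_one U V).trans eq_comm
  | mul g i hi ih =>
    rw [map_mul, (pipSystem hn).perm_swap i hi, rel_mul']
    simp only [ih, exists_eq_left]
    rw [show (pipSystem hn).sg i = sg n i from rfl, act_sg i hi, funext_iff]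
    simp only [true_and, Function.comp_apply, Perm.mul_apply, swap_apply_def]
    refine forall_congr' fun x => ?_
    split_ifs <;> rfl

theorem rel_conj (hn : 3 ≤ n) (g : Perm (Fin n)) (b : PIP (Fin n)) (U V : Fin n → Bool) :
    ((pipSystem hn).perm g * b * (pipSystem hn).perm g⁻¹).Rel U V ↔ b.Rel (U ∘ g) (V ∘ g) := by
  simp only [rel_mul', rel_perm]
  constructor
  · rintro ⟨_, ⟨_, rfl, h⟩, rfl⟩
    convert h
    funext x
    simp
  · intro h
    refine ⟨_, ⟨_, rfl, h⟩, ?_⟩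
    funext x
    simp

/-- In the monoid of partitions a normal form acts by the partition that it describes. -/
theorem rel_eval (hn : 3 ≤ n) (D : NF (Fin n)) (U W : Fin n → Bool) :
    (((pipSystem hn).toPartitionSystem hn).eval D).Rel U W ↔ D.sem U W := by
  refine PartitionSystem.eval_act _ PIP.Rel PIP.rel_one rel_mul' (rel_perm hn) ?_ ?_ ?_ D U W
  · intro x U V
    refine (act_ee hn x.1 x.2 U V).trans ?_
    rw [funext_iff]
  · intro x y hxy U V
    obtain ⟨g, rfl, rfl, h, -⟩ := (pipSystem hn).exists_conj hn hxy
    rw [h, rel_conj]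
    refine (act_rh 0 (by omega) _ _).trans (and_congr_right fun _ => ?_)
    rw [funext_iff]
    exact .trans (forall_congr' fun z => by simp [Function.update_apply]) g.forall_congr_right
  · intro x y hxy U V
    obtain ⟨g, rfl, rfl, -, h⟩ := (pipSystem hn).exists_conj hn hxy
    rw [h, rel_conj]
    refine (act_lm 0 (by omega) _ _).trans (and_congr_right fun _ => ?_)
    rw [funext_iff]
    exact .trans (forall_congr' fun z => by simp [Function.update_apply]) g.forall_congr_right

theorem exists_eval (hn : 3 ≤ n) (a : PIP (Fin n)) :
    ∃ D, ((pipSystem hn).toPartitionSystem hn).eval D = a := by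
  obtain ⟨D, hD⟩ := a.exists_sem
  exact ⟨D, ext_rel fun U W => by rw [rel_eval, hD]⟩

/-- Every partition has a normal form, hence is a product of generators. -/
theorem closure_gens (hn : 3 ≤ n) : Submonoid.closure (pipSystem hn).gens = ⊤ := by
  rw [eq_top_iff]
  rintro a -
  obtain ⟨D, rfl⟩ := exists_eval hn a
  exact (pipSystem hn).eval_mem_closure hn D

/-- The projection from the diagonal submonoid to the monoid of partitions is bijective: a
normal form is determined by its value there. -/
theorem fst_bijective (hn : 3 ≤ n) {T : Type*} [Monoid T] (Q : PipSystem n T) :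
    Function.Bijective
      ((MonoidHom.fst (PIP (Fin n)) T).comp ((pipSystem hn).diag Q).subtype) := by
  constructor
  · rintro ⟨p, hp⟩ ⟨q, hq⟩ (h : p.1 = q.1)
    obtain ⟨D, h1, h2⟩ := (pipSystem hn).exists_eval_of_mem_diag Q hn hp
    obtain ⟨D', h1', h2'⟩ := (pipSystem hn).exists_eval_of_mem_diag Q hn hq
    have := PartitionSystem.eval_eq_of_sem (Q.toPartitionSystem hn) D D' fun U W => by
      rw [← rel_eval hn, ← rel_eval hn, h1, h1', h]
    exact Subtype.ext (Prod.ext h (by rw [← h2, ← h2', this]))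
  · intro a
    have : a ∈ ((pipSystem hn).diag Q).map (MonoidHom.fst _ _) := by
      rw [PipSystem.map_fst_diag, closure_gens]; trivial
    obtain ⟨p, hp, rfl⟩ := this
    exact ⟨⟨p, hp⟩, rfl⟩

/-- The diagonal submonoid is the graph of the required homomorphism. -/
theorem exists_lift (hn : 3 ≤ n) {T : Type*} [Monoid T] (Q : PipSystem n T) :
    ∃ g : PIP (Fin n) →* T, ∀ i, i + 2 ≤ n →
      g (sg n i) = Q.sg i ∧ g (lm n i) = Q.lm i ∧ g (rh n i) = Q.rh i := by
  let e := MulEquiv.ofBijective _ (fst_bijective hn Q)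
  have he : ∀ p (hp : p ∈ (pipSystem hn).diag Q), e.symm p.1 = ⟨p, hp⟩ := fun p hp =>
    e.symm_apply_eq.2 rfl
  refine ⟨(MonoidHom.snd _ _).comp (((pipSystem hn).diag Q).subtype.comp e.symm.toMonoidHom),
    fun i hi => ⟨?_, ?_, ?_⟩⟩
  · exact congrArg (fun p => p.1.2)
      (he (sg n i, Q.sg i) (Submonoid.subset_closure ⟨i, hi, .inl rfl⟩))
  · exact congrArg (fun p => p.1.2)
      (he (lm n i, Q.lm i) (Submonoid.subset_closure ⟨i, hi, .inr (.inl rfl)⟩))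
  · exact congrArg (fun p => p.1.2)
      (he (rh n i, Q.rh i) (Submonoid.subset_closure ⟨i, hi, .inr (.inr rfl)⟩))

end PIP

end

/-- For `n ≥ 3`, `σ_i ↦ s_i`, `λ_i ↦ l_i`, `ρ_i ↦ r_i` extends to a monoid
isomorphism from the presented monoid `S` onto `PIP_n`. Formally: `PIP_n`
carries a monoid structure whose multiplication is the one induced from
`IP_{n+1}` via `φ`; the elements `s_i, l_i, r_i` are part of a system
satisfying the defining relations (1)–(17); and `PIP_n` with these elements
has the universal property of the monoid presented by these generators and
relations (so the canonical map from the presented monoid is an isomorphism). -/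
theorem presented_monoid_iso_pip (n : ℕ) (hn : 3 ≤ n) :
    ∃ _ : Monoid (PIP (Fin n)),
      (∀ a b : PIP (Fin n),
        phiRel ((a * b).1.r) = prodRel (phiRel a.1.r) (phiRel b.1.r)) ∧
      ∃ P : PipSystem n (PIP (Fin n)),
        (∀ (i : ℕ) (h : i + 1 < n),
          (P.sg i).1.r = sRel (Equiv.swap ⟨i, Nat.lt_of_succ_lt h⟩ ⟨i + 1, h⟩) ∧
          (P.lm i).1.r = lRel ⟨i, Nat.lt_of_succ_lt h⟩ ⟨i + 1, h⟩ ∧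
          (P.rh i).1.r = rRel ⟨i, Nat.lt_of_succ_lt h⟩ ⟨i + 1, h⟩) ∧
        ∀ (T : Type*) [Monoid T] (Q : PipSystem n T),
          ∃! g : PIP (Fin n) →* T, ∀ i, i + 2 ≤ n →
            g (P.sg i) = Q.sg i ∧ g (P.lm i) = Q.lm i ∧ g (P.rh i) = Q.rh i := by
  let := PIP.monoid (Fin n)
  refine ⟨PIP.monoid (Fin n), phiRel_mul, PIP.pipSystem hn, fun i h => ⟨?_, ?_, ?_⟩,
    fun T _ Q => ?_⟩
  · change (PIP.sg n i).1.r = _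
    rw [PIP.sg, dif_pos h]; rfl
  · change (PIP.lm n i).1.r = _
    rw [PIP.lm, dif_pos h]; rfl
  · change (PIP.rh n i).1.r = _
    rw [PIP.rh, dif_pos h]; rfl
  obtain ⟨g, hg⟩ := PIP.exists_lift hn Q
  refine ⟨g, hg, fun g' hg' => ?_⟩
  refine MonoidHom.eq_of_eqOn_denseM (PIP.closure_gens hn) ?_
  rintro _ ⟨i, hi, rfl | rfl | rfl⟩
  · exact (hg' i hi).1.trans (hg i hi).1.symm
  · exact (hg' i hi).2.1.trans (hg i hi).2.1.symm
  · exact (hg' i hi).2.2.trans (hg i hi).2.2.symm
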